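/- arXiv:1503.05931 — 4 statements merged into one kernel-verified Lean document; each statement's English description precedes it below -/
import Mathlib

section
/- Let f : ℂ → ℂ be the evaluation map of a polynomial of degree d ≥ 2 whose Julia set J_f is connected and locally connected. Then there exists a continuous surjection α : ℝ/ℤ → J_f such that f(α(θ)) = α(d·θ) for all θ ∈ ℝ/ℤ (where d·θ denotes multiplication by d on the circle ℝ/ℤ). -/
open Function Set Topology

/-- The filled Julia set of `f`: points with bounded forward orbit. -/
def filledJulia (f : ℂ → ℂ) : Set ℂ :=
  {z : ℂ | Bornology.IsBounded (Set.range fun n => f^[n] z)}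

/-! ### Logarithm branches -/

theorem cs_log_diff_const {X : Type*} [TopologicalSpace X] {s : Set X} (hs : IsPreconnected s)
    {u v : X → ℂ} (hu : ContinuousOn u s) (hv : ContinuousOn v s)
    (h : ∀ x ∈ s, Complex.exp (u x) = Complex.exp (v x)) :
    ∀ x ∈ s, ∀ y ∈ s, u x - v x = u y - v y := by
  intro x hx y hy
  have hpi : (2 * Real.pi * Complex.I : ℂ) ≠ 0 := Complex.two_pi_I_ne_zero
  have hT : IsDiscrete (Set.range ((↑) : ℤ → ℂ)) := by
    have := Complex.isometry_intCast.isEmbedding.isInducing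
    rw [isDiscrete_iff_discreteTopology]
    exact (Complex.isometry_intCast.isEmbedding.toHomeomorph).symm.isEmbedding.discreteTopology
  have := hs.constant_of_mapsTo hT (f := fun x => (u x - v x) / (2 * Real.pi * Complex.I))
    ((hu.sub hv).div_const _) (by
      intro x hx
      obtain ⟨n, hn⟩ := Complex.exp_eq_exp_iff_exists_int.1 (h x hx)
      refine ⟨n, ?_⟩
      simp only [hn]
      field_simp
      ring) hx hy
  simpa [div_left_inj' hpi] using this

theorem cs_no_log (g : ℂ → ℂ) (hg : Continuous g) (p : ℂ) (T : ℝ) (hT : 0 < T)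
    (h : ∀ z, T ≤ ‖z - p‖ → Complex.exp (g z) = z - p) : False := by
  have key := cs_log_diff_const (s := (univ : Set ℝ)) isPreconnected_univ
    (u := fun t : ℝ => g (p + T * Complex.exp (t * Complex.I)))
    (v := fun t : ℝ => Complex.log T + t * Complex.I)
    (by fun_prop) (by fun_prop) (by
      intro t _
      have hn : ‖(T : ℂ) * Complex.exp (t * Complex.I)‖ = T := by
        rw [norm_mul, Complex.norm_exp_ofReal_mul_I]; simp [hT.le]
      rw [h _ (by rw [add_sub_cancel_left, hn]), Complex.exp_add, Complex.exp_log]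
      · ring
      · exact_mod_cast hT.ne') 0 trivial (2 * Real.pi) trivial
  have e : Complex.exp (((2 * Real.pi : ℝ) : ℂ) * Complex.I) = 1 := by
    push_cast; exact Complex.exp_two_pi_mul_I
  simp only [e] at key
  have : (2 * Real.pi * Complex.I : ℂ) ≠ 0 := Complex.two_pi_I_ne_zero
  apply this
  simp at key

theorem cs_exists_log (F : ℂ → ℂ) (hF : Continuous F) (h0 : ∀ z, F z ≠ 0) :
    ∃ g : ℂ → ℂ, Continuous g ∧ ∀ z, Complex.exp (g z) = F z := by
  obtain ⟨g, hg, hg'⟩ := Complex.exists_continuousOn_eqOn_exp_comp (X := ℂ) (U := univ)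
    (by
      have : ContractibleSpace (univ : Set ℂ) := convex_univ.contractibleSpace ⟨0, trivial⟩
      exact (inferInstance : SimplyConnectedSpace (univ : Set ℂ))) isOpen_univ (g := F) hF.continuousOn
    (by rintro ⟨z, _, hz⟩; exact h0 z hz)
  exact ⟨g, continuousOn_univ.1 hg, fun z => hg' trivial⟩

/-- Chain lemma: if `S` is connected and `Z` stays away from each point of `S`, then
`(z - k) / (z - k')` has a logarithm on `Z`. -/
theorem cs_chain {S Z : Set ℂ} (hS : IsPreconnected S)
    (hsep : ∀ k ∈ S, ∃ ε > 0, ∀ z ∈ Z, ε ≤ ‖z - k‖) :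
    ∀ k ∈ S, ∀ k' ∈ S, ∃ l : ℂ → ℂ, (∀ z ∈ Z, DifferentiableAt ℂ l z) ∧
      (∀ z ∈ Z, z - k = (z - k') * Complex.exp (l z)) ∧
      Filter.Tendsto l (Bornology.cobounded ℂ) (𝓝 0) := by
  intro k hk k' hk'
  refine hS.induction₂ (fun k k' => ∃ l : ℂ → ℂ, (∀ z ∈ Z, DifferentiableAt ℂ l z) ∧
      (∀ z ∈ Z, z - k = (z - k') * Complex.exp (l z)) ∧
      Filter.Tendsto l (Bornology.cobounded ℂ) (𝓝 0)) ?_ ?_ ?_ hk hk'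
  · intro x hx
    obtain ⟨ε, hε, hz⟩ := hsep x hx
    filter_upwards [mem_nhdsWithin_of_mem_nhds (Metric.ball_mem_nhds x hε)] with y hy
    have hy : ‖y - x‖ < ε := by simpa [dist_eq_norm] using hy
    have hne : ∀ z ∈ Z, z - x ≠ 0 := fun z hzz h => by
      have := hz z hzz; rw [h] at this; simp at this; linarith
    have hsl : ∀ z ∈ Z, 1 + (x - y) / (z - x) ∈ Complex.slitPlane := by
      intro z hzz
      apply Complex.mem_slitPlane_of_norm_lt_one
      rw [norm_div, norm_sub_rev, div_lt_one (norm_pos_iff.2 (hne z hzz))]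
      exact hy.trans_le (hz z hzz)
    refine ⟨fun z => - Complex.log (1 + (x - y) / (z - x)), ?_, ?_, ?_⟩
    · intro z hzz
      have := hne z hzz
      refine DifferentiableAt.fun_neg (DifferentiableAt.clog (f := fun z => 1 + (x - y) / (z - x)) ?_ (hsl z hzz))
      fun_prop (disch := assumption)
    · intro z hzz
      rw [Complex.exp_neg, Complex.exp_log (Complex.slitPlane_ne_zero (hsl z hzz))]
      have h1 := hne z hzz
      have h2 := Complex.slitPlane_ne_zero (hsl z hzz)
      rw [eq_mul_inv_iff_mul_eq₀ h2]
      field_simp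
      ring
    · have h1 : Filter.Tendsto (fun z : ℂ => 1 + (x - y) / (z - x)) (Bornology.cobounded ℂ)
          (𝓝 1) := by
        have h2 : Filter.Tendsto (fun z : ℂ => (z - x)) (Bornology.cobounded ℂ)
            (Bornology.cobounded ℂ) := tendsto_sub_const_cobounded x
        have h3 := (Filter.tendsto_inv₀_cobounded.comp h2).const_mul (x - y)
        simpa [div_eq_mul_inv] using h3.const_add 1
      have h4 := (continuousAt_clog (x := 1) Complex.one_mem_slitPlane).tendsto.comp h1
      simpa using h4.neg
  · rintro x y z hx hy hz ⟨l, h1, h2, h3⟩ ⟨l', h1', h2', h3'⟩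
    refine ⟨fun z => l z + l' z, fun z hz => (h1 z hz).add (h1' z hz), fun w hw => ?_, ?_⟩
    · rw [h2 w hw, h2' w hw, Complex.exp_add]; ring
    · simpa using h3.add h3'
  · rintro x y hx hy ⟨l, h1, h2, h3⟩
    refine ⟨fun z => - l z, fun z hz => (h1 z hz).neg, fun w hw => ?_, ?_⟩
    · rw [h2 w hw, Complex.exp_neg]
      have := Complex.exp_ne_zero (l w)
      field_simp
    · simpa using h3.neg

/-- Existence of a logarithm of `z - p` on a compact set `K`, when `p` can be joined to
infinity by a connected set missing `K`. -/
theorem cs_log_on_compact {S K : Set ℂ} (hS : IsPreconnected S) (hK : IsCompact K)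
    (hSK : Disjoint S K) {p q : ℂ} (hp : p ∈ S) (hq : q ∈ S) (hqK : ∀ z ∈ K, ‖z‖ < ‖q‖) :
    ∃ h : ℂ → ℂ, ContinuousOn h K ∧ ∀ z ∈ K, Complex.exp (h z) = z - p := by
  obtain ⟨l, h1, h2, -⟩ := cs_chain (Z := K) hS (by
    intro k hk
    have hkK : k ∉ K := fun h => Set.disjoint_left.1 hSK hk h
    rcases K.eq_empty_or_nonempty with rfl | hne
    · exact ⟨1, one_pos, by simp⟩
    · refine ⟨Metric.infDist k K, (hK.isClosed.notMem_iff_infDist_pos hne).1 hkK, ?_⟩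
      intro z hz
      rw [← dist_eq_norm, dist_comm]
      exact Metric.infDist_le_dist_of_mem hz) p hp q hq
  have hsl : ∀ z ∈ K, 1 + (-z / q) ∈ Complex.slitPlane := by
    intro z hz
    apply Complex.mem_slitPlane_of_norm_lt_one
    have := hqK z hz
    rw [norm_div, norm_neg, div_lt_one ((norm_nonneg z).trans_lt this)]
    exact this
  refine ⟨fun z => Complex.log (1 + (-z / q)) + Complex.log (-q) + l z, ?_, ?_⟩
  · refine ContinuousOn.add (ContinuousOn.add ?_ continuousOn_const)
      fun z hz => (h1 z hz).continuousAt.continuousWithinAt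
    exact ContinuousOn.clog (by fun_prop) hsl
  · intro z hz
    have hq0 : q ≠ 0 := by
      rintro rfl
      have := hqK z hz
      simp at this
      linarith [norm_nonneg z]
    rw [Complex.exp_add, Complex.exp_add, Complex.exp_log (Complex.slitPlane_ne_zero (hsl z hz)),
      Complex.exp_log (neg_ne_zero.2 hq0), h2 z hz]
    field_simp
    ring

/-- Separation lemma (a version of the Janiszewski theorem). -/
theorem cs_separation {K C L U : Set ℂ} (hK : IsClosed K) (hC : IsClosed C)
    (hUb : Bornology.IsBounded U) (hfr : frontier U ⊆ C ∪ K) {p : ℂ} (hpU : p ∈ U)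
    {hk : ℂ → ℂ} (hkc : ContinuousOn hk K) (hke : ∀ z ∈ K, Complex.exp (hk z) = z - p)
    {a : ℂ} {r : ℝ} (hp : p ∉ Metric.ball a r) (hCB : C ⊆ Metric.ball a r)
    (hLB : L ⊆ Metric.ball a r) (hLK : L ⊆ K) (hL : IsPreconnected L) (hCKL : C ∩ K ⊆ L) :
    False := by
  classical
  have hsl : ∀ z ∈ Metric.ball a r, 1 + (z - a) / (a - p) ∈ Complex.slitPlane := by
    intro z hz
    apply Complex.mem_slitPlane_of_norm_lt_one
    have h1 : ‖z - a‖ < r := by simpa [dist_eq_norm] using hz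
    have h2 : r ≤ ‖a - p‖ := by
      simpa [dist_eq_norm, norm_sub_rev] using hp
    rw [norm_div, div_lt_one ((norm_nonneg _).trans_lt (h1.trans_le h2))]
    exact h1.trans_le h2
  set hb : ℂ → ℂ := fun z => Complex.log (a - p) + Complex.log (1 + (z - a) / (a - p)) with hhb
  have hbc : ContinuousOn hb (Metric.ball a r) :=
    continuousOn_const.add (ContinuousOn.clog (by fun_prop) hsl)
  have hbe : ∀ z ∈ Metric.ball a r, Complex.exp (hb z) = z - p := by
    intro z hz
    have hap : a - p ≠ 0 := by
      intro h
      apply hp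
      have : a = p := sub_eq_zero.1 h
      rw [← this]
      exact Metric.mem_ball_self (Metric.pos_of_mem_ball hz)
    rw [hhb, Complex.exp_add, Complex.exp_log hap,
      Complex.exp_log (Complex.slitPlane_ne_zero (hsl z hz))]
    field_simp
    ring
  obtain ⟨c, hc1, hc⟩ : ∃ c : ℂ, Complex.exp c = 1 ∧ ∀ z ∈ L, hk z = hb z + c := by
    have key := cs_log_diff_const hL (hkc.mono hLK) (hbc.mono hLB)
      (fun z hz => by rw [hke z (hLK hz), hbe z (hLB hz)])
    rcases L.eq_empty_or_nonempty with rfl | ⟨x, hx⟩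
    · exact ⟨0, by simp, by simp⟩
    · refine ⟨hk x - hb x, ?_, fun z hz => ?_⟩
      · rw [Complex.exp_sub, hke x (hLK hx), hbe x (hLB hx), div_self]
        rw [← hke x (hLK hx)]
        exact Complex.exp_ne_zero _
      · rw [← key z hz x hx]; ring
  set h : ℂ → ℂ := K.piecewise hk (fun z => hb z + c) with hh
  have hhC : EqOn h (fun z => hb z + c) C := by
    intro z hz
    by_cases hzK : z ∈ K
    · simp [hh, hzK, hc z (hCKL ⟨hz, hzK⟩)]
    · simp [hh, hzK]
  have hhK : EqOn h hk K := fun z hz => by simp [hh, hz]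
  have hcont : ContinuousOn h (C ∪ K) := by
    refine ContinuousOn.union_of_isClosed ?_ ?_ hC hK
    · exact ((hbc.mono hCB).add continuousOn_const).congr hhC
    · exact hkc.congr hhK
  have hexp : ∀ z ∈ C ∪ K, Complex.exp (h z) = z - p := by
    rintro z (hz | hz)
    · rw [hhC hz, Complex.exp_add, hc1, mul_one, hbe z (hCB hz)]
    · rw [hhK hz, hke z hz]
  obtain ⟨H, hH⟩ := ContinuousMap.exists_restrict_eq (hC.union hK)
    (⟨(C ∪ K).domRestrict h, continuousOn_iff_continuous_domRestrict.1 hcont⟩ :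
      C((C ∪ K : Set ℂ), ℂ))
  have hH' : ∀ z ∈ C ∪ K, H z = h z := by
    intro z hz
    have := congrArg (fun F => F ⟨z, hz⟩) hH
    simpa using this
  set F : ℂ → ℂ := U.piecewise (fun z => Complex.exp (H z)) (fun z => z - p) with hF
  have hFc : Continuous F := by
    apply Continuous.piecewise
    · intro z hz
      rw [hH' z (hfr hz), hexp z (hfr hz)]
    · fun_prop
    · fun_prop
  have hF0 : ∀ z, F z ≠ 0 := by
    intro z
    by_cases hz : z ∈ U
    · simp [hF, hz]
    · simp only [hF, hz, not_false_eq_true, piecewise_eq_of_notMem]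
      intro h0
      rw [sub_eq_zero.1 h0] at hz
      exact hz hpU
  obtain ⟨g, hg, hge⟩ := cs_exists_log F hFc hF0
  obtain ⟨T, hT⟩ := hUb.subset_ball p
  refine cs_no_log g hg p (max T 1) (by positivity) fun z hz => ?_
  rw [hge]
  have : z ∉ U := by
    intro hzU
    have := hT hzU
    rw [Metric.mem_ball, dist_eq_norm] at this
    linarith [le_max_left T 1]
  simp [hF, this]

/-- Compact locally connected sets are uniformly locally connected. -/
theorem cs_unif_lc {J : Set ℂ} (hJ : IsCompact J) [LocallyConnectedSpace J] {η : ℝ}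
    (hη : 0 < η) : ∃ δ > 0, ∀ a ∈ J, ∀ b ∈ J, dist a b < δ →
      ∃ L ⊆ J, IsPreconnected L ∧ a ∈ L ∧ b ∈ L ∧ L ⊆ Metric.ball a η := by
  have hcs : CompactSpace J := isCompact_iff_compactSpace.1 hJ
  have h1 : ∀ x : J, ∃ V : Set J, IsOpen V ∧ x ∈ V ∧ IsConnected V ∧
      V ⊆ Metric.ball x (η / 2) := by
    intro x
    obtain ⟨V, hV, h2⟩ := (locallyConnectedSpace_iff_subsets_isOpen_isConnected.1 inferInstance) x
      (Metric.ball x (η / 2)) (Metric.ball_mem_nhds x (half_pos hη))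
    exact ⟨V, h2.1, h2.2.1, h2.2.2, hV⟩
  choose V hVo hVx hVc hVb using h1
  obtain ⟨δ, hδ, h⟩ := lebesgue_number_lemma_of_metric (isCompact_univ (X := J)) hVo
    (fun x _ => mem_iUnion.2 ⟨x, hVx x⟩)
  refine ⟨δ, hδ, fun a ha b hb hab => ?_⟩
  obtain ⟨x, hx⟩ := h ⟨a, ha⟩ trivial
  have haV : (⟨a, ha⟩ : J) ∈ V x := hx (Metric.mem_ball_self hδ)
  have hbV : (⟨b, hb⟩ : J) ∈ V x := hx (by
    rw [Metric.mem_ball, dist_comm]; exact hab)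
  refine ⟨(↑) '' V x, by simp, (hVc x).isPreconnected.image _ continuous_subtype_val.continuousOn,
    ⟨_, haV, rfl⟩, ⟨_, hbV, rfl⟩, ?_⟩
  rintro _ ⟨y, hy, rfl⟩
  have e1 : dist (y : ℂ) x < η / 2 := hVb x hy
  have e2 : dist a (x : ℂ) < η / 2 := hVb x haV
  rw [Metric.mem_ball]
  calc dist (y : ℂ) a ≤ dist (y : ℂ) x + dist (x : ℂ) a := dist_triangle _ _ _
    _ < η := by rw [dist_comm (x : ℂ) a]; linarith

/-! ### Length-area -/
open MeasureTheory in
theorem cs_area {Φ : ℂ → ℂ} {S : Set ℂ} (hS : IsOpen S) (hΦ : DifferentiableOn ℂ Φ S)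
    (hinj : InjOn Φ S) (hb : Bornology.IsBounded (Φ '' S)) :
    ∫⁻ s in S, ‖deriv Φ s‖ₑ ^ 2 ≠ ⊤ := by
  have h := lintegral_abs_det_fderiv_eq_addHaar_image (μ := (volume : Measure ℂ)) (f := Φ)
    (f' := fun s => ((ContinuousLinearMap.toSpanSingleton ℂ (deriv Φ s) : ℂ →L[ℂ] ℂ).restrictScalars ℝ))
    hS.measurableSet
    (fun s hs => ((hΦ.differentiableAt (hS.mem_nhds hs)).hasDerivAt.hasFDerivAt.restrictScalars
      ℝ).hasFDerivWithinAt) hinj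
  have hdet : ∀ c : ℂ, ((ContinuousLinearMap.toSpanSingleton ℂ c : ℂ →L[ℂ] ℂ).restrictScalars ℝ).det
      = Complex.normSq c := by
    intro c
    rw [← Algebra.norm_complex_apply, Algebra.norm_apply, ContinuousLinearMap.det]
    congr 1
    ext <;> simp [mul_comm]
  have h2 : ∀ s, ENNReal.ofReal |((ContinuousLinearMap.toSpanSingleton ℂ (deriv Φ s) :
      ℂ →L[ℂ] ℂ).restrictScalars ℝ).det| = ‖deriv Φ s‖ₑ ^ 2 := by
    intro s
    rw [hdet, abs_of_nonneg (Complex.normSq_nonneg _), Complex.normSq_eq_norm_sq,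
      ENNReal.ofReal_pow (norm_nonneg _), ofReal_norm]
  simp only [h2] at h
  rw [h]
  exact hb.measure_lt_top.ne

open MeasureTheory in
theorem cs_cauchy_schwarz {I : Set ℝ} {ε κ : ℝ} (hε : 0 < ε) (hκ : 0 < κ)
    (hI : volume I ≤ ENNReal.ofReal (2 * ε)) {y : ℝ → ℂ} (hy : Measurable y)
    (h : ∫⁻ t in I, ‖y t‖ₑ ^ 2 ≤ ENNReal.ofReal (κ ^ 2 / ε)) :
    ∫⁻ t in I, ‖y t‖ₑ ≤ ENNReal.ofReal (3 * κ) := by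
  have hpt : ∀ t, ‖y t‖ₑ ≤ ENNReal.ofReal (κ / ε) + ENNReal.ofReal (ε / κ) * ‖y t‖ₑ ^ 2 := by
    intro t
    rw [← ofReal_norm, ← ENNReal.ofReal_pow (norm_nonneg _), ← ENNReal.ofReal_mul (by positivity),
      ← ENNReal.ofReal_add (by positivity) (by positivity)]
    apply ENNReal.ofReal_le_ofReal
    have h0 := norm_nonneg (y t)
    have : 0 ≤ (κ / ε) + (ε / κ) * ‖y t‖ ^ 2 - ‖y t‖ := by
      have e : (κ / ε) + (ε / κ) * ‖y t‖ ^ 2 - ‖y t‖ =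
        (ε / κ) * ((κ / ε - ‖y t‖ / 2) ^ 2 + 3 / 4 * ‖y t‖ ^ 2) := by
          field_simp
          ring
      rw [e]; positivity
    linarith
  calc ∫⁻ t in I, ‖y t‖ₑ ≤ ∫⁻ t in I, (ENNReal.ofReal (κ / ε) +
        ENNReal.ofReal (ε / κ) * ‖y t‖ₑ ^ 2) := lintegral_mono fun t => hpt t
    _ = ENNReal.ofReal (κ / ε) * volume I + ENNReal.ofReal (ε / κ) * ∫⁻ t in I, ‖y t‖ₑ ^ 2 := by
        rw [lintegral_add_left measurable_const, setLIntegral_const, lintegral_const_mul]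
        exact hy.enorm.pow_const 2
    _ ≤ ENNReal.ofReal (κ / ε) * ENNReal.ofReal (2 * ε) + ENNReal.ofReal (ε / κ) *
          ENNReal.ofReal (κ ^ 2 / ε) := by gcongr
    _ = ENNReal.ofReal (3 * κ) := by
        rw [← ENNReal.ofReal_mul (by positivity), ← ENNReal.ofReal_mul (by positivity),
          ← ENNReal.ofReal_add (by positivity) (by positivity)]
        congr 1
        field_simp
        ring

open MeasureTheory in
theorem cs_pick {a b c : ℝ} (_hab : a < b) (hc : 0 < c) {G : ℝ → ENNReal}
    (h : ∫⁻ t in Ioo a b, G t < ENNReal.ofReal (c * (b - a))) :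
    ∃ t ∈ Ioo a b, G t ≤ ENNReal.ofReal c := by
  by_contra! hcon
  have : ENNReal.ofReal (c * (b - a)) ≤ ∫⁻ t in Ioo a b, G t := by
    calc ENNReal.ofReal (c * (b - a)) = ∫⁻ t in Ioo a b, ENNReal.ofReal c := by
          rw [setLIntegral_const, Real.volume_Ioo, ENNReal.ofReal_mul hc.le]
      _ ≤ _ := setLIntegral_mono' measurableSet_Ioo fun t ht => (hcon t ht).le
  exact absurd h this.not_gt

open MeasureTheory in
theorem cs_length_area {Φ : ℂ → ℂ} {t₀ : ℝ}
    (hA : ∫⁻ s in {s : ℂ | 0 < s.re ∧ s.re < 1 ∧ t₀ - 1 < s.im ∧ s.im < t₀ + 1},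
      ‖deriv Φ s‖ₑ ^ 2 ≠ ⊤) {κ : ℝ} (hκ : 0 < κ) :
    ∃ ε t₁ t₂ x₀ : ℝ, 0 < ε ∧ ε < 1 ∧ t₁ ∈ Ioo (t₀ - ε) t₀ ∧ t₂ ∈ Ioo t₀ (t₀ + ε) ∧
      x₀ ∈ Ioo 0 ε ∧ ∫⁻ x in Ioo 0 ε, ‖deriv Φ ⟨x, t₁⟩‖ₑ ≤ ENNReal.ofReal (3 * κ) ∧
      ∫⁻ x in Ioo 0 ε, ‖deriv Φ ⟨x, t₂⟩‖ₑ ≤ ENNReal.ofReal (3 * κ) ∧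
      ∫⁻ t in Ioo (t₀ - ε) (t₀ + ε), ‖deriv Φ ⟨x₀, t⟩‖ₑ ≤ ENNReal.ofReal (3 * κ) := by
  have hmk : Measurable (fun q : ℝ × ℝ => (⟨q.1, q.2⟩ : ℂ)) :=
    Complex.measurableEquivRealProd.symm.measurable
  have hdm : Measurable (deriv Φ) := measurable_deriv Φ
  set g : ℝ × ℝ → ENNReal := fun q => ‖deriv Φ ⟨q.1, q.2⟩‖ₑ ^ 2 with hg
  have hgm : Measurable g := ((hdm.comp hmk).enorm).pow_const 2
  have hA2 : ∫⁻ q in Ioo (0:ℝ) 1 ×ˢ Ioo (t₀ - 1) (t₀ + 1), g q ≠ ⊤ := by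
    have := (Complex.volume_preserving_equiv_real_prod.symm).setLIntegral_comp_preimage_emb
      Complex.measurableEquivRealProd.symm.measurableEmbedding (fun s => ‖deriv Φ s‖ₑ ^ 2)
      {s : ℂ | 0 < s.re ∧ s.re < 1 ∧ t₀ - 1 < s.im ∧ s.im < t₀ + 1}
    rw [← this] at hA
    have hset : (Complex.measurableEquivRealProd.symm ⁻¹'
        {s : ℂ | 0 < s.re ∧ s.re < 1 ∧ t₀ - 1 < s.im ∧ s.im < t₀ + 1}) =
        Ioo (0:ℝ) 1 ×ˢ Ioo (t₀ - 1) (t₀ + 1) := by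
      ext q
      simp [and_assoc]
    rw [hset] at hA
    exact hA
  obtain ⟨δ, hδ, hsmall⟩ := exists_pos_setLIntegral_lt_of_measure_lt hA2
    (ε := ENNReal.ofReal (κ ^ 2)) (by simpa using hκ.ne')
  obtain ⟨ε, hε0, hε1, hεδ⟩ : ∃ ε : ℝ, 0 < ε ∧ ε < 1 ∧
      volume (Ioo (0:ℝ) ε ×ˢ Ioo (t₀ - ε) (t₀ + ε)) < δ := by
    obtain ⟨δ', hδ', h'⟩ := ENNReal.lt_iff_exists_real_btwn.1 hδ
    have hpos : 0 < δ' := by simpa using h'.1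
    refine ⟨min (1 / 2) (δ' / 2), by positivity, by
      exact (min_le_left _ _).trans_lt (by norm_num), ?_⟩
    set ε := min (1 / 2) (δ' / 2)
    have e1 : ε ≤ 1 / 2 := min_le_left _ _
    have e2 : ε ≤ δ' / 2 := min_le_right _ _
    have e0 : 0 < ε := by positivity
    refine lt_of_le_of_lt ?_ h'.2
    rw [Measure.volume_eq_prod, Measure.prod_prod, Real.volume_Ioo, Real.volume_Ioo,
      ← ENNReal.ofReal_mul (by linarith)]
    apply ENNReal.ofReal_le_ofReal
    nlinarith
  have hbox : ∫⁻ q in Ioo (0:ℝ) ε ×ˢ Ioo (t₀ - ε) (t₀ + ε), g q < ENNReal.ofReal (κ ^ 2) := by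
    have hsub : Ioo (0:ℝ) ε ×ˢ Ioo (t₀ - ε) (t₀ + ε) ⊆ Ioo (0:ℝ) 1 ×ˢ Ioo (t₀ - 1) (t₀ + 1) := by
      apply Set.prod_mono <;> apply Ioo_subset_Ioo <;> linarith
    have := hsmall (Ioo (0:ℝ) ε ×ˢ Ioo (t₀ - ε) (t₀ + ε))
      ((Measure.restrict_apply_le _ _).trans_lt hεδ)
    rwa [Measure.restrict_restrict (measurableSet_Ioo.prod measurableSet_Ioo),
      inter_eq_self_of_subset_left hsub] at this
  have hx : ∫⁻ x in Ioo (0:ℝ) ε, ∫⁻ t in Ioo (t₀ - ε) (t₀ + ε), g (x, t) <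
      ENNReal.ofReal (κ ^ 2) := by
    rwa [Measure.volume_eq_prod, setLIntegral_prod _ hgm.aemeasurable] at hbox
  have ht : ∫⁻ t in Ioo (t₀ - ε) (t₀ + ε), ∫⁻ x in Ioo (0:ℝ) ε, g (x, t) <
      ENNReal.ofReal (κ ^ 2) := by
    rwa [Measure.volume_eq_prod, ← Measure.prod_restrict,
      lintegral_prod_symm _ hgm.aemeasurable] at hbox
  have hk : ∀ a b : ℝ, b - a = ε → κ ^ 2 = (κ ^ 2 / ε) * (b - a) := by
    intro a b h; rw [h]; field_simp
  have hc : 0 < κ ^ 2 / ε := by positivity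
  obtain ⟨x₀, hx₀, hx₀'⟩ := cs_pick hε0 hc (by rwa [← hk 0 ε (by ring)])
  obtain ⟨t₁, ht₁, ht₁'⟩ := cs_pick (a := t₀ - ε) (b := t₀) (by linarith) hc
    (G := fun t => ∫⁻ x in Ioo (0:ℝ) ε, g (x, t)) (by
      rw [← hk _ _ (by ring)]
      exact (lintegral_mono_set (Ioo_subset_Ioo le_rfl (by linarith))).trans_lt ht)
  obtain ⟨t₂, ht₂, ht₂'⟩ := cs_pick (a := t₀) (b := t₀ + ε) (by linarith) hc
    (G := fun t => ∫⁻ x in Ioo (0:ℝ) ε, g (x, t)) (by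
      rw [← hk _ _ (by ring)]
      exact (lintegral_mono_set (Ioo_subset_Ioo (by linarith) le_rfl)).trans_lt ht)
  refine ⟨ε, t₁, t₂, x₀, hε0, hε1, ht₁, ht₂, hx₀, ?_, ?_, ?_⟩
  · refine cs_cauchy_schwarz hε0 hκ ?_ 
      (y := fun x => deriv Φ ⟨x, t₁⟩) (hdm.comp (hmk.comp (measurable_id.prodMk measurable_const))) ht₁'
    rw [Real.volume_Ioo]; apply ENNReal.ofReal_le_ofReal; linarith
  · refine cs_cauchy_schwarz hε0 hκ ?_ 
      (y := fun x => deriv Φ ⟨x, t₂⟩) (hdm.comp (hmk.comp (measurable_id.prodMk measurable_const))) ht₂'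
    rw [Real.volume_Ioo]; apply ENNReal.ofReal_le_ofReal; linarith
  · refine cs_cauchy_schwarz hε0 hκ ?_ 
      (y := fun t => deriv Φ ⟨x₀, t⟩) (hdm.comp (hmk.comp (measurable_const.prodMk measurable_id))) hx₀'
    rw [Real.volume_Ioo]; apply ENNReal.ofReal_le_ofReal; linarith

/-! ### Curves of finite length -/
open MeasureTheory in
theorem cs_curve_dist {γ : ℝ → ℂ} {a b M : ℝ} (hM : 0 ≤ M) (hγ : ContDiffOn ℝ 1 γ (Ioo a b))
    (h : ∫⁻ x in Ioo a b, ‖deriv γ x‖ₑ ≤ ENNReal.ofReal M) :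
    ∀ x ∈ Ioo a b, ∀ y ∈ Ioo a b, dist (γ x) (γ y) ≤ M := by
  have key : ∀ x ∈ Ioo a b, ∀ y ∈ Ioo a b, x ≤ y → dist (γ x) (γ y) ≤ M := by
    intro x hx y hy hxy
    have hsub : Icc x y ⊆ Ioo a b := Icc_subset_Ioo hx.1 hy.2
    have h1 := enorm_sub_le_lintegral_deriv_of_contDiffOn_Icc (hγ.mono hsub) hxy
    have h2 := h1.trans ((lintegral_mono_set hsub).trans h)
    rw [← ofReal_norm, ENNReal.ofReal_le_ofReal_iff hM] at h2
    rwa [dist_comm, dist_eq_norm]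
  intro x hx y hy
  rcases le_total x y with hxy | hxy
  · exact key x hx y hy hxy
  · rw [dist_comm]; exact key y hy x hx hxy

open MeasureTheory in
theorem cs_curve_lim {γ : ℝ → ℂ} {a b M : ℝ} (hab : a < b) (hγ : ContDiffOn ℝ 1 γ (Ioo a b))
    (h : ∫⁻ x in Ioo a b, ‖deriv γ x‖ₑ ≤ ENNReal.ofReal M) :
    ∃ l, Filter.Tendsto γ (𝓝[>] a) (𝓝 l) := by
  have hc : Cauchy (Filter.map γ (𝓝[>] a)) := by
    rw [Metric.cauchy_iff]
    refine ⟨inferInstance, fun η hη => ?_⟩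
    obtain ⟨δ, hδ, hsmall⟩ := exists_pos_setLIntegral_lt_of_measure_lt
      (μ := volume.restrict (Ioo a b)) (f := fun x => ‖deriv γ x‖ₑ)
      (h.trans_lt ENNReal.ofReal_lt_top).ne (ε := ENNReal.ofReal (η / 2))
      (by simpa using hη)
    obtain ⟨δ', hδ', h'⟩ := ENNReal.lt_iff_exists_real_btwn.1 hδ
    have hpos : 0 < δ' := by simpa using h'.1
    set c := min b (a + δ') with hc
    have hac : a < c := lt_min hab (by linarith)
    have hcb : c ≤ b := min_le_left _ _
    have hI : Ioo a c ⊆ Ioo a b := Ioo_subset_Ioo le_rfl hcb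
    have h1 := hsmall (Ioo a c) (by
      refine (Measure.restrict_apply_le _ _).trans_lt ?_
      rw [Real.volume_Ioo]
      refine lt_of_le_of_lt (ENNReal.ofReal_le_ofReal ?_) h'.2
      linarith [min_le_right b (a + δ')])
    rw [Measure.restrict_restrict measurableSet_Ioo, inter_eq_self_of_subset_left hI] at h1
    refine ⟨γ '' Ioo a c, Filter.image_mem_map (Ioo_mem_nhdsGT hac), ?_⟩
    rintro _ ⟨x, hx, rfl⟩ _ ⟨y, hy, rfl⟩
    have := cs_curve_dist (by positivity) (hγ.mono hI) h1.le x hx y hy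
    linarith
  exact cauchy_map_iff_exists_tendsto.1 hc

/-- Local Carathéodory theorem. -/
theorem cs_caratheodory {Φ : ℂ → ℂ} {K : Set ℂ}
    (hΦ : DifferentiableOn ℂ Φ {s : ℂ | 0 < s.re}) (hK : IsCompact K)
    (hΦK : ∀ s : ℂ, 0 < s.re → Φ s ∉ K)
    (hbd : ∀ z ∉ K, ∃ V ∈ 𝓝 z, ∃ ρ > 0, ∀ s : ℂ, 0 < s.re → s.re < ρ → Φ s ∉ V)
    (hfar : ∀ M : ℝ, ∃ s : ℂ, 0 < s.re ∧ M < ‖Φ s‖)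
    (hLC : LocallyConnectedSpace (frontier K)) (t₀ : ℝ)
    (hinj : InjOn Φ {s : ℂ | 0 < s.re ∧ s.re < 1 ∧ t₀ - 1 < s.im ∧ s.im < t₀ + 1})
    (hbdd : Bornology.IsBounded
      (Φ '' {s : ℂ | 0 < s.re ∧ s.re < 1 ∧ t₀ - 1 < s.im ∧ s.im < t₀ + 1})) :
    ∃ l, Filter.Tendsto Φ (𝓝[{s : ℂ | 0 < s.re}] ⟨0, t₀⟩) (𝓝 l) := by
  set H : Set ℂ := {s : ℂ | 0 < s.re} with hH
  set S : Set ℂ := {s : ℂ | 0 < s.re ∧ s.re < 1 ∧ t₀ - 1 < s.im ∧ s.im < t₀ + 1} with hS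
  have hre := Complex.continuous_re
  have him := Complex.continuous_im
  have hHo : IsOpen H := isOpen_lt continuous_const hre
  have hSo : IsOpen S := by
    refine (isOpen_lt continuous_const hre).inter ((isOpen_lt hre continuous_const).inter
      ((isOpen_lt continuous_const him).inter (isOpen_lt him continuous_const)))
  have hSH : S ⊆ H := fun s hs => hs.1
  have hda : ∀ s ∈ H, DifferentiableAt ℂ Φ s := fun s hs => hΦ.differentiableAt (hHo.mem_nhds hs)
  have hne : (𝓝[H] (⟨0, t₀⟩ : ℂ)).NeBot := by
    rw [← mem_closure_iff_nhdsWithin_neBot, hH, Complex.closure_setOfPred_lt_re]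
    simp
  have hA := cs_area hSo (hΦ.mono hSH) hinj hbdd
  have hCD : ContDiffOn ℝ 1 Φ H := ((hΦ.contDiffOn (n := 1) hHo).restrict_scalars ℝ)
  have hJc : IsCompact (frontier K) := hK.of_isClosed_subset isClosed_frontier
    hK.isClosed.frontier_subset
  have hhor : ∀ t x : ℝ, 0 < x → deriv (fun x : ℝ => Φ ⟨x, t⟩) x = deriv Φ ⟨x, t⟩ := by
    intro t x hx
    have h1 : HasDerivAt (fun x : ℝ => (⟨x, t⟩ : ℂ)) 1 x := by
      have : (fun x : ℝ => (⟨x, t⟩ : ℂ)) = fun x : ℝ => (x : ℂ) + t * Complex.I := by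
        ext x; rw [Complex.mk_eq_add_mul_I]
      rw [this]
      exact (Complex.ofRealCLM.hasDerivAt.add_const _)
    have h2 := (hda ⟨x, t⟩ hx).hasDerivAt
    have := (h2.comp_of_eq x h1 rfl).deriv
    have e : deriv (fun x : ℝ => Φ ⟨x, t⟩) x = deriv Φ ⟨x, t⟩ * 1 := this
    rw [e, mul_one]
  have hver : ∀ x t : ℝ, 0 < x → ‖deriv (fun t : ℝ => Φ ⟨x, t⟩) t‖ₑ = ‖deriv Φ ⟨x, t⟩‖ₑ := by
    intro x t hx
    have h1 : HasDerivAt (fun t : ℝ => (⟨x, t⟩ : ℂ)) Complex.I t := by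
      have : (fun t : ℝ => (⟨x, t⟩ : ℂ)) = fun t : ℝ => (x : ℂ) + t * Complex.I := by
        ext x; rw [Complex.mk_eq_add_mul_I]
      rw [this]
      simpa using ((Complex.ofRealCLM.hasDerivAt (x := t)).mul_const Complex.I).const_add (x : ℂ)
    have h2 := (hda ⟨x, t⟩ hx).hasDerivAt
    have := (h2.comp_of_eq t h1 rfl).deriv
    have e : deriv (fun t : ℝ => Φ ⟨x, t⟩) t = deriv Φ ⟨x, t⟩ * Complex.I := this
    rw [e, enorm_mul]
    simp [enorm_eq_nnnorm]
  have hmk1 : ∀ t : ℝ, ContDiff ℝ 1 (fun x : ℝ => (⟨x, t⟩ : ℂ)) := by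
    intro t
    have : (fun x : ℝ => (⟨x, t⟩ : ℂ)) = fun x : ℝ => (x : ℂ) + t * Complex.I := by
      ext x; rw [Complex.mk_eq_add_mul_I]
    rw [this]
    exact Complex.ofRealCLM.contDiff.add contDiff_const
  have hmk2 : ∀ x : ℝ, ContDiff ℝ 1 (fun t : ℝ => (⟨x, t⟩ : ℂ)) := by
    intro t
    have : (fun x : ℝ => (⟨t, x⟩ : ℂ)) = fun x : ℝ => (t : ℂ) + x * Complex.I := by
      ext x; rw [Complex.mk_eq_add_mul_I]
    rw [this]
    exact contDiff_const.add (Complex.ofRealCLM.contDiff.mul contDiff_const)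
  have hCD1 : ∀ t ε : ℝ, ContDiffOn ℝ 1 (fun x : ℝ => Φ ⟨x, t⟩) (Ioo 0 ε) := fun t ε =>
    hCD.comp (hmk1 t).contDiffOn (fun x hx => hx.1)
  have hCD2 : ∀ x : ℝ, 0 < x → ∀ u v : ℝ, ContDiffOn ℝ 1 (fun t : ℝ => Φ ⟨x, t⟩) (Ioo u v) :=
    fun x hx u v => hCD.comp (hmk2 x).contDiffOn (fun t _ => hx)
  have hland : ∀ (t : ℝ) (l : ℂ), Filter.Tendsto (fun x : ℝ => Φ ⟨x, t⟩) (𝓝[>] 0) (𝓝 l) →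
      l ∈ frontier K := by
    intro t l hl
    rw [hK.isClosed.frontier_eq]
    constructor
    · by_contra hlK
      obtain ⟨V, hV, ρ, hρ, h⟩ := hbd l hlK
      obtain ⟨x, hx1, hx2⟩ := ((hl.eventually hV).and (Ioo_mem_nhdsGT hρ)).exists
      exact h ⟨x, t⟩ hx2.1 hx2.2 hx1
    · intro hli
      obtain ⟨x, hx1, hx2⟩ := ((hl.eventually (isOpen_interior.mem_nhds hli)).and
        (self_mem_nhdsWithin)).exists
      exact hΦK ⟨x, t⟩ hx2 (interior_subset hx1)
  have main : ∀ η > 0, ∃ a : ℂ, ∀ᶠ s in 𝓝[H] (⟨0, t₀⟩ : ℂ), Φ s ∈ Metric.ball a η := by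
    intro η hη
    obtain ⟨δ, hδ, hlc⟩ := cs_unif_lc hJc hη
    set m : ℝ := min δ η / 5 with hm
    have hm0 : 0 < m := by positivity
    have hm1 : 5 * m ≤ δ := by rw [hm]; linarith [min_le_left δ η]
    have hm2 : 5 * m ≤ η := by rw [hm]; linarith [min_le_right δ η]
    obtain ⟨ε, t₁, t₂, x₀, hε0, hε1, ht₁, ht₂, hx₀, I1, I2, I3⟩ :=
      cs_length_area hA (κ := m / 3) (by positivity)
    rw [show 3 * (m / 3) = m by ring] at I1 I2 I3
    have J1 : ∀ t, ∫⁻ x in Ioo 0 ε, ‖deriv Φ ⟨x, t⟩‖ₑ ≤ ENNReal.ofReal m →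
        ∫⁻ x in Ioo 0 ε, ‖deriv (fun x : ℝ => Φ ⟨x, t⟩) x‖ₑ ≤ ENNReal.ofReal m := by
      intro t ht
      refine le_trans (le_of_eq ?_) ht
      exact MeasureTheory.setLIntegral_congr_fun measurableSet_Ioo
        fun x hx => by simp only [hhor t x hx.1]
    have J3 : ∫⁻ t in Ioo (t₀ - ε) (t₀ + ε), ‖deriv (fun t : ℝ => Φ ⟨x₀, t⟩) t‖ₑ ≤
        ENNReal.ofReal m := by
      refine le_trans (le_of_eq ?_) I3
      exact MeasureTheory.setLIntegral_congr_fun measurableSet_Ioo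
        fun t _ => hver x₀ t hx₀.1
    obtain ⟨a, ha⟩ := cs_curve_lim hε0 (hCD1 t₁ ε) (J1 t₁ I1)
    obtain ⟨b, hb⟩ := cs_curve_lim hε0 (hCD1 t₂ ε) (J1 t₂ I2)
    have haJ := hland t₁ a ha
    have hbJ := hland t₂ b hb
    have D1 : ∀ (t : ℝ) (c : ℂ), Filter.Tendsto (fun x : ℝ => Φ ⟨x, t⟩) (𝓝[>] 0) (𝓝 c) →
        ∫⁻ x in Ioo 0 ε, ‖deriv Φ ⟨x, t⟩‖ₑ ≤ ENNReal.ofReal m →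
        ∀ x ∈ Ioo 0 ε, dist (Φ ⟨x, t⟩) c ≤ m := by
      intro t c hc hI x hx
      refine le_of_tendsto (tendsto_const_nhds.dist hc) ?_
      filter_upwards [Ioo_mem_nhdsGT hε0] with y hy
      exact cs_curve_dist hm0.le (hCD1 t ε) (J1 t hI) x hx y hy
    have D3 := cs_curve_dist hm0.le (hCD2 x₀ hx₀.1 (t₀ - ε) (t₀ + ε)) J3
    have ht₁' : t₁ ∈ Ioo (t₀ - ε) (t₀ + ε) := ⟨ht₁.1, ht₁.2.trans (by linarith)⟩
    have ht₂' : t₂ ∈ Ioo (t₀ - ε) (t₀ + ε) := ⟨lt_trans (by linarith) ht₂.1, ht₂.2⟩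
    have E1 : ∀ x ∈ Ioo 0 ε, dist (Φ ⟨x, t₁⟩) a ≤ m := D1 t₁ a ha I1
    have E2 : ∀ t ∈ Ioo (t₀ - ε) (t₀ + ε), dist (Φ ⟨x₀, t⟩) a ≤ 2 * m := by
      intro t ht
      have := D3 t ht t₁ ht₁'
      have := E1 x₀ hx₀
      linarith [dist_triangle (Φ ⟨x₀, t⟩) (Φ ⟨x₀, t₁⟩) a]
    have E3 : dist b a ≤ 3 * m := by
      have h1 := D1 t₂ b hb I2 x₀ hx₀
      have h2 := E2 t₂ ht₂'
      rw [dist_comm] at h1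
      linarith [dist_triangle b (Φ ⟨x₀, t₂⟩) a]
    have E4 : ∀ x ∈ Ioo 0 ε, dist (Φ ⟨x, t₂⟩) a ≤ 4 * m := by
      intro x hx
      have h1 := D1 t₂ b hb I2 x hx
      linarith [dist_triangle (Φ ⟨x, t₂⟩) b a]
    obtain ⟨L, hLJ, hLc, haL, hbL, hLb⟩ := hlc a haJ b hbJ (by rw [dist_comm]; linarith)
    set ext : ℝ → ℂ → ℝ → ℂ := fun t c => Function.update (fun x : ℝ => Φ ⟨x, t⟩) 0 c with hext
    have hextc : ∀ (t : ℝ) (c : ℂ), Filter.Tendsto (fun x : ℝ => Φ ⟨x, t⟩) (𝓝[>] 0) (𝓝 c) →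
        IsCompact (ext t c '' Icc 0 x₀) := by
      intro t c hc
      apply isCompact_Icc.image_of_continuousOn
      intro x hx
      rcases hx.1.eq_or_lt with rfl | hx0
      · rw [hext]
        apply continuousWithinAt_update_same.2
        refine hc.mono_left (nhdsWithin_mono _ ?_)
        rintro y ⟨hy, hy0⟩
        exact lt_of_le_of_ne hy.1 (fun h => hy0 h.symm)
      · apply ContinuousAt.continuousWithinAt
        rw [hext]
        have : ContinuousAt (fun x : ℝ => Φ ⟨x, t⟩) x :=
          ContinuousAt.comp (f := fun x : ℝ => (⟨x, t⟩ : ℂ)) (hda ⟨x, t⟩ hx0).continuousAt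
            (hmk1 t).continuous.continuousAt
        exact (continuousAt_update_of_ne hx0.ne').2 this
    have hvc : IsCompact ((fun t : ℝ => Φ ⟨x₀, t⟩) '' Icc t₁ t₂) := by
      apply isCompact_Icc.image_of_continuousOn
      intro t _
      exact (ContinuousAt.comp (f := fun t : ℝ => (⟨x₀, t⟩ : ℂ)) (hda ⟨x₀, t⟩ hx₀.1).continuousAt
            (hmk2 x₀).continuous.continuousAt).continuousWithinAt
    set C : Set ℂ := ext t₁ a '' Icc 0 x₀ ∪ ext t₂ b '' Icc 0 x₀ ∪
      (fun t : ℝ => Φ ⟨x₀, t⟩) '' Icc t₁ t₂ with hC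
    have hCc : IsClosed C := (((hextc t₁ a ha).union (hextc t₂ b hb)).union hvc).isClosed
    have hCcases : ∀ z ∈ C, z = a ∨ z = b ∨ (∃ x ∈ Ioo 0 ε, z = Φ ⟨x, t₁⟩) ∨
        (∃ x ∈ Ioo 0 ε, z = Φ ⟨x, t₂⟩) ∨ ∃ t ∈ Ioo (t₀ - ε) (t₀ + ε), z = Φ ⟨x₀, t⟩ := by
      rintro z ((⟨x, hx, rfl⟩ | ⟨x, hx, rfl⟩) | ⟨t, ht, rfl⟩)
      · by_cases h0 : x = 0
        · left; simp [hext, h0]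
        · right; right; left
          exact ⟨x, ⟨lt_of_le_of_ne hx.1 (Ne.symm h0), hx.2.trans_lt hx₀.2⟩, by simp [hext, h0]⟩
      · by_cases h0 : x = 0
        · right; left; simp [hext, h0]
        · right; right; right; left
          exact ⟨x, ⟨lt_of_le_of_ne hx.1 (Ne.symm h0), hx.2.trans_lt hx₀.2⟩, by simp [hext, h0]⟩
      · right; right; right; right
        exact ⟨t, ⟨ht₁.1.trans_le ht.1, ht.2.trans_lt ht₂.2⟩, rfl⟩
    have hCB : C ⊆ Metric.ball a η := by
      intro z hz
      rw [Metric.mem_ball]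
      rcases hCcases z hz with rfl | rfl | ⟨x, hx, rfl⟩ | ⟨x, hx, rfl⟩ | ⟨t, ht, rfl⟩
      · simpa using hη
      · linarith
      · linarith [E1 x hx]
      · linarith [E4 x hx]
      · linarith [E2 t ht]
    have hCK : C ∩ K ⊆ L := by
      rintro z ⟨hz, hzK⟩
      rcases hCcases z hz with rfl | rfl | ⟨x, hx, rfl⟩ | ⟨x, hx, rfl⟩ | ⟨t, ht, rfl⟩
      · exact haL
      · exact hbL
      · exact absurd hzK (hΦK _ hx.1)
      · exact absurd hzK (hΦK _ hx.1)
      · exact absurd hzK (hΦK _ hx₀.1)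
    set R : Set ℂ := {s : ℂ | 0 < s.re ∧ s.re < x₀ ∧ t₁ < s.im ∧ s.im < t₂} with hR
    have hRo : IsOpen R := by
      refine (isOpen_lt continuous_const hre).inter ((isOpen_lt hre continuous_const).inter
        ((isOpen_lt continuous_const him).inter (isOpen_lt him continuous_const)))
    have hRS : R ⊆ S := fun s hs => ⟨hs.1, by linarith [hs.2.1, hx₀.2],
      by linarith [hs.2.2.1, ht₁.1], by linarith [hs.2.2.2, ht₂.2]⟩
    have hΦRo : IsOpen (Φ '' R) := by
      have hSconv : IsPreconnected S := by
        have : Convex ℝ S :=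
          (convex_halfSpace_re_gt 0).inter ((convex_halfSpace_re_lt 1).inter
            ((convex_halfSpace_im_gt _).inter (convex_halfSpace_im_lt _)))
        exact this.isPreconnected
      rcases ((hΦ.mono hSH).analyticOnNhd hSo).is_constant_or_isOpen hSconv with ⟨w, hw⟩ | h
      · exfalso
        have m1 : (⟨1/2, t₀⟩ : ℂ) ∈ S := ⟨by norm_num, by norm_num, by simp, by simp⟩
        have m2 : (⟨1/3, t₀⟩ : ℂ) ∈ S := ⟨by norm_num, by norm_num, by simp, by simp⟩
        have := hinj m1 m2 (by rw [hw _ m1, hw _ m2])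
        have := congrArg Complex.re this
        norm_num at this
      · exact h R hRS hRo
    have hfr : frontier (Φ '' R) ⊆ C ∪ K := by
      intro z hz
      by_cases hzK : z ∈ K
      · exact Or.inr hzK
      left
      obtain ⟨V, hV, ρ, hρ, hVρ⟩ := hbd z hzK
      have hcl : z ∈ closure (Φ '' R ∩ V) := by
        rw [mem_closure_iff_nhds]
        intro W hW
        obtain ⟨y, hy1, hy2⟩ := mem_closure_iff_nhds.1 hz.1 _ (Filter.inter_mem hW hV)
        exact ⟨y, hy1.1, hy2, hy1.2⟩
      set Q : Set ℂ := Icc ρ x₀ ×ℂ Icc t₁ t₂ with hQ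
      have hQc : IsCompact Q := isCompact_Icc.reProdIm isCompact_Icc
      have hQH : ∀ s ∈ Q, 0 < s.re := by
        intro s hs
        exact hρ.trans_le hs.1.1
      have hΦQ : IsCompact (Φ '' Q) := hQc.image_of_continuousOn
        fun s hs => (hda s (hQH s hs)).continuousAt.continuousWithinAt
      have hsub : Φ '' R ∩ V ⊆ Φ '' Q := by
        rintro _ ⟨⟨s, hs, rfl⟩, hsV⟩
        refine ⟨s, ⟨⟨?_, hs.2.1.le⟩, ⟨hs.2.2.1.le, hs.2.2.2.le⟩⟩, rfl⟩
        by_contra! hlt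
        exact hVρ s hs.1 hlt hsV
      obtain ⟨s, hs, rfl⟩ := (hΦQ.isClosed.closure_subset_iff.2 hsub) hcl
      have hsR : s ∉ R := by
        intro hsR
        rw [hΦRo.frontier_eq] at hz
        exact hz.2 ⟨s, hsR, rfl⟩
      have hs0 := hQH s hs
      rcases hs with ⟨⟨h1, h2⟩, ⟨h3, h4⟩⟩
      rcases h2.eq_or_lt with e | h2'
      · right
        exact ⟨s.im, ⟨h3, h4⟩, by simp only [← e]⟩
      rcases h3.eq_or_lt with e | h3'
      · left; left
        refine ⟨s.re, ⟨hs0.le, h2⟩, ?_⟩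
        simp [hext, hs0.ne', e]
      rcases h4.eq_or_lt with e | h4'
      · left; right
        refine ⟨s.re, ⟨hs0.le, h2⟩, ?_⟩
        simp [hext, hs0.ne', ← e]
      · exact absurd ⟨hs0, h2', h3', h4'⟩ hsR
    have hin : ∀ s ∈ R, Φ s ∈ Metric.ball a η := by
      intro s hs
      by_contra hout
      obtain ⟨M, hM⟩ := hK.isBounded.exists_norm_le
      obtain ⟨s', hs', hs'M⟩ := hfar M
      obtain ⟨hk, hk1, hk2⟩ := cs_log_on_compact (S := Φ '' H) (K := K) (p := Φ s) (q := Φ s')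
        (((convex_halfSpace_re_gt 0).isPreconnected).image _ hΦ.continuousOn) hK
        (by rw [Set.disjoint_left]; rintro _ ⟨u, hu, rfl⟩; exact hΦK u hu)
        ⟨s, hs.1, rfl⟩ ⟨s', hs', rfl⟩ (fun z hz => (hM z hz).trans_lt hs'M)
      exact cs_separation hK.isClosed hCc (hbdd.subset (image_mono hRS)) hfr ⟨s, hs, rfl⟩
        hk1 hk2 hout hCB hLb (hLJ.trans hK.isClosed.frontier_subset) hLc hCK
    refine ⟨a, ?_⟩
    have hnear : {s : ℂ | s.re < x₀ ∧ t₁ < s.im ∧ s.im < t₂} ∈ 𝓝 (⟨0, t₀⟩ : ℂ) :=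
      IsOpen.mem_nhds ((isOpen_lt hre continuous_const).inter
        ((isOpen_lt continuous_const him).inter (isOpen_lt him continuous_const)))
        ⟨hx₀.1, ht₁.2, ht₂.1⟩
    filter_upwards [self_mem_nhdsWithin, mem_nhdsWithin_of_mem_nhds hnear] with s h1 h2
    exact hin s ⟨h1, h2⟩
  have hc : Cauchy (Filter.map Φ (𝓝[H] (⟨0, t₀⟩ : ℂ))) := by
    rw [Metric.cauchy_iff]
    refine ⟨hne.map _, fun η hη => ?_⟩
    obtain ⟨a, ha⟩ := main (η / 2) (by positivity)
    refine ⟨Metric.ball a (η / 2), ha, fun x hx y hy => ?_⟩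
    have h1 := Metric.mem_ball.1 hx
    have h2 := Metric.mem_ball'.1 hy
    linarith [dist_triangle x a y]
  exact cauchy_map_iff_exists_tendsto.1 hc

theorem cs_escape (p : Polynomial ℂ) (hd : 2 ≤ p.natDegree) :
    ∃ R : ℝ, 1 ≤ R ∧ ∀ z : ℂ, R ≤ ‖z‖ → 2 * ‖z‖ ≤ ‖p.eval z‖ := by
  have h1 : 0 < p.divX.degree := by
    rw [← Polynomial.natDegree_pos_iff_degree_pos, Polynomial.natDegree_divX_eq_natDegree_tsub_one]
    omega
  have ht := Polynomial.tendsto_norm_atTop p.divX h1 (l := Bornology.cobounded ℂ) (z := id)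
    tendsto_norm_cobounded_atTop
  have ht2 := (ht.eventually_ge_atTop (2 + ‖p.coeff 0‖))
  rw [← comap_norm_atTop, Filter.eventually_comap] at ht2
  obtain ⟨R, hR⟩ := Filter.eventually_atTop.1 ht2
  refine ⟨max R 1, le_max_right _ _, fun z hz => ?_⟩
  have a1 := hR ‖z‖ ((le_max_left _ _).trans hz) z rfl
  have a2 : 1 ≤ ‖z‖ := (le_max_right _ _).trans hz
  simp only [id] at a1
  conv_rhs => rw [← Polynomial.divX_mul_X_add p]
  simp only [Polynomial.eval_add, Polynomial.eval_mul, Polynomial.eval_X, Polynomial.eval_C]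
  have a3 := norm_sub_le_norm_add (p.divX.eval z * z) (p.coeff 0)
  rw [norm_mul] at a3
  have := norm_nonneg (p.coeff 0)
  nlinarith

theorem cs_iter_growth {f : ℂ → ℂ} {R : ℝ} (hR1 : 1 ≤ R)
    (hR : ∀ z, R ≤ ‖z‖ → 2 * ‖z‖ ≤ ‖f z‖) (z : ℂ) (hz : R ≤ ‖z‖) (n : ℕ) :
    2 ^ n * ‖z‖ ≤ ‖f^[n] z‖ := by
  induction n with
  | zero => simp
  | succ n ih =>
    rw [iterate_succ_apply', pow_succ]
    have h1 : R ≤ ‖f^[n] z‖ := by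
      have : (1 : ℝ) ≤ 2 ^ n := one_le_pow₀ (by norm_num)
      nlinarith
    have := hR _ h1
    linarith

theorem cs_mem_K {f : ℂ → ℂ} {R : ℝ} (hR1 : 1 ≤ R)
    (hR : ∀ z, R ≤ ‖z‖ → 2 * ‖z‖ ≤ ‖f z‖) (z : ℂ) :
    z ∈ filledJulia f ↔ ∀ n, ‖f^[n] z‖ ≤ R := by
  constructor
  · intro h n
    by_contra! hlt
    obtain ⟨C, hC⟩ := Bornology.IsBounded.exists_norm_le (show Bornology.IsBounded (Set.range fun n => f^[n] z) from h)
    obtain ⟨k, hk⟩ := pow_unbounded_of_one_lt C (one_lt_two (α := ℝ))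
    have h1 := cs_iter_growth hR1 hR _ hlt.le k
    have h2 := hC _ ⟨k + n, rfl⟩
    simp only [iterate_add_apply] at h2
    have : (0 : ℝ) < 2 ^ k := by positivity
    nlinarith
  · intro h
    show Bornology.IsBounded (Set.range fun n => f^[n] z)
    refine (isBounded_iff_forall_norm_le).2 ⟨R, ?_⟩
    rintro _ ⟨n, rfl⟩
    exact h n

theorem cs_K_compact {f : ℂ → ℂ} (hf : Continuous f) {R : ℝ} (hR1 : 1 ≤ R)
    (hR : ∀ z, R ≤ ‖z‖ → 2 * ‖z‖ ≤ ‖f z‖) : IsCompact (filledJulia f) := by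
  have : filledJulia f = ⋂ n, {z | ‖f^[n] z‖ ≤ R} := by
    ext z; simp [cs_mem_K hR1 hR]
  refine Metric.isCompact_of_isClosed_isBounded ?_ ?_
  · rw [this]
    exact isClosed_iInter fun n => isClosed_le (hf.iterate n).norm continuous_const
  · refine (isBounded_iff_forall_norm_le).2 ⟨R, fun z hz => ?_⟩
    exact (cs_mem_K hR1 hR z).1 hz 0

theorem cs_K_inv {f : ℂ → ℂ} (z : ℂ) : f z ∈ filledJulia f ↔ z ∈ filledJulia f := by
  have : (range fun n => f^[n] z) = insert z (range fun n => f^[n] (f z)) := by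
    ext w
    constructor
    · rintro ⟨n, rfl⟩
      cases n with
      | zero => left; rfl
      | succ n => right; exact ⟨n, by simp⟩
    · rintro (rfl | ⟨n, rfl⟩)
      · exact ⟨0, rfl⟩
      · exact ⟨n + 1, by simp⟩
  simp only [filledJulia, mem_ofPred_eq, this, Bornology.isBounded_insert]

theorem cs_far_notin {f : ℂ → ℂ} {R : ℝ} (hR1 : 1 ≤ R)
    (hR : ∀ z, R ≤ ‖z‖ → 2 * ‖z‖ ≤ ‖f z‖) (z : ℂ) (hz : R < ‖z‖) : z ∉ filledJulia f :=
  fun h => not_le.2 hz ((cs_mem_K hR1 hR z).1 h 0)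

theorem cs_far_preconn {R : ℝ} (hR : 0 < R) : IsPreconnected {z : ℂ | R < ‖z‖} := by
  have h1 : IsPreconnected {s : ℂ | Real.log R < s.re} :=
    (convex_halfSpace_re_gt (Real.log R)).isPreconnected
  have h2 : {z : ℂ | R < ‖z‖} = Complex.exp '' {s : ℂ | Real.log R < s.re} := by
    ext z
    constructor
    · intro hz
      have hz' : R < ‖z‖ := hz
      have hz0 : z ≠ 0 := by
        rintro rfl; simp at hz'; linarith
      refine ⟨Complex.log z, ?_, Complex.exp_log hz0⟩
      show Real.log R < (Complex.log z).re
      rw [Complex.log_re]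
      exact Real.log_lt_log hR hz'
    · rintro ⟨s, hs, rfl⟩
      show R < ‖Complex.exp s‖
      rw [Complex.norm_exp, ← Real.log_lt_iff_lt_exp hR]
      exact hs
  rw [h2]
  exact h1.image _ Complex.continuous_exp.continuousOn

theorem cs_Omega_preconn {f : ℂ → ℂ} (hf : Differentiable ℂ f) {R : ℝ} (hR1 : 1 ≤ R)
    (hR : ∀ z, R ≤ ‖z‖ → 2 * ‖z‖ ≤ ‖f z‖) : IsPreconnected (filledJulia f)ᶜ := by
  set Ω := (filledJulia f)ᶜ with hΩ
  have hKc := cs_K_compact hf.continuous hR1 hR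
  have hΩo : IsOpen Ω := hKc.isClosed.isOpen_compl
  set E : Set ℂ := {z | R < ‖z‖} with hE
  have hEΩ : E ⊆ Ω := fun z hz => cs_far_notin hR1 hR z hz
  have hEp : IsPreconnected E := cs_far_preconn (by linarith)
  have key : ∀ z ∈ Ω, (connectedComponentIn Ω z ∩ E).Nonempty := by
    intro z hz
    by_contra hne
    rw [not_nonempty_iff_eq_empty] at hne
    set U := connectedComponentIn Ω z with hU
    have hUo : IsOpen U := hΩo.connectedComponentIn
    have hUR : ∀ w ∈ U, ‖w‖ ≤ R := by
      intro w hw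
      by_contra! h
      have : w ∈ U ∩ E := ⟨hw, h⟩
      rw [hne] at this; exact this
    have hUb : Bornology.IsBounded U := (isBounded_iff_forall_norm_le).2 ⟨R, hUR⟩
    have hfr : frontier U ⊆ filledJulia f := by
      intro w hw
      by_contra hwK
      have hwΩ : w ∈ Ω := hwK
      have hopen : IsOpen (connectedComponentIn Ω w) := hΩo.connectedComponentIn
      have hwm : w ∈ connectedComponentIn Ω w := mem_connectedComponentIn hwΩ
      obtain ⟨y, hy1, hy2⟩ := mem_closure_iff.1 hw.1 _ hopen hwm
      have e1 := connectedComponentIn_eq hy1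
      have e2 := connectedComponentIn_eq hy2
      rw [hUo.frontier_eq] at hw
      apply hw.2
      rw [hU, e2, ← e1]; exact hwm
    apply hz
    rw [cs_mem_K hR1 hR]
    intro n
    refine Complex.norm_le_of_forall_mem_frontier_norm_le hUb
      (hf.iterate n).diffContOnCl (fun w hw => (cs_mem_K hR1 hR w).1 (hfr hw) n)
      (subset_closure (mem_connectedComponentIn hz))
  have e : Ω = ⋃₀ ((fun z => connectedComponentIn Ω z ∪ E) '' Ω) := by
    ext w
    constructor
    · intro hw
      exact ⟨_, ⟨w, hw, rfl⟩, Or.inl (mem_connectedComponentIn hw)⟩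
    · rintro ⟨_, ⟨z, hz, rfl⟩, hw | hw⟩
      · exact connectedComponentIn_subset _ _ hw
      · exact hEΩ hw
  rw [e]
  refine isPreconnected_sUnion ((R + 1 : ℝ) : ℂ) _ ?_ ?_
  · rintro _ ⟨z, hz, rfl⟩
    right
    simp only [hE, mem_ofPred_eq, Complex.norm_real, Real.norm_eq_abs]
    rw [abs_of_nonneg (by linarith)]; linarith
  · rintro _ ⟨z, hz, rfl⟩
    exact IsPreconnected.union' (key z hz) isPreconnected_connectedComponentIn hEp

theorem cs_J_back {f : ℂ → ℂ} (hf : Differentiable ℂ f) {R : ℝ} (hR1 : 1 ≤ R)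
    (hR : ∀ z, R ≤ ‖z‖ → 2 * ‖z‖ ≤ ‖f z‖) (z : ℂ) (hz : f z ∈ frontier (filledJulia f)) :
    z ∈ frontier (filledJulia f) := by
  have hKc := cs_K_compact hf.continuous hR1 hR
  have hzK : z ∈ filledJulia f := (cs_K_inv z).1 (hKc.isClosed.frontier_subset hz)
  refine ⟨subset_closure hzK, fun hintr => hz.2 ?_⟩
  have han : AnalyticOnNhd ℂ f univ := fun w _ => hf.analyticAt w
  rcases han.is_constant_or_isOpen isPreconnected_univ with ⟨w, hw⟩ | h
  · exfalso
    set M : ℝ := max R (‖w‖ + 1) with hM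
    have a : R ≤ ‖(M : ℂ)‖ := by
      rw [Complex.norm_real]; exact (le_max_left _ _).trans (le_abs_self _)
    have := hR _ a
    rw [hw _ (mem_univ _)] at this
    have b : ‖w‖ + 1 ≤ ‖(M : ℂ)‖ := by
      rw [Complex.norm_real]; exact (le_max_right _ _).trans (le_abs_self _)
    have := norm_nonneg w
    linarith
  · have ho := h (interior (filledJulia f)) (subset_univ _) isOpen_interior
    refine (interior_maximal ?_ ho) ⟨z, hintr, rfl⟩
    rintro _ ⟨y, hy, rfl⟩
    exact (cs_K_inv y).2 (interior_subset hy)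

theorem cs_escape_nhds {f : ℂ → ℂ} (hf : Continuous f) {R : ℝ} (hR1 : 1 ≤ R)
    (hR : ∀ z, R ≤ ‖z‖ → 2 * ‖z‖ ≤ ‖f z‖) (z : ℂ) (hz : z ∉ filledJulia f) :
    ∃ n, ∀ᶠ y in 𝓝 z, R < ‖f^[n] y‖ := by
  rw [cs_mem_K hR1 hR] at hz
  push Not at hz
  obtain ⟨n, hn⟩ := hz
  exact ⟨n, (hf.iterate n).norm.continuousAt.eventually (lt_mem_nhds hn)⟩

theorem cs_glue {K S : Set ℂ} (hK : IsCompact K) (hΩ : IsPreconnected Kᶜ)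
    (hS : IsPreconnected S) (hSK : S ⊆ K) (k : ℂ) (hk : k ∈ S) (k' : ℂ) (hk' : k' ∈ S) :
    ∃ l : ℂ → ℂ, (∀ z ∉ K, DifferentiableAt ℂ l z) ∧
      (∀ z ∉ K, z - k = (z - k') * Complex.exp (l z)) ∧
      Filter.Tendsto l (Bornology.cobounded ℂ) (𝓝 0) := by
  have hKne : K.Nonempty := ⟨k, hSK hk⟩
  set Z : ℕ → Set ℂ := fun n => {z | 1 / ((n : ℝ) + 1) < Metric.infDist z K} with hZ
  have hmono : ∀ {m n : ℕ}, m ≤ n → Z m ⊆ Z n := by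
    intro m n hmn z hz
    refine lt_of_le_of_lt ?_ (show 1 / ((m : ℝ) + 1) < Metric.infDist z K from hz)
    exact one_div_le_one_div_of_le (by positivity) (by exact_mod_cast Nat.succ_le_succ hmn)
  have hZK : ∀ n, ∀ z ∈ Z n, z ∉ K := by
    intro n z hz hzK
    have h1 : 1 / ((n : ℝ) + 1) < Metric.infDist z K := hz
    rw [Metric.infDist_zero_of_mem hzK] at h1
    have : 0 < 1 / ((n : ℝ) + 1) := by positivity
    linarith
  have hchain := fun n : ℕ => cs_chain (Z := Z n) hS (by
    intro q hq
    refine ⟨1 / ((n : ℝ) + 1), by positivity, fun z hz => ?_⟩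
    have h1 : 1 / ((n : ℝ) + 1) < Metric.infDist z K := hz
    have := Metric.infDist_le_dist_of_mem (x := z) (hSK hq)
    rw [dist_eq_norm] at this
    linarith) k hk k' hk'
  choose L hL1 hL2 hL3 using hchain
  obtain ⟨r0, hr0⟩ := hK.isBounded.exists_norm_le
  set R0 : ℝ := max r0 0 + 2 with hR0
  have hR0pos : 0 < R0 := by have := le_max_right r0 0; linarith
  set E : Set ℂ := {z | R0 < ‖z‖} with hE
  have hEp : IsPreconnected E := cs_far_preconn hR0pos
  have hEZ : ∀ n, E ⊆ Z n := by
    intro n z hz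
    have hz' : R0 < ‖z‖ := hz
    have h2 : 2 ≤ Metric.infDist z K := by
      rw [Metric.le_infDist hKne]
      intro y hy
      have h3 := hr0 y hy
      have h4 := norm_sub_norm_le z y
      have := le_max_left r0 0
      rw [dist_eq_norm]; linarith
    have h5 : 1 / ((n : ℝ) + 1) ≤ 1 := by
      rw [div_le_one (by positivity)]; linarith [Nat.cast_nonneg (α := ℝ) n]
    show 1 / ((n : ℝ) + 1) < Metric.infDist z K
    linarith
  have hEcob : ∀ᶠ z in Bornology.cobounded ℂ, z ∈ E :=
    tendsto_norm_cobounded_atTop.eventually_gt_atTop R0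
  have hT : ∀ (T : Set ℂ) (N : ℕ), IsPreconnected T → T ⊆ Z N → E ⊆ T → ∀ n, N ≤ n → ∀ y ∈ T,
      L n y = L N y := by
    intro T N hTp hTZ hET n hn y hy
    have hc := cs_log_diff_const hTp (u := L n) (v := L N)
      (fun z hz => (hL1 n z (hmono hn (hTZ hz))).continuousAt.continuousWithinAt)
      (fun z hz => (hL1 N z (hTZ hz)).continuousAt.continuousWithinAt)
      (fun z hz => by
        have e1 := hL2 n z (hmono hn (hTZ hz))
        have e2 := hL2 N z (hTZ hz)
        have e3 : z - k' ≠ 0 := by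
          intro h0
          rw [sub_eq_zero] at h0
          exact hZK N z (hTZ hz) (h0 ▸ hSK hk')
        exact mul_left_cancel₀ e3 (e1.symm.trans e2))
    have t1 : Filter.Tendsto (fun z => L n z - L N z) (Bornology.cobounded ℂ) (𝓝 0) := by
      simpa using (hL3 n).sub (hL3 N)
    have t2 : Filter.Tendsto (fun z => L n z - L N z) (Bornology.cobounded ℂ)
        (𝓝 (L n y - L N y)) := by
      refine tendsto_const_nhds.congr' ?_
      filter_upwards [hEcob] with z hz
      exact hc y hy z (hET hz)
    exact sub_eq_zero.1 (tendsto_nhds_unique t2 t1)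
  have hΩo : IsOpen Kᶜ := hK.isClosed.isOpen_compl
  have hw : ((R0 + 1 : ℝ) : ℂ) ∈ E := by
    show R0 < ‖((R0 + 1 : ℝ) : ℂ)‖
    rw [Complex.norm_real, Real.norm_eq_abs, abs_of_pos (by linarith)]; linarith
  have hwK : ((R0 + 1 : ℝ) : ℂ) ∈ Kᶜ := hZK 0 _ (hEZ 0 hw)
  have hpc : IsPathConnected Kᶜ := hΩo.isConnected_iff_isPathConnected.1 ⟨⟨_, hwK⟩, hΩ⟩
  have hloc : ∀ z : ℂ, ∃ N : ℕ, ∃ V ∈ 𝓝 z, z ∉ K → V ⊆ Z N ∧ ∀ n, N ≤ n → ∀ y ∈ V, L n y = L N y := by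
    intro z
    by_cases hz : z ∈ K
    · exact ⟨0, univ, Filter.univ_mem, fun h => absurd hz h⟩
    obtain ⟨γ, hγ⟩ := hpc.joinedIn z hz _ hwK
    obtain ⟨δ, hδ, hball⟩ := Metric.nhds_basis_closedBall.mem_iff.1 (hΩo.mem_nhds hz)
    have hrc : IsCompact (range γ) := isCompact_range γ.continuous
    have hC : IsCompact (range γ ∪ Metric.closedBall z δ) :=
      hrc.union (isCompact_closedBall z δ)
    have hCK : range γ ∪ Metric.closedBall z δ ⊆ Kᶜ := by
      rintro y (⟨t, rfl⟩ | hy)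
      · exact hγ t
      · exact hball hy
    obtain ⟨y0, hy0, hmin⟩ := hC.exists_isMinOn ⟨z, Or.inr (Metric.mem_closedBall_self hδ.le)⟩
      (Metric.continuous_infDist_pt K).continuousOn
    have hpos : 0 < Metric.infDist y0 K := (hK.isClosed.notMem_iff_infDist_pos hKne).1 (hCK hy0)
    obtain ⟨N, hN⟩ := exists_nat_one_div_lt hpos
    have hCZ : range γ ∪ Metric.closedBall z δ ⊆ Z N := fun y hy =>
      lt_of_lt_of_le hN (hmin hy)
    have hTp : IsPreconnected ((range γ ∪ Metric.closedBall z δ) ∪ E) := by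
      refine IsPreconnected.union _ (Or.inl ⟨1, γ.target⟩) hw ?_ hEp
      refine IsPreconnected.union z ⟨0, γ.source⟩ (Metric.mem_closedBall_self hδ.le) ?_ ?_
      · exact isPreconnected_range γ.continuous
      · exact (convex_closedBall z δ).isPreconnected
    refine ⟨N, Metric.closedBall z δ, Metric.closedBall_mem_nhds z hδ, fun _ =>
      ⟨fun y hy => hCZ (Or.inr hy), fun n hn y hy => ?_⟩⟩
    exact hT _ N hTp (union_subset hCZ (hEZ N)) subset_union_right n hn y (Or.inl (Or.inr hy))
  choose N V hV hNV using hloc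
  have hloc2 : ∀ z ∉ K, (fun y => L (N y) y) =ᶠ[𝓝 z] L (N z) := by
    intro z hz
    filter_upwards [hV z, hΩo.mem_nhds hz] with y hy hyK
    have e1 := (hNV z hz).2 (max (N z) (N y)) (le_max_left _ _) y hy
    have e2 := (hNV y hyK).2 (max (N z) (N y)) (le_max_right _ _) y (mem_of_mem_nhds (hV y))
    exact e2.symm.trans e1
  refine ⟨fun y => L (N y) y, ?_, ?_, ?_⟩
  · intro z hz
    exact (hL1 (N z) z ((hNV z hz).1 (mem_of_mem_nhds (hV z)))).congr_of_eventuallyEq (hloc2 z hz)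
  · intro z hz
    exact hL2 (N z) z ((hNV z hz).1 (mem_of_mem_nhds (hV z)))
  · refine (hL3 0).congr' ?_
    filter_upwards [hEcob] with z hz
    exact (hT E 0 hEp (hEZ 0) subset_rfl (N z) (Nat.zero_le _) z hz).symm

theorem cs_glue_prod {K S : Set ℂ} (hK : IsCompact K) (hΩ : IsPreconnected Kᶜ)
    (hS : IsPreconnected S) (hSK : S ⊆ K) (k' : ℂ) (hk' : k' ∈ S) (s : Multiset ℂ)
    (hs : ∀ r ∈ s, r ∈ S) :
    ∃ l : ℂ → ℂ, (∀ z ∉ K, DifferentiableAt ℂ l z) ∧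
      (∀ z ∉ K, (s.map fun r => z - r).prod = (z - k') ^ s.card * Complex.exp (l z)) ∧
      Filter.Tendsto l (Bornology.cobounded ℂ) (𝓝 0) := by
  induction s using Multiset.induction_on with
  | empty =>
    refine ⟨fun _ => 0, fun z _ => differentiableAt_const _, fun z _ => by simp, ?_⟩
    exact tendsto_const_nhds
  | cons r s ih =>
    obtain ⟨l, h1, h2, h3⟩ := ih (fun q hq => hs q (Multiset.mem_cons_of_mem hq))
    obtain ⟨m, g1, g2, g3⟩ := cs_glue hK hΩ hS hSK r (hs r (Multiset.mem_cons_self r s)) k' hk'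
    refine ⟨fun z => m z + l z, fun z hz => (g1 z hz).add (h1 z hz), fun z hz => ?_, ?_⟩
    · rw [Multiset.map_cons, Multiset.prod_cons, h2 z hz, Multiset.card_cons, Complex.exp_add,
        g2 z hz]
      ring
    · simpa using g3.add h3

theorem cs_bottcher_lambda (p : Polynomial ℂ) (hd : 2 ≤ p.natDegree) {K S : Set ℂ}
    (hK : IsCompact K) (hΩ : IsPreconnected Kᶜ)
    (hS : IsPreconnected S) (hSK : S ⊆ K) (w : ℂ) (hw : w ∈ S)
    (hback : ∀ z, p.eval z ∈ S → z ∈ S) :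
    ∃ l : ℂ → ℂ, (∀ z ∉ K, DifferentiableAt ℂ l z) ∧
      (∀ z ∉ K, p.eval z - w = p.leadingCoeff * (z - w) ^ p.natDegree * Complex.exp (l z)) ∧
      Filter.Tendsto l (Bornology.cobounded ℂ) (𝓝 0) := by
  set q := p - Polynomial.C w with hq
  have hqd : q.natDegree = p.natDegree := Polynomial.natDegree_sub_C
  have hql : q.leadingCoeff = p.leadingCoeff := by
    rw [hq]
    apply Polynomial.leadingCoeff_sub_of_degree_lt
    refine lt_of_le_of_lt Polynomial.degree_C_le ?_
    rw [← Polynomial.natDegree_pos_iff_degree_pos]; omega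
  obtain ⟨l, h1, h2, h3⟩ := cs_glue_prod hK hΩ hS hSK w hw q.roots (by
    intro r hr
    have := (Polynomial.mem_roots'.1 hr).2
    rw [Polynomial.IsRoot.def, hq, Polynomial.eval_sub, Polynomial.eval_C, sub_eq_zero] at this
    exact hback r (this ▸ hw))
  refine ⟨l, h1, fun z hz => ?_, h3⟩
  have hsp : q.Splits := IsAlgClosed.splits q
  have e := hsp.eval_eq_prod_roots z
  rw [h2 z hz, ← hsp.natDegree_eq_card_roots, hqd, hql] at e
  rw [mul_assoc, ← e, hq, Polynomial.eval_sub, Polynomial.eval_C]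

theorem cs_bottcher {f l : ℂ → ℂ} {R : ℝ} {w a : ℂ} {d : ℕ} (hd : 2 ≤ d) (ha : a ≠ 0)
    (hf : Differentiable ℂ f) (hR1 : 1 ≤ R)
    (hR : ∀ z, R ≤ ‖z‖ → 2 * ‖z‖ ≤ ‖f z‖)
    (hl : ∀ z ∉ filledJulia f, DifferentiableAt ℂ l z)
    (hfl : ∀ z ∉ filledJulia f, f z - w = a * (z - w) ^ d * Complex.exp (l z))
    (hl0 : Filter.Tendsto l (Bornology.cobounded ℂ) (𝓝 0)) :
    ∃ (ψ : ℂ → ℂ) (b : ℂ), b ≠ 0 ∧ (∀ z ∉ filledJulia f, DifferentiableAt ℂ ψ z) ∧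
      (∀ z ∉ filledJulia f, ψ (f z) = ψ z ^ d) ∧
      Filter.Tendsto (fun z => ψ z / z) (Bornology.cobounded ℂ) (𝓝 b) ∧
      ∀ z ∉ filledJulia f, 1 < ‖ψ z‖ := by
  have hd0 : (d : ℂ) ≠ 0 := by
    have : d ≠ 0 := by omega
    exact_mod_cast this
  have hd2 : (2 : ℝ) ≤ d := by exact_mod_cast hd
  set K := filledJulia f with hKdef
  have hsmall : ∀ ε > 0, ∃ M, R ≤ M ∧ ∀ z : ℂ, M ≤ ‖z‖ → ‖l z‖ ≤ ε := by
    intro ε hε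
    have h1 : ∀ᶠ z in Bornology.cobounded ℂ, ‖l z‖ ≤ ε := by
      filter_upwards [hl0 (Metric.closedBall_mem_nhds 0 hε)] with z hz
      simpa using hz
    rw [← comap_norm_atTop, Filter.eventually_comap] at h1
    obtain ⟨M, hM⟩ := Filter.eventually_atTop.1 h1
    exact ⟨max M R, le_max_right _ _, fun z hz => hM _ ((le_max_left _ _).trans hz) z rfl⟩
  set F : ℕ → ℂ → ℂ := fun j z => l (f^[j] z) / (d : ℂ) ^ (j + 1) with hF
  have hFb : ∀ ε > 0, ∀ M, R ≤ M → (∀ z : ℂ, M ≤ ‖z‖ → ‖l z‖ ≤ ε) → ∀ z : ℂ, M ≤ ‖z‖ → ∀ j,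
      ‖F j z‖ ≤ ε * (1 / 2) ^ (j + 1) := by
    intro ε hε M hM hMl z hz j
    have g1 := cs_iter_growth hR1 hR z (hM.trans hz) j
    have g2 : (1 : ℝ) ≤ 2 ^ j := one_le_pow₀ (by norm_num)
    have g3 : M ≤ ‖f^[j] z‖ := by nlinarith [norm_nonneg z]
    have g4 := hMl _ g3
    simp only [hF, norm_div, norm_pow, Complex.norm_natCast]
    rw [div_eq_mul_inv, one_div, inv_pow]
    have : (2 : ℝ) ^ (j + 1) ≤ (d : ℝ) ^ (j + 1) := pow_le_pow_left₀ (by norm_num) hd2 _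
    have h5 : ((d : ℝ) ^ (j + 1))⁻¹ ≤ ((2 : ℝ) ^ (j + 1))⁻¹ := inv_anti₀ (by positivity) this
    exact mul_le_mul g4 h5 (by positivity) hε.le
  have hgeo : HasSum (fun j : ℕ => (1 / 2 : ℝ) ^ (j + 1)) 1 := by
    have h1 := hasSum_geometric_two.mul_left (1 / 2 : ℝ)
    have h2 : (fun j : ℕ => (1 / 2 : ℝ) ^ (j + 1)) = fun j : ℕ => 1 / 2 * (1 / 2 : ℝ) ^ j := by
      funext j; rw [pow_succ]; ring
    rw [h2]
    norm_num at h1 ⊢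
    exact h1
  obtain ⟨M1, hM1R, hM1⟩ := hsmall 1 one_pos
  have hM1' : 1 ≤ M1 := hR1.trans hM1R
  have hRM : ∀ z, M1 ≤ ‖z‖ → 2 * ‖z‖ ≤ ‖f z‖ := fun z hz => hR z (hM1R.trans hz)
  set S : ℂ → ℂ := fun z => ∑' j, F j z with hS
  have hFsucc : ∀ j z, F (j + 1) z = F j (f z) / d := by
    intro j z
    simp only [hF, iterate_succ_apply]
    rw [div_div, ← pow_succ]
  have hfarK : ∀ n z, M1 < ‖f^[n] z‖ → z ∉ K := by
    intro n z hz h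
    exact not_le.2 hz ((cs_mem_K hM1' hRM z).1 h n)
  have hfd : ∀ j z, z ∉ K → DifferentiableAt ℂ (F j) z := by
    intro j z hz
    have hjz : f^[j] z ∉ K := by
      induction j generalizing z with
      | zero => exact hz
      | succ j ih => rw [iterate_succ_apply]; exact ih (f z) (fun h => hz ((cs_K_inv z).1 h))
    exact ((hl _ hjz).comp z (hf.iterate j z)).div_const _
  have hopenfar : ∀ n, IsOpen {z : ℂ | M1 < ‖f^[n] z‖} := fun n =>
    isOpen_lt continuous_const (hf.continuous.iterate n).norm
  have main : ∀ n, ∀ z, M1 < ‖f^[n] z‖ → Summable (fun j => F j z) ∧ DifferentiableAt ℂ S z := by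
    intro n
    induction n with
    | zero =>
      intro z hz
      have hb := hFb 1 one_pos M1 hM1R hM1
      have hsum : Summable (fun j : ℕ => (1 : ℝ) * (1 / 2 : ℝ) ^ (j + 1)) := by
        simpa using hgeo.summable
      refine ⟨Summable.of_norm_bounded hsum (fun j => hb z (le_of_lt hz) j), ?_⟩
      have := Complex.differentiableOn_tsum_of_summable_norm (U := {z : ℂ | M1 < ‖f^[0] z‖}) hsum
        (F := F) (fun j y hy => (hfd j y (hfarK 0 y hy)).differentiableWithinAt) (hopenfar 0)
        (fun j y hy => hb y (le_of_lt hy) j)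
      exact this.differentiableAt ((hopenfar 0).mem_nhds hz)
    | succ n ih =>
      intro z hz
      have hsum : ∀ y, M1 < ‖f^[n + 1] y‖ → Summable (fun j => F j y) := by
        intro y hy
        rw [← summable_nat_add_iff 1]
        simp only [hFsucc]
        exact (ih (f y) hy).1.div_const _
      refine ⟨hsum z hz, ?_⟩
      have e : S =ᶠ[𝓝 z] fun y => F 0 y + S (f y) / d := by
        filter_upwards [(hopenfar (n + 1)).mem_nhds hz] with y hy
        simp only [hS]
        rw [(hsum y hy).tsum_eq_zero_add]
        simp only [hFsucc]
        rw [tsum_div_const]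
      refine DifferentiableAt.congr_of_eventuallyEq ?_ e
      refine (hfd 0 z (hfarK _ z hz)).add (DifferentiableAt.div_const ?_ _)
      exact DifferentiableAt.comp z (ih (f z) hz).2 (hf z)
  have hesc : ∀ z ∉ K, ∃ n, M1 < ‖f^[n] z‖ := by
    intro z hz
    rw [hKdef, cs_mem_K hM1' hRM] at hz
    push Not at hz
    exact hz
  have hSeq : ∀ z ∉ K, d * S z = l z + S (f z) := by
    intro z hz
    obtain ⟨n, hn⟩ := hesc z hz
    have e : S z = F 0 z + S (f z) / d := by
      simp only [hS]
      rw [(main n z hn).1.tsum_eq_zero_add]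
      simp only [hFsucc]
      rw [tsum_div_const]
    rw [e]
    simp only [hF, iterate_zero, id]
    field_simp
    ring
  have hS0 : Filter.Tendsto S (Bornology.cobounded ℂ) (𝓝 0) := by
    rw [Metric.tendsto_nhds]
    intro ε hε
    obtain ⟨M, hMR, hM⟩ := hsmall (ε / 2) (by positivity)
    filter_upwards [tendsto_norm_cobounded_atTop.eventually_ge_atTop M] with z hz
    have hb := hFb (ε / 2) (by positivity) M hMR hM z hz
    have := tsum_of_norm_bounded (hgeo.mul_left (ε / 2)) hb
    rw [dist_zero_right]
    have h2 : ‖S z‖ ≤ ε / 2 * 1 := this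
    linarith
  obtain ⟨b, hb⟩ := IsAlgClosed.exists_pow_nat_eq a (n := d - 1) (by omega)
  have hb0 : b ≠ 0 := by
    rintro rfl
    rw [zero_pow (by omega)] at hb
    exact ha hb.symm
  have hbd : b ^ d = b * a := by
    rw [← hb, ← pow_succ']; congr 1; omega
  set ψ : ℂ → ℂ := fun z => b * (z - w) * Complex.exp (S z) with hψ
  have hfun : ∀ z ∉ K, ψ (f z) = ψ z ^ d := by
    intro z hz
    simp only [hψ]
    rw [mul_pow, mul_pow, ← Complex.exp_nat_mul, hSeq z hz, hfl z hz, hbd, Complex.exp_add]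
    ring
  have hasym : Filter.Tendsto (fun z => ψ z / z) (Bornology.cobounded ℂ) (𝓝 b) := by
    have t1 : Filter.Tendsto (fun z : ℂ => 1 - w * z⁻¹) (Bornology.cobounded ℂ) (𝓝 1) := by
      simpa using (Filter.tendsto_inv₀_cobounded.const_mul w).const_sub (1 : ℂ)
    have t2 : Filter.Tendsto (fun z : ℂ => b * (1 - w * z⁻¹) * Complex.exp (S z))
        (Bornology.cobounded ℂ) (𝓝 (b * 1 * Complex.exp 0)) :=
      (t1.const_mul b).mul ((Complex.continuous_exp.tendsto 0).comp hS0)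
    simp only [mul_one, Complex.exp_zero] at t2
    refine t2.congr' ?_
    filter_upwards [tendsto_norm_cobounded_atTop.eventually_gt_atTop 0] with z hz
    have : z ≠ 0 := norm_pos_iff.1 hz
    simp only [hψ]
    field_simp
  refine ⟨ψ, b, hb0, ?_, hfun, hasym, ?_⟩
  · intro z hz
    obtain ⟨n, hn⟩ := hesc z hz
    have := (main n z hn).2
    simp only [hψ]
    fun_prop
  · intro z hz
    have hψn : ∀ n, ∀ z ∉ K, ψ (f^[n] z) = ψ z ^ (d ^ n) := by
      intro n
      induction n with
      | zero => intro z _; simp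
      | succ n ih =>
        intro z hz
        rw [iterate_succ_apply, ih (f z) (fun h => hz ((cs_K_inv z).1 h)), hfun z hz, ← pow_mul,
          pow_succ']
    have hψinf : Filter.Tendsto (fun z => ‖ψ z‖) (Bornology.cobounded ℂ) Filter.atTop := by
      have := Filter.Tendsto.pos_mul_atTop (norm_pos_iff.2 hb0) hasym.norm
        tendsto_norm_cobounded_atTop
      refine this.congr' ?_
      filter_upwards [tendsto_norm_cobounded_atTop.eventually_gt_atTop 0] with z hz
      rw [norm_div, div_mul_cancel₀ _ hz.ne']
    obtain ⟨n, hn⟩ := hesc z hz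
    have hgr : Filter.Tendsto (fun k => ‖f^[k] (f^[n] z)‖) Filter.atTop Filter.atTop := by
      refine Filter.tendsto_atTop_mono (fun k => cs_iter_growth hM1' hRM _ hn.le k) ?_
      exact (tendsto_pow_atTop_atTop_of_one_lt one_lt_two).atTop_mul_const (by linarith)
    have hcob : Filter.Tendsto (fun k => f^[k] (f^[n] z)) Filter.atTop (Bornology.cobounded ℂ) :=
      tendsto_norm_atTop_iff_cobounded.1 hgr
    obtain ⟨k, hk⟩ := ((hψinf.comp hcob).eventually_gt_atTop 1).exists
    simp only [comp_apply] at hk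
    rw [← iterate_add_apply, hψn _ z hz, norm_pow] at hk
    by_contra! hle
    exact not_le.2 hk (pow_le_one₀ (norm_nonneg _) hle)

theorem cs_crit {ψ : ℂ → ℂ} {z0 : ℂ} (hψ : AnalyticAt ℂ ψ z0) (h0 : ψ z0 ≠ 0)
    (hd : deriv ψ z0 = 0) (hnc : ¬ ∀ᶠ z in 𝓝 z0, ψ z = ψ z0) (U : Set ℂ) (hU : U ∈ 𝓝 z0) :
    ∃ z ∈ U, ∃ z' ∈ U, z ≠ z' ∧ ψ z = ψ z' ∧ ‖ψ z0‖ < ‖ψ z‖ := by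
  have hφ : AnalyticAt ℂ (fun z => ψ z - ψ z0) z0 := hψ.sub analyticAt_const
  obtain ⟨n, g, hg, hg0, hgn⟩ := hφ.exists_eventuallyEq_pow_smul_nonzero_iff.2 (by
    intro h; apply hnc
    filter_upwards [h] with z hz
    exact sub_eq_zero.1 hz)
  have hn0 : n ≠ 0 := by
    rintro rfl
    have := hgn.self_of_nhds
    simp at this
    exact hg0 this.symm
  have hn1 : n ≠ 1 := by
    rintro rfl
    have e1 : HasDerivAt (fun z => (z - z0) * g z) (1 * g z0 + (z0 - z0) * deriv g z0) z0 :=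
      ((hasDerivAt_id z0).sub_const z0).mul hg.differentiableAt.hasDerivAt
    have e2 : HasDerivAt (fun z => ψ z - ψ z0) (deriv ψ z0) z0 :=
      hψ.differentiableAt.hasDerivAt.sub_const _
    have e3 : HasDerivAt (fun z => ψ z - ψ z0) (1 * g z0 + (z0 - z0) * deriv g z0) z0 := by
      refine e1.congr_of_eventuallyEq ?_
      filter_upwards [hgn] with z hz
      simpa using hz
    have := e2.unique e3
    rw [hd] at this
    simp at this
    exact hg0 this.symm
  have hnC : (n : ℂ) ≠ 0 := by exact_mod_cast hn0
  set k : ℂ → ℂ := fun z => Complex.exp (Complex.log (g z0) / n) *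
    Complex.exp (Complex.log (g z / g z0) / n) with hk
  have hkan : AnalyticAt ℂ k z0 := by
    have h1 : AnalyticAt ℂ (fun z => Complex.log (g z / g z0)) z0 :=
      (hg.div analyticAt_const hg0).clog (by
        simp only [Pi.div_apply]
        rw [div_self hg0]; exact Complex.one_mem_slitPlane)
    have h2 : AnalyticAt ℂ (fun z => Complex.log (g z / g z0) / n) z0 :=
      h1.div analyticAt_const hnC
    exact analyticAt_const.mul h2.cexp
  have hkn : ∀ᶠ z in 𝓝 z0, k z ^ n = g z := by
    filter_upwards [hg.continuousAt.eventually_ne hg0] with z hz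
    simp only [hk]
    rw [mul_pow, ← Complex.exp_nat_mul, ← Complex.exp_nat_mul, mul_div_cancel₀ _ hnC,
      mul_div_cancel₀ _ hnC, Complex.exp_log hg0, Complex.exp_log (div_ne_zero hz hg0),
      mul_div_cancel₀ _ hg0]
  have hk0 : k z0 ≠ 0 := mul_ne_zero (Complex.exp_ne_zero _) (Complex.exp_ne_zero _)
  set h : ℂ → ℂ := fun z => (z - z0) * k z with hh
  have han : AnalyticAt ℂ h z0 := (analyticAt_id.sub analyticAt_const).mul hkan
  have hder : deriv h z0 ≠ 0 := by
    have e1 : HasDerivAt h (1 * k z0 + (z0 - z0) * deriv k z0) z0 :=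
      ((hasDerivAt_id z0).sub_const z0).mul hkan.differentiableAt.hasDerivAt
    rw [e1.deriv]; simpa using hk0
  have hmap := han.hasStrictDerivAt.map_nhds_eq hder
  have hhz0 : h z0 = 0 := by simp [hh]
  rw [hhz0] at hmap
  have hW : {z | z ∈ U ∧ ψ z = ψ z0 + h z ^ n} ∈ 𝓝 z0 := by
    filter_upwards [hU, hgn, hkn] with z hz1 hz2 hz3
    refine ⟨hz1, ?_⟩
    rw [← sub_eq_iff_eq_add']
    rw [hz2, smul_eq_mul, ← hz3]
    exact (mul_pow _ _ _).symm
  have himg : h '' {z | z ∈ U ∧ ψ z = ψ z0 + h z ^ n} ∈ 𝓝 (0 : ℂ) := by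
    rw [← hmap]; exact Filter.image_mem_map hW
  obtain ⟨c, hc⟩ := IsAlgClosed.exists_pow_nat_eq (ψ z0) (n := n) (by omega)
  have hc0 : c ≠ 0 := by
    rintro rfl
    rw [zero_pow hn0] at hc; exact h0 hc.symm
  set ζ : ℂ := Complex.exp (2 * Real.pi * Complex.I / n) with hζ
  have hprim : IsPrimitiveRoot ζ n := Complex.isPrimitiveRoot_exp n hn0
  have hζ1 : ζ ≠ 1 := hprim.ne_one (by omega)
  have t1 : Filter.Tendsto (fun τ : ℝ => (τ : ℂ) * c) (𝓝[>] 0) (𝓝 0) := by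
    have : Continuous fun τ : ℝ => (τ : ℂ) * c := by fun_prop
    simpa using (this.tendsto 0).mono_left nhdsWithin_le_nhds
  have t2 : Filter.Tendsto (fun τ : ℝ => ζ * ((τ : ℂ) * c)) (𝓝[>] 0) (𝓝 0) := by
    simpa using t1.const_mul ζ
  obtain ⟨τ, ⟨⟨z, ⟨hzU, hzψ⟩, hz⟩, ⟨z', ⟨hzU', hzψ'⟩, hz'⟩⟩, hτ⟩ :=
    (((t1.eventually himg).and (t2.eventually himg)).and self_mem_nhdsWithin).exists
  have hτ0 : (0 : ℝ) < τ := hτ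
  have hτC : (τ : ℂ) ≠ 0 := by exact_mod_cast hτ0.ne'
  have hv0 : (τ : ℂ) * c ≠ 0 := mul_ne_zero hτC hc0
  refine ⟨z, hzU, z', hzU', ?_, ?_, ?_⟩
  · rintro rfl
    apply hζ1
    rw [hz] at hz'
    exact (mul_left_eq_self₀.1 hz'.symm).resolve_right hv0
  · rw [hzψ, hzψ', hz, hz', mul_pow ζ, hprim.pow_eq_one, one_mul]
  · rw [hzψ, hz, mul_pow, hc]
    have e : ψ z0 + (τ : ℂ) ^ n * ψ z0 = ((1 + τ ^ n : ℝ) : ℂ) * ψ z0 := by push_cast; ring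
    have hp : 0 < τ ^ n := by positivity
    rw [e, norm_mul, Complex.norm_real, Real.norm_eq_abs, abs_of_pos (by linarith)]
    nlinarith [norm_pos_iff.2 h0]

theorem cs_locinj {ψ : ℂ → ℂ} {z0 : ℂ} (hψ : AnalyticAt ℂ ψ z0) (hd : deriv ψ z0 ≠ 0) :
    ∃ U ∈ 𝓝 z0, InjOn ψ U := by
  refine ⟨_, hψ.hasStrictDerivAt.eventually_left_inverse hd, ?_⟩
  intro x hx y hy hxy
  have hx' : HasStrictDerivAt.localInverse ψ _ z0 hψ.hasStrictDerivAt hd (ψ x) = x := hx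
  have hy' : HasStrictDerivAt.localInverse ψ _ z0 hψ.hasStrictDerivAt hd (ψ y) = y := hy
  rw [← hx', ← hy', hxy]

theorem cs_inj_inf {K : Set ℂ} (hK : IsCompact K) {ψ : ℂ → ℂ} {b : ℂ} (hb : b ≠ 0)
    (hψ : ∀ z ∉ K, DifferentiableAt ℂ ψ z) (h1 : ∀ z ∉ K, ψ z ≠ 0)
    (has : Filter.Tendsto (fun z => ψ z / z) (Bornology.cobounded ℂ) (𝓝 b)) :
    ∃ M > 0, InjOn ψ {z | M < ‖z‖} := by
  set G : ℂ → ℂ := fun ζ => if ζ = 0 then 0 else (ψ ζ⁻¹)⁻¹ with hG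
  have hinv : Filter.Tendsto (fun ζ : ℂ => ζ⁻¹) (𝓝[≠] 0) (Bornology.cobounded ℂ) :=
    Filter.tendsto_inv₀_nhdsNE_zero
  have hKcob : ∀ᶠ z in Bornology.cobounded ℂ, z ∉ K := hK.isBounded
  have hder : HasDerivAt G b⁻¹ 0 := by
    rw [hasDerivAt_iff_tendsto_slope]
    have := (has.comp hinv).inv₀ hb
    refine this.congr' ?_
    filter_upwards [self_mem_nhdsWithin] with ζ hζ
    have hζ' : ζ ≠ 0 := hζ
    simp [hG, slope_def_field, hζ', mul_comm, div_eq_mul_inv]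
  have han : AnalyticAt ℂ G 0 := by
    refine Complex.analyticAt_of_differentiable_on_punctured_nhds_of_continuousAt ?_
      hder.continuousAt
    filter_upwards [hinv.eventually hKcob, self_mem_nhdsWithin] with ζ hζK hζ
    have hζ' : ζ ≠ 0 := hζ
    have e : G =ᶠ[𝓝 ζ] fun ζ => (ψ ζ⁻¹)⁻¹ := by
      filter_upwards [eventually_ne_nhds hζ'] with y hy
      simp [hG, hy]
    refine DifferentiableAt.congr_of_eventuallyEq ?_ e
    exact (DifferentiableAt.comp ζ (hψ _ hζK) (differentiableAt_inv hζ')).inv (h1 _ hζK)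
  obtain ⟨U, hU, hinj⟩ := cs_locinj han (by rw [hder.deriv]; exact inv_ne_zero hb)
  obtain ⟨δ, hδ, hball⟩ := Metric.mem_nhds_iff.1 hU
  refine ⟨δ⁻¹, by positivity, ?_⟩
  intro x hx y hy hxy
  have aux : ∀ x : ℂ, δ⁻¹ < ‖x‖ → x ≠ 0 ∧ x⁻¹ ∈ U := by
    intro x hx
    have hx0 : 0 < ‖x‖ := (by positivity : 0 < δ⁻¹).trans hx
    refine ⟨norm_pos_iff.1 hx0, hball ?_⟩
    rw [mem_ball_zero_iff, norm_inv]
    exact inv_lt_of_inv_lt₀ hδ hx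
  obtain ⟨hx0, hxU⟩ := aux x hx
  obtain ⟨hy0, hyU⟩ := aux y hy
  have := hinj hxU hyU (by simp [hG, hx0, hy0, hxy])
  exact inv_injective this

theorem cs_inj {K : Set ℂ} (hK : IsClosed K) {ψ : ℂ → ℂ}
    (hψ : ∀ z ∉ K, DifferentiableAt ℂ ψ z) (h1 : ∀ z ∉ K, 1 < ‖ψ z‖)
    (hcpt : ∀ ρ > 1, ∀ ρ', IsCompact {z | z ∉ K ∧ ρ ≤ ‖ψ z‖ ∧ ‖ψ z‖ ≤ ρ'})
    (hnc : ∀ z ∉ K, ¬ ∀ᶠ y in 𝓝 z, ψ y = ψ z)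
    (M : ℝ) (hM : InjOn ψ {z | z ∉ K ∧ M < ‖ψ z‖}) : InjOn ψ Kᶜ := by
  have han : ∀ z ∉ K, AnalyticAt ℂ ψ z := by
    intro z hz
    have : DifferentiableOn ℂ ψ Kᶜ := fun y hy => (hψ y hy).differentiableWithinAt
    exact this.analyticAt (hK.isOpen_compl.mem_nhds hz)
  have hKo : ∀ z ∉ K, Kᶜ ∈ 𝓝 z := fun z hz => hK.isOpen_compl.mem_nhds hz
  intro a ha a' ha' haa
  by_contra hne
  set T : Set (ℂ × ℂ) := {q | q.1 ∉ K ∧ q.2 ∉ K ∧ q.1 ≠ q.2 ∧ ψ q.1 = ψ q.2 ∧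
    ‖ψ a‖ ≤ ‖ψ q.1‖} with hT
  have hTb : ∀ q ∈ T, ‖ψ q.1‖ ≤ M := by
    rintro q ⟨q1, q2, q3, q4, q5⟩
    by_contra! hlt
    exact q3 (hM ⟨q1, hlt⟩ ⟨q2, q4 ▸ hlt⟩ q4)
  set N : Set ℝ := (fun q : ℂ × ℂ => ‖ψ q.1‖) '' T with hN
  have hNb : BddAbove N := ⟨M, by rintro _ ⟨q, hq, rfl⟩; exact hTb q hq⟩
  have hNne : N.Nonempty := ⟨_, ⟨(a, a'), ⟨ha, ha', hne, haa, le_rfl⟩, rfl⟩⟩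
  obtain ⟨u, -, hu2, hu3⟩ := exists_seq_tendsto_sSup hNne hNb
  choose q hqT hqu using hu3
  set C : Set ℂ := {z | z ∉ K ∧ ‖ψ a‖ ≤ ‖ψ z‖ ∧ ‖ψ z‖ ≤ M} with hC
  have hCc : IsCompact C := hcpt _ (h1 a ha) M
  have hqC : ∀ n, q n ∈ C ×ˢ C := by
    intro n
    obtain ⟨q1, q2, q3, q4, q5⟩ := hqT n
    have := hTb _ (hqT n)
    exact ⟨⟨q1, q5, this⟩, ⟨q2, q4 ▸ q5, q4 ▸ this⟩⟩
  obtain ⟨⟨x, y⟩, ⟨hxC, hyC⟩, φ, hφ, hlim⟩ := (hCc.prod hCc).tendsto_subseq hqC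
  have hxK : x ∉ K := hxC.1
  have hyK : y ∉ K := hyC.1
  have l1 : Filter.Tendsto (fun n => (q (φ n)).1) Filter.atTop (𝓝 x) :=
    (continuous_fst.tendsto _).comp hlim
  have l2 : Filter.Tendsto (fun n => (q (φ n)).2) Filter.atTop (𝓝 y) :=
    (continuous_snd.tendsto _).comp hlim
  have m1 := (hψ x hxK).continuousAt.tendsto.comp l1
  have m2 := (hψ y hyK).continuousAt.tendsto.comp l2
  have hxy : ψ x = ψ y := by
    refine tendsto_nhds_unique m1 (m2.congr fun n => ?_)
    exact (hqT (φ n)).2.2.2.1.symm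
  have hsup : ‖ψ x‖ = sSup N := by
    refine tendsto_nhds_unique m1.norm ((hu2.comp hφ.tendsto_atTop).congr fun n => ?_)
    exact (hqu (φ n)).symm
  have hx0 : ψ x ≠ 0 := norm_pos_iff.1 (lt_trans one_pos (h1 x hxK))
  have better : ∀ z z' : ℂ, z ∉ K → z' ∉ K → z ≠ z' → ψ z = ψ z' → ‖ψ x‖ < ‖ψ z‖ → False := by
    intro z z' hz hz' hzz he hlt
    have : ‖ψ z‖ ≤ sSup N := le_csSup hNb ⟨(z, z'), ⟨hz, hz', hzz, he, hxC.2.1.trans hlt.le⟩, rfl⟩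
    linarith
  by_cases hxe : x = y
  · subst hxe
    by_cases hd : deriv ψ x = 0
    · obtain ⟨z, hz, z', hz', h3, h4, h5⟩ := cs_crit (han x hxK) hx0 hd (hnc x hxK) Kᶜ (hKo x hxK)
      exact better z z' hz hz' h3 h4 h5
    · obtain ⟨U, hU, hinj⟩ := cs_locinj (han x hxK) hd
      obtain ⟨n, hn1, hn2⟩ := ((l1.eventually hU).and (l2.eventually hU)).exists
      exact (hqT (φ n)).2.2.1 (hinj hn1 hn2 (hqT (φ n)).2.2.2.1)
  · obtain ⟨U, V, hU, hV, hxU, hyV, hUV⟩ := t2_separation hxe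
    have o1 := ((han x hxK).eventually_constant_or_nhds_le_map_nhds).resolve_left (hnc x hxK)
    have o2 := ((han y hyK).eventually_constant_or_nhds_le_map_nhds).resolve_left (hnc y hyK)
    have i1 : ψ '' (U ∩ Kᶜ) ∈ 𝓝 (ψ x) :=
      o1 (Filter.image_mem_map (Filter.inter_mem (hU.mem_nhds hxU) (hKo x hxK)))
    have i2 : ψ '' (V ∩ Kᶜ) ∈ 𝓝 (ψ x) := by
      rw [hxy]
      exact o2 (Filter.image_mem_map (Filter.inter_mem (hV.mem_nhds hyV) (hKo y hyK)))
    have t : Filter.Tendsto (fun τ : ℝ => ((1 + τ : ℝ) : ℂ) * ψ x) (𝓝[>] 0) (𝓝 (ψ x)) := by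
      have : Continuous fun τ : ℝ => ((1 + τ : ℝ) : ℂ) * ψ x := by fun_prop
      simpa using (this.tendsto 0).mono_left nhdsWithin_le_nhds
    obtain ⟨τ, ⟨⟨z, ⟨hz1, hz2⟩, hz⟩, ⟨z', ⟨hz1', hz2'⟩, hz'⟩⟩, hτ⟩ :=
      (((t.eventually i1).and (t.eventually i2)).and self_mem_nhdsWithin).exists
    have hτ0 : (0 : ℝ) < τ := hτ
    refine better z z' hz2 hz2' ?_ (hz.trans hz'.symm) ?_
    · rintro rfl
      exact Set.disjoint_left.1 hUV hz1 hz1'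
    · rw [hz, norm_mul, Complex.norm_real, Real.norm_eq_abs, abs_of_pos (by linarith)]
      nlinarith [norm_pos_iff.2 hx0]

theorem cs_inverse {K : Set ℂ} (hK : IsClosed K) {ψ : ℂ → ℂ}
    (hψ : ∀ z ∉ K, DifferentiableAt ℂ ψ z) (h1 : ∀ z ∉ K, 1 < ‖ψ z‖)
    (hne : ∃ z, z ∉ K)
    (hcpt : ∀ ρ > 1, ∀ ρ', IsCompact {z | z ∉ K ∧ ρ ≤ ‖ψ z‖ ∧ ‖ψ z‖ ≤ ρ'})
    (hnc : ∀ z ∉ K, ¬ ∀ᶠ y in 𝓝 z, ψ y = ψ z)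
    (hinj : InjOn ψ Kᶜ) :
    ∃ χ : ℂ → ℂ, (∀ z ∉ K, χ (ψ z) = z) ∧
      ∀ w : ℂ, 1 < ‖w‖ → χ w ∉ K ∧ ψ (χ w) = w ∧ DifferentiableAt ℂ χ w := by
  have han : ∀ z ∉ K, AnalyticAt ℂ ψ z := by
    intro z hz
    have : DifferentiableOn ℂ ψ Kᶜ := fun y hy => (hψ y hy).differentiableWithinAt
    exact this.analyticAt (hK.isOpen_compl.mem_nhds hz)
  have hKo : ∀ z ∉ K, Kᶜ ∈ 𝓝 z := fun z hz => hK.isOpen_compl.mem_nhds hz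
  have hd : ∀ z ∉ K, deriv ψ z ≠ 0 := by
    intro z hz hd0
    obtain ⟨y, hy, y', hy', h3, h4, -⟩ := cs_crit (han z hz)
      (norm_pos_iff.1 (lt_trans one_pos (h1 z hz))) hd0 (hnc z hz) Kᶜ (hKo z hz)
    exact h3 (hinj hy hy' h4)
  have hopen : IsOpen (ψ '' Kᶜ) := by
    rw [isOpen_iff_mem_nhds]
    rintro _ ⟨z, hz, rfl⟩
    rw [← (han z hz).hasStrictDerivAt.map_nhds_eq (hd z hz)]
    exact Filter.image_mem_map (hKo z hz)
  have hsurj : {w : ℂ | 1 < ‖w‖} ⊆ ψ '' Kᶜ := by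
    refine (cs_far_preconn one_pos).subset_of_closure_inter_subset hopen ?_ ?_
    · obtain ⟨z, hz⟩ := hne
      exact ⟨ψ z, h1 z hz, ⟨z, hz, rfl⟩⟩
    · rintro w ⟨hwcl, hw⟩
      have hw' : 1 < ‖w‖ := hw
      obtain ⟨ρ, hρ1, hρ2⟩ := exists_between hw'
      have hC := hcpt ρ hρ1 (‖w‖ + 1)
      set C : Set ℂ := {z | z ∉ K ∧ ρ ≤ ‖ψ z‖ ∧ ‖ψ z‖ ≤ ‖w‖ + 1} with hCdef
      have hψC : IsCompact (ψ '' C) := hC.image_of_continuousOn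
        fun z hz => (hψ z hz.1).continuousAt.continuousWithinAt
      have : w ∈ closure (ψ '' C) := by
        rw [mem_closure_iff_nhds]
        intro t ht
        have hV : {v : ℂ | ρ < ‖v‖ ∧ ‖v‖ < ‖w‖ + 1} ∈ 𝓝 w := by
          refine Filter.inter_mem ?_ ?_
          · exact continuous_norm.continuousAt.eventually (lt_mem_nhds hρ2)
          · exact continuous_norm.continuousAt.eventually (gt_mem_nhds (by linarith))
        obtain ⟨v, ⟨hv1, hv2⟩, ⟨z, hz, rfl⟩⟩ :=
          mem_closure_iff_nhds.1 hwcl _ (Filter.inter_mem ht hV)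
        exact ⟨ψ z, hv1, ⟨z, ⟨hz, hv2.1.le, hv2.2.le⟩, rfl⟩⟩
      rw [hψC.isClosed.closure_eq] at this
      obtain ⟨z, hz, rfl⟩ := this
      exact ⟨z, hz.1, rfl⟩
  have hex : ∀ w : ℂ, ∃ z : ℂ, 1 < ‖w‖ → z ∉ K ∧ ψ z = w := by
    intro w
    by_cases hw : 1 < ‖w‖
    · obtain ⟨z, hz, hzw⟩ := hsurj hw
      exact ⟨z, fun _ => ⟨hz, hzw⟩⟩
    · exact ⟨0, fun h => absurd h hw⟩
  choose χ hχ using hex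
  have hleft : ∀ z ∉ K, χ (ψ z) = z := by
    intro z hz
    have := hχ (ψ z) (h1 z hz)
    exact hinj this.1 hz this.2
  refine ⟨χ, hleft, fun w hw => ⟨(hχ w hw).1, (hχ w hw).2, ?_⟩⟩
  have hz := (hχ w hw).1
  have := (han _ hz).hasStrictDerivAt.to_local_left_inverse (hd _ hz) (g := χ) (by
    filter_upwards [hKo _ hz] with y hy
    exact hleft y hy)
  rw [(hχ w hw).2] at this
  exact this.hasDerivAt.differentiableAt

theorem cs_psi_inf {ψ : ℂ → ℂ} {b : ℂ} (hb : b ≠ 0)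
    (has : Filter.Tendsto (fun z => ψ z / z) (Bornology.cobounded ℂ) (𝓝 b)) :
    Filter.Tendsto (fun z => ‖ψ z‖) (Bornology.cobounded ℂ) Filter.atTop := by
  have := Filter.Tendsto.pos_mul_atTop (norm_pos_iff.2 hb) has.norm tendsto_norm_cobounded_atTop
  refine this.congr' ?_
  filter_upwards [tendsto_norm_cobounded_atTop.eventually_gt_atTop 0] with z hz
  rw [norm_div, div_mul_cancel₀ _ hz.ne']

theorem cs_psi_iter {f ψ : ℂ → ℂ} {d : ℕ}
    (hfun : ∀ z ∉ filledJulia f, ψ (f z) = ψ z ^ d) :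
    ∀ n, ∀ z ∉ filledJulia f, ψ (f^[n] z) = ψ z ^ (d ^ n) := by
  intro n
  induction n with
  | zero => intro z _; simp
  | succ n ih =>
    intro z hz
    rw [iterate_succ_apply, ih (f z) (fun h => hz ((cs_K_inv z).1 h)), hfun z hz, ← pow_mul,
      pow_succ']

theorem cs_psi_bdd {f ψ : ℂ → ℂ} {R : ℝ} {d : ℕ} (hd : 2 ≤ d)
    (hf : Differentiable ℂ f) (hR1 : 1 ≤ R) (hR : ∀ z, R ≤ ‖z‖ → 2 * ‖z‖ ≤ ‖f z‖)
    (hψ : ∀ z ∉ filledJulia f, DifferentiableAt ℂ ψ z)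
    (hfun : ∀ z ∉ filledJulia f, ψ (f z) = ψ z ^ d)
    (h1 : ∀ z ∉ filledJulia f, 1 < ‖ψ z‖) :
    ∃ B, ∀ z ∉ filledJulia f, ‖z‖ ≤ R → ‖ψ z‖ ≤ B := by
  obtain ⟨B1, hB1⟩ := ((isCompact_closedBall (0 : ℂ) R).image hf.continuous).isBounded.exists_norm_le
  have hA : IsCompact (Metric.closedBall (0 : ℂ) B1 ∩ {z | R ≤ ‖z‖}) :=
    (isCompact_closedBall _ _).inter_right (isClosed_le continuous_const continuous_norm)
  have hAK : ∀ z : ℂ, R ≤ ‖z‖ → z ∉ filledJulia f := by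
    intro z hz h
    have h2 := (cs_mem_K hR1 hR z).1 h 1
    have h3 := hR z hz
    simp only [iterate_one] at h2
    linarith
  obtain ⟨B, hB⟩ := (hA.image_of_continuousOn (f := ψ)
    fun z hz => (hψ z (hAK z hz.2)).continuousAt.continuousWithinAt).isBounded.exists_norm_le
  refine ⟨B, fun z hz hzR => ?_⟩
  have hex : ∃ n, R < ‖f^[n] z‖ := by
    have := hz
    rw [cs_mem_K hR1 hR] at this
    push Not at this
    exact this
  classical
  have hn := Nat.find_spec hex
  have hmin := fun m => Nat.find_min hex (m := m)
  set n := Nat.find hex with hndef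
  have hn0 : n ≠ 0 := by
    intro h0
    rw [h0] at hn
    simp only [iterate_zero, id] at hn
    linarith
  obtain ⟨m, hm⟩ := Nat.exists_eq_succ_of_ne_zero hn0
  have h2 : ‖f^[m] z‖ ≤ R := not_lt.1 (hmin m (by omega))
  have h3 : ‖f^[n] z‖ ≤ B1 := by
    rw [hm, iterate_succ_apply']
    exact hB1 _ ⟨_, by simpa using h2, rfl⟩
  have h4 : ‖ψ (f^[n] z)‖ ≤ B := hB _ ⟨_, ⟨by simpa using h3, hn.le⟩, rfl⟩
  rw [cs_psi_iter hfun n z hz, norm_pow] at h4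
  exact (le_self_pow₀ (h1 z hz).le (pow_ne_zero n (by omega))).trans h4

theorem cs_psi_compact {f ψ : ℂ → ℂ} {R : ℝ} {d : ℕ} {b : ℂ} (hd : 2 ≤ d) (hb : b ≠ 0)
    (hf : Differentiable ℂ f) (hR1 : 1 ≤ R) (hR : ∀ z, R ≤ ‖z‖ → 2 * ‖z‖ ≤ ‖f z‖)
    (hψ : ∀ z ∉ filledJulia f, DifferentiableAt ℂ ψ z)
    (hfun : ∀ z ∉ filledJulia f, ψ (f z) = ψ z ^ d)
    (has : Filter.Tendsto (fun z => ψ z / z) (Bornology.cobounded ℂ) (𝓝 b))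
    (h1 : ∀ z ∉ filledJulia f, 1 < ‖ψ z‖) (ρ : ℝ) (hρ : 1 < ρ) (ρ' : ℝ) :
    IsCompact {z | z ∉ filledJulia f ∧ ρ ≤ ‖ψ z‖ ∧ ‖ψ z‖ ≤ ρ'} := by
  obtain ⟨B, hB⟩ := cs_psi_bdd hd hf hR1 hR hψ hfun h1
  have hAK : ∀ n, ∀ z : ℂ, R ≤ ‖f^[n] z‖ → z ∉ filledJulia f := by
    intro n z hz h
    have h2 := (cs_mem_K hR1 hR z).1 h (n + 1)
    have h3 := hR _ hz
    rw [iterate_succ_apply'] at h2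
    linarith
  have hpow : Filter.Tendsto (fun n : ℕ => ρ ^ (d ^ n)) Filter.atTop Filter.atTop :=
    (tendsto_pow_atTop_atTop_of_one_lt hρ).comp (tendsto_pow_atTop_atTop_of_one_lt (by omega))
  obtain ⟨n, hn⟩ := (hpow.eventually_gt_atTop B).exists
  have hnK : ∀ n, ∀ z ∉ filledJulia f, f^[n] z ∉ filledJulia f := by
    intro n
    induction n with
    | zero => intro z hz; exact hz
    | succ n ih =>
      intro z hz
      rw [iterate_succ_apply]; exact ih (f z) (fun h => hz ((cs_K_inv z).1 h))
  have hAcl : IsClosed {z : ℂ | R ≤ ‖f^[n] z‖} :=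
    isClosed_le continuous_const (hf.continuous.iterate n).norm
  have hcont : ContinuousOn (fun z => ‖ψ z‖) {z : ℂ | R ≤ ‖f^[n] z‖} := fun z hz =>
    (hψ z (hAK n z hz)).continuousAt.norm.continuousWithinAt
  have he : {z | z ∉ filledJulia f ∧ ρ ≤ ‖ψ z‖ ∧ ‖ψ z‖ ≤ ρ'} =
      {z : ℂ | R ≤ ‖f^[n] z‖} ∩ (fun z => ‖ψ z‖) ⁻¹' Icc ρ ρ' := by
    ext z
    constructor
    · rintro ⟨hz, hz1, hz2⟩
      refine ⟨?_, hz1, hz2⟩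
      by_contra! hlt
      have h3 := hB _ (hnK n z hz) (le_of_lt (not_le.1 hlt))
      rw [cs_psi_iter hfun n z hz, norm_pow] at h3
      have : ρ ^ (d ^ n) ≤ ‖ψ z‖ ^ (d ^ n) := pow_le_pow_left₀ (by linarith) hz1 _
      linarith
    · rintro ⟨hz, hz1, hz2⟩
      exact ⟨hAK n z hz, hz1, hz2⟩
  refine Metric.isCompact_of_isClosed_isBounded ?_ ?_
  · rw [he]
    exact hcont.preimage_isClosed_of_isClosed hAcl isClosed_Icc
  · have h2 := (cs_psi_inf hb has).eventually_gt_atTop ρ'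
    have h3 : Bornology.IsBounded {z | ρ' < ‖ψ z‖}ᶜ := by
      rw [Bornology.isBounded_def, compl_compl]; exact h2
    refine h3.subset ?_
    rintro z ⟨-, -, hz⟩ hlt
    exact not_le.2 hlt hz

theorem cs_riemann {f ψ : ℂ → ℂ} {R : ℝ} {d : ℕ} {b : ℂ} (hd : 2 ≤ d) (hb : b ≠ 0)
    (hf : Differentiable ℂ f) (hR1 : 1 ≤ R) (hR : ∀ z, R ≤ ‖z‖ → 2 * ‖z‖ ≤ ‖f z‖)
    (hψ : ∀ z ∉ filledJulia f, DifferentiableAt ℂ ψ z)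
    (hfun : ∀ z ∉ filledJulia f, ψ (f z) = ψ z ^ d)
    (has : Filter.Tendsto (fun z => ψ z / z) (Bornology.cobounded ℂ) (𝓝 b))
    (h1 : ∀ z ∉ filledJulia f, 1 < ‖ψ z‖) :
    ∃ χ : ℂ → ℂ, (∀ z ∉ filledJulia f, χ (ψ z) = z) ∧
      ∀ w : ℂ, 1 < ‖w‖ → χ w ∉ filledJulia f ∧ ψ (χ w) = w ∧ DifferentiableAt ℂ χ w := by
  set K := filledJulia f with hKdef
  have hK : IsCompact K := cs_K_compact hf.continuous hR1 hR
  have hΩ := cs_Omega_preconn hf hR1 hR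
  have hinf := cs_psi_inf hb has
  have hKcob : ∀ᶠ z in Bornology.cobounded ℂ, z ∉ K := hK.isBounded
  have hcpt := cs_psi_compact hd hb hf hR1 hR hψ hfun has h1
  have hnc : ∀ z ∉ K, ¬ ∀ᶠ y in 𝓝 z, ψ y = ψ z := by
    intro z hz hev
    have hon : DifferentiableOn ℂ ψ Kᶜ := fun y hy => (hψ y hy).differentiableWithinAt
    have han : AnalyticOnNhd ℂ ψ Kᶜ := hon.analyticOnNhd hK.isClosed.isOpen_compl
    have heq := han.eqOn_of_preconnected_of_eventuallyEq (g := fun _ => ψ z)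
      (fun y _ => analyticAt_const) hΩ hz hev
    obtain ⟨y, hy1, hy2⟩ := ((hinf.eventually_gt_atTop ‖ψ z‖).and hKcob).exists
    rw [heq hy2] at hy1
    exact lt_irrefl _ hy1
  obtain ⟨M, hM0, hM⟩ := cs_inj_inf hK hb hψ
    (fun z hz => norm_pos_iff.1 (one_pos.trans (h1 z hz))) has
  obtain ⟨B, hB⟩ := cs_psi_bdd (R := max M R) hd hf (hR1.trans (le_max_right _ _))
    (fun z hz => hR z ((le_max_right _ _).trans hz)) hψ hfun h1
  have hinj : InjOn ψ Kᶜ := by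
    refine cs_inj hK.isClosed hψ h1 hcpt hnc B ?_
    refine hM.mono ?_
    rintro z ⟨hz1, hz2⟩
    show M < ‖z‖
    by_contra! hle
    exact not_le.2 hz2 (hB z hz1 (hle.trans (le_max_left _ _)))
  obtain ⟨z, hz⟩ := hKcob.exists
  exact cs_inverse hK.isClosed hψ h1 ⟨z, hz⟩ hcpt hnc hinj

/-- Carathéodory semiconjugacy: for a connected, locally connected Julia set, the
landing map `α : ℝ/ℤ → J_f` is a continuous surjection semiconjugating `θ ↦ d·θ`
to `f`. -/
theorem caratheodory_semiconjugacy (p : Polynomial ℂ) (d : ℕ) (hd : 2 ≤ d)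
    (hdeg : p.natDegree = d) (f : ℂ → ℂ) (hf : ∀ z, f z = p.eval z)
    (J : Set ℂ) (hJ : J = frontier (filledJulia f))
    (hJconn : IsConnected J) (hJlc : LocallyConnectedSpace J) :
    ∃ α : AddCircle (1 : ℝ) → ℂ, Continuous α ∧ Set.range α = J ∧
      ∀ θ : AddCircle (1 : ℝ), f (α θ) = α (d • θ) := by
  subst hdeg
  subst hJ
  obtain ⟨R, hR1, hRp⟩ := cs_escape p hd
  have hR : ∀ z, R ≤ ‖z‖ → 2 * ‖z‖ ≤ ‖f z‖ := fun z hz => by rw [hf]; exact hRp z hz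
  have hfd : Differentiable ℂ f := by
    have : f = fun z => p.eval z := funext hf
    rw [this]; exact p.differentiable
  have hK : IsCompact (filledJulia f) := cs_K_compact hfd.continuous hR1 hR
  have hΩ := cs_Omega_preconn hfd hR1 hR
  obtain ⟨w, hw⟩ := hJconn.nonempty
  obtain ⟨l, hl1, hl2, hl3⟩ := cs_bottcher_lambda p hd hK hΩ hJconn.isPreconnected
    hK.isClosed.frontier_subset w hw
    (fun z hz => cs_J_back hfd hR1 hR z (by rw [hf]; exact hz))
  have hlead : p.leadingCoeff ≠ 0 := by
    rw [Polynomial.leadingCoeff_ne_zero]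
    rintro rfl
    simp at hd
  obtain ⟨ψ, b, hb, hψ, hfun, has, h1⟩ := cs_bottcher hd hlead hfd hR1 hR hl1
    (fun z hz => by rw [hf]; exact hl2 z hz) hl3
  obtain ⟨χ, hχ1, hχ2⟩ := cs_riemann hd hb hfd hR1 hR hψ hfun has h1
  set K := filledJulia f with hKdef
  set d := p.natDegree with hddef
  set A : Set ℂ := {s : ℂ | 0 < s.re} with hA
  set Φ : ℂ → ℂ := fun s => χ (Complex.exp s) with hΦ
  have hexp : ∀ s ∈ A, 1 < ‖Complex.exp s‖ := by
    intro s hs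
    rw [Complex.norm_exp]
    exact Real.one_lt_exp_iff.2 hs
  have hΦd : ∀ s ∈ A, DifferentiableAt ℂ Φ s := fun s hs =>
    DifferentiableAt.comp s (hχ2 _ (hexp s hs)).2.2 Complex.differentiableAt_exp
  have hΦK : ∀ s, 0 < s.re → Φ s ∉ K := fun s hs => (hχ2 _ (hexp s hs)).1
  have hψΦ : ∀ s, 0 < s.re → ψ (Φ s) = Complex.exp s := fun s hs => (hχ2 _ (hexp s hs)).2.1
  have hΦlog : ∀ z ∉ K, 0 < (Complex.log (ψ z)).re ∧ Φ (Complex.log (ψ z)) = z := by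
    intro z hz
    have hz1 := h1 z hz
    refine ⟨?_, ?_⟩
    · rw [Complex.log_re]; exact Real.log_pos hz1
    · simp only [hΦ]
      rw [Complex.exp_log (norm_pos_iff.1 (one_pos.trans hz1)), hχ1 z hz]
  have hΦper : ∀ s s', Complex.exp s = Complex.exp s' → Φ s = Φ s' := by
    intro s s' h; simp only [hΦ, h]
  have hfΦ : ∀ s, 0 < s.re → f (Φ s) = Φ (d * s) := by
    intro s hs
    have h2 : f (Φ s) ∉ K := fun h => hΦK s hs ((cs_K_inv _).1 h)
    rw [← hχ1 _ h2, hfun _ (hΦK s hs), hψΦ s hs, ← Complex.exp_nat_mul]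
  have hbd : ∀ z ∉ K, ∃ V ∈ 𝓝 z, ∃ ρ > 0, ∀ s : ℂ, 0 < s.re → s.re < ρ → Φ s ∉ V := by
    intro z hz
    obtain ⟨ρ, hρ1, hρ2⟩ := exists_between (h1 z hz)
    refine ⟨{y | ρ < ‖ψ y‖}, (hψ z hz).continuousAt.norm.eventually (lt_mem_nhds hρ2),
      Real.log ρ, Real.log_pos hρ1, fun s hs hsρ hmem => ?_⟩
    have h2 : ρ < ‖ψ (Φ s)‖ := hmem
    rw [hψΦ s hs, Complex.norm_exp, ← Real.log_lt_iff_lt_exp (by linarith)] at h2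
    linarith
  have hfar : ∀ M : ℝ, ∃ s : ℂ, 0 < s.re ∧ M < ‖Φ s‖ := by
    intro M
    have hKcob : ∀ᶠ z in Bornology.cobounded ℂ, z ∉ K := hK.isBounded
    obtain ⟨z, hz1, hz2⟩ :=
      ((tendsto_norm_cobounded_atTop.eventually_gt_atTop M).and hKcob).exists
    refine ⟨Complex.log (ψ z), (hΦlog z hz2).1, ?_⟩
    rw [(hΦlog z hz2).2]; exact hz1
  have hlim : ∀ t₀ : ℝ, ∃ y, Filter.Tendsto Φ (𝓝[A] ⟨0, t₀⟩) (𝓝 y) := by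
    intro t₀
    refine cs_caratheodory (fun s hs => (hΦd s hs).differentiableWithinAt) hK hΦK hbd hfar hJlc t₀
      ?_ ?_
    · rintro s ⟨hs1, hs2, hs3, hs4⟩ s' ⟨hs1', hs2', hs3', hs4'⟩ heq
      have e : Complex.exp s = Complex.exp s' := by
        rw [← hψΦ s hs1, ← hψΦ s' hs1', heq]
      obtain ⟨n, hn⟩ := Complex.exp_eq_exp_iff_exists_int.1 e
      have him := congrArg Complex.im hn
      simp at him
      have hn0 : n = 0 := by
        by_contra hne
        have h3 : (1 : ℝ) ≤ |(n : ℝ)| := by exact_mod_cast Int.one_le_abs hne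
        have h4 : |(n : ℝ) * (2 * Real.pi)| < 2 := by
          rw [abs_lt]; constructor <;> linarith
        rw [abs_mul, abs_of_pos Real.two_pi_pos] at h4
        nlinarith [Real.pi_gt_three]
      rw [hn0] at hn
      simpa using hn
    · have h2 := (cs_psi_inf hb has).eventually_gt_atTop (Real.exp 1)
      have h3 : Bornology.IsBounded {z | Real.exp 1 < ‖ψ z‖}ᶜ := by
        rw [Bornology.isBounded_def, compl_compl]; exact h2
      refine h3.subset ?_
      rintro _ ⟨s, ⟨hs1, hs2, -, -⟩, rfl⟩ hlt
      have h4 : Real.exp 1 < ‖ψ (Φ s)‖ := hlt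
      rw [hψΦ s hs1, Complex.norm_exp, Real.exp_lt_exp] at h4
      linarith
  have hcl : closure A = {s : ℂ | 0 ≤ s.re} := Complex.closure_setOfPred_lt_re 0
  have hlim' : ∀ s ∈ closure A, ∃ y, Filter.Tendsto Φ (𝓝[A] s) (𝓝 y) := by
    intro s hs
    rw [hcl] at hs
    have hs' : 0 ≤ s.re := hs
    rcases hs'.eq_or_lt with h0 | h0
    · have : s = ⟨0, s.im⟩ := Complex.ext h0.symm rfl
      rw [this]; exact hlim s.im
    · exact ⟨_, (hΦd s h0).continuousAt.tendsto.mono_left nhdsWithin_le_nhds⟩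
  have hgc : ContinuousOn (extendFrom A Φ) (closure A) :=
    continuousOn_extendFrom subset_rfl hlim'
  set β : ℝ → ℂ := fun t => extendFrom A Φ ⟨0, 2 * Real.pi * t⟩ with hβ
  have hβc : Continuous β := by
    refine hgc.comp_continuous (f := fun t : ℝ => (⟨0, 2 * Real.pi * t⟩ : ℂ)) ?_ ?_
    · have : (fun t : ℝ => (⟨0, 2 * Real.pi * t⟩ : ℂ)) =
          fun t : ℝ => ((2 * Real.pi * t : ℝ) : ℂ) * Complex.I := by
        funext t; rw [Complex.mk_eq_add_mul_I]; simp
      rw [this]; fun_prop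
    · intro t; rw [hcl]; exact le_refl (0 : ℝ)
  have hβlim : ∀ t : ℝ, Filter.Tendsto Φ (𝓝[A] ⟨0, 2 * Real.pi * t⟩) (𝓝 (β t)) :=
    fun t => tendsto_extendFrom (hlim _)
  have hradA : ∀ t : ℝ, Filter.Tendsto (fun ε : ℝ => (⟨ε, t⟩ : ℂ)) (𝓝[>] 0) (𝓝[A] ⟨0, t⟩) := by
    intro t
    refine tendsto_nhdsWithin_iff.2 ⟨?_, ?_⟩
    · have hc : Continuous fun ε : ℝ => (⟨ε, t⟩ : ℂ) := by
        have : (fun ε : ℝ => (⟨ε, t⟩ : ℂ)) = fun ε : ℝ => (ε : ℂ) + t * Complex.I := by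
          funext ε; rw [Complex.mk_eq_add_mul_I]
        rw [this]; fun_prop
      exact (hc.tendsto 0).mono_left nhdsWithin_le_nhds
    · filter_upwards [self_mem_nhdsWithin] with ε hε
      exact hε
  have hrad : ∀ t : ℝ, Filter.Tendsto (fun ε : ℝ => Φ ⟨ε, 2 * Real.pi * t⟩) (𝓝[>] 0) (𝓝 (β t)) :=
    fun t => (hβlim t).comp (hradA _)
  have hper : Periodic β 1 := by
    intro t
    refine tendsto_nhds_unique (hrad (t + 1)) ((hrad t).congr fun ε => ?_)
    apply hΦper
    rw [Complex.exp_eq_exp_iff_exists_int]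
    refine ⟨-1, ?_⟩
    apply Complex.ext
    · simp
    · simp; ring
  have hsemi : ∀ t : ℝ, f (β t) = β (d * t) := by
    intro t
    have e1 := (hfd.continuous.tendsto (β t)).comp (hrad t)
    have hdpos : (0 : ℝ) < d := by
      have : 0 < d := by omega
      exact_mod_cast this
    have e2 : Filter.Tendsto (fun ε : ℝ => (d : ℝ) * ε) (𝓝[>] 0) (𝓝[>] 0) := by
      refine tendsto_nhdsWithin_iff.2 ⟨?_, ?_⟩
      · have hc : Continuous fun ε : ℝ => (d : ℝ) * ε := by fun_prop
        simpa using (hc.tendsto 0).mono_left nhdsWithin_le_nhds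
      · filter_upwards [self_mem_nhdsWithin] with ε hε
        exact mul_pos hdpos hε
    refine tendsto_nhds_unique e1 (((hrad (d * t)).comp e2).congr' ?_)
    filter_upwards [self_mem_nhdsWithin] with ε hε
    have hε' : (0 : ℝ) < ε := hε
    simp only [comp_apply]
    rw [hfΦ _ hε']
    congr 1
    apply Complex.ext
    · simp
    · simp; ring
  have hβJ : ∀ t, β t ∈ frontier K := by
    intro t
    rw [frontier_eq_closure_inter_closure]
    have hev : ∀ᶠ ε : ℝ in 𝓝[>] 0, Φ ⟨ε, 2 * Real.pi * t⟩ ∈ Kᶜ := by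
      filter_upwards [self_mem_nhdsWithin] with ε hε
      exact hΦK _ hε
    refine ⟨subset_closure ?_, mem_closure_of_tendsto (hrad t) hev⟩
    by_contra hnK
    obtain ⟨V, hV, ρ, hρ, hVρ⟩ := hbd _ hnK
    have h3 : ∀ᶠ ε : ℝ in 𝓝[>] 0, ε < ρ :=
      (gt_mem_nhds hρ : ∀ᶠ ε : ℝ in 𝓝 0, ε < ρ).filter_mono nhdsWithin_le_nhds
    obtain ⟨ε, ⟨hε1, hε2⟩, hε3⟩ :=
      ((((hrad t).eventually hV).and h3).and self_mem_nhdsWithin).exists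
    exact hVρ ⟨ε, 2 * Real.pi * t⟩ hε3 hε2 hε1
  have hβsurj : ∀ v ∈ frontier K, ∃ t, β t = v := by
    intro v hv
    have hvK : v ∈ K := hK.isClosed.frontier_subset hv
    rw [frontier_eq_closure_inter_closure] at hv
    obtain ⟨z, hzK, hzv⟩ := mem_closure_iff_seq_limit.1 hv.2
    obtain ⟨C, hC⟩ := (Metric.isBounded_range_of_tendsto z hzv).exists_norm_le
    obtain ⟨B, hB⟩ := cs_psi_bdd (R := max C R) hd hfd (hR1.trans (le_max_right _ _))
      (fun z hz => hR z ((le_max_right _ _).trans hz)) hψ hfun h1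
    set s : ℕ → ℂ := fun n => Complex.log (ψ (z n)) with hs
    have hsA : ∀ n, s n ∈ A := fun n => (hΦlog _ (hzK n)).1
    have hsΦ : ∀ n, Φ (s n) = z n := fun n => (hΦlog _ (hzK n)).2
    have hsC : ∀ n, s n ∈ Icc 0 (Real.log B) ×ℂ Icc (-Real.pi) Real.pi := by
      intro n
      refine ⟨⟨le_of_lt (hsA n), ?_⟩, ⟨(Complex.neg_pi_lt_log_im _).le, Complex.log_im_le_pi _⟩⟩
      show (Complex.log (ψ (z n))).re ≤ _
      rw [Complex.log_re]
      exact Real.log_le_log (one_pos.trans (h1 _ (hzK n)))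
        (hB _ (hzK n) ((hC _ ⟨n, rfl⟩).trans (le_max_left _ _)))
    obtain ⟨s0, hs0, φ, hφ, hsl⟩ := (isCompact_Icc.reProdIm isCompact_Icc).tendsto_subseq hsC
    have hzl : Filter.Tendsto (fun n => Φ (s (φ n))) Filter.atTop (𝓝 v) :=
      (hzv.comp hφ.tendsto_atTop).congr fun n => (hsΦ (φ n)).symm
    have hs0re : 0 ≤ s0.re := hs0.1.1
    rcases hs0re.eq_or_lt with h0 | h0
    · refine ⟨s0.im / (2 * Real.pi), ?_⟩
      have e : (⟨0, 2 * Real.pi * (s0.im / (2 * Real.pi))⟩ : ℂ) = s0 := by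
        rw [mul_div_cancel₀ _ Real.two_pi_pos.ne']
        exact Complex.ext h0 rfl
      have h5 := hβlim (s0.im / (2 * Real.pi))
      rw [e] at h5
      have h6 : Filter.Tendsto (fun n => s (φ n)) Filter.atTop (𝓝[A] s0) :=
        tendsto_nhdsWithin_iff.2 ⟨hsl, Filter.Eventually.of_forall fun n => hsA _⟩
      exact tendsto_nhds_unique (h5.comp h6) hzl
    · exfalso
      have h5 := (hΦd s0 h0).continuousAt.tendsto.comp hsl
      have h6 := tendsto_nhds_unique h5 hzl
      exact hΦK s0 h0 (h6 ▸ hvK)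
  have hsurjq : ∀ θ : AddCircle (1 : ℝ), ∃ t : ℝ, (t : AddCircle (1 : ℝ)) = θ :=
    fun θ => QuotientAddGroup.mk_surjective θ
  refine ⟨hper.lift, ?_, ?_, ?_⟩
  · exact hβc.quotient_lift _
  · ext v
    constructor
    · rintro ⟨θ, rfl⟩
      obtain ⟨t, rfl⟩ := hsurjq θ
      rw [Periodic.lift_coe]
      exact hβJ t
    · intro hv
      obtain ⟨t, rfl⟩ := hβsurj v hv
      exact ⟨(t : AddCircle (1 : ℝ)), Periodic.lift_coe hper t⟩
  · intro θ
    obtain ⟨t, rfl⟩ := hsurjq θ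
    rw [← AddCircle.coe_nsmul, Periodic.lift_coe, Periodic.lift_coe, hsemi, nsmul_eq_mul]
end

section
/- Let f : ℂ → ℂ be the evaluation map of a polynomial of degree d ≥ 2. If W ⊆ ℂ is a bounded open set whose frontier satisfies ∂W ⊆ K_f, then W ⊆ K_f. -/
open Function Set Topology

/-- A bounded open set whose frontier lies in the filled Julia set is contained in it. -/
theorem open_subset_of_frontier_subset_filledJulia (p : Polynomial ℂ) (d : ℕ)
    (hd : 2 ≤ d) (hdeg : p.natDegree = d) (f : ℂ → ℂ) (hf : ∀ z, f z = p.eval z)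
    (W : Set ℂ) (hWopen : IsOpen W) (hWbdd : Bornology.IsBounded W)
    (hWfr : frontier W ⊆ filledJulia f) :
    W ⊆ filledJulia f := by
  have hq : 0 < p.divX.degree := by
    rw [← Polynomial.natDegree_pos_iff_degree_pos, Polynomial.natDegree_divX_eq_natDegree_tsub_one]
    omega
  have hT := p.divX.tendsto_norm_atTop hq (tendsto_norm_cocompact_atTop (E := ℂ))
  have hev := hT.eventually_ge_atTop 3
  rw [← Metric.cobounded_eq_cocompact, ← comap_norm_atTop, Filter.eventually_comap] at hev
  obtain ⟨R₀, hR₀⟩ := Filter.eventually_atTop.1 hev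
  obtain ⟨R, hR1, hR2, hR3⟩ : ∃ R : ℝ, R₀ ≤ R ∧ ‖p.coeff 0‖ ≤ R ∧ 1 ≤ R :=
    ⟨max R₀ (max ‖p.coeff 0‖ 1), by simp, by simp, by simp⟩
  have hexp : ∀ z : ℂ, R < ‖z‖ → 2 * ‖z‖ ≤ ‖f z‖ := by
    intro z hz
    have h3 : 3 ≤ ‖p.divX.eval z‖ := hR₀ ‖z‖ (by linarith) z rfl
    have he : f z = p.divX.eval z * z + p.coeff 0 := by
      rw [hf]
      conv_lhs => rw [← p.divX_mul_X_add]
      simp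
    have h4 : ‖p.divX.eval z * z‖ ≤ ‖f z‖ + ‖p.coeff 0‖ := by
      have : p.divX.eval z * z = f z - p.coeff 0 := by rw [he]; ring
      rw [this]; exact norm_sub_le _ _
    rw [norm_mul] at h4
    nlinarith [norm_nonneg z]
  have hiter : ∀ (z : ℂ), R < ‖z‖ → ∀ k : ℕ, 2 ^ k * ‖z‖ ≤ ‖f^[k] z‖ := by
    intro z hz k
    induction k with
    | zero => simp
    | succ k ih =>
      have h1 : (1 : ℝ) ≤ 2 ^ k := one_le_pow₀ (by norm_num)
      have h2 : R < ‖f^[k] z‖ := by nlinarith [norm_nonneg z]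
      have h3 := hexp _ h2
      rw [Function.iterate_succ_apply', pow_succ]
      linarith
  have hK : ∀ w ∈ filledJulia f, ∀ n : ℕ, ‖f^[n] w‖ ≤ R := by
    intro w hw n
    by_contra! hn
    change Bornology.IsBounded (Set.range fun n => f^[n] w) at hw
    obtain ⟨C, hC⟩ := hw.exists_norm_le
    obtain ⟨k, hk⟩ := pow_unbounded_of_one_lt C (one_lt_two (α := ℝ))
    have h1 := hiter _ hn k
    rw [← Function.iterate_add_apply] at h1
    have h2 := hC _ ⟨k + n, rfl⟩
    have h3 : (0 : ℝ) < 2 ^ k := by positivity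
    simp only at h2
    nlinarith
  have hdf : Differentiable ℂ f := by
    have : f = fun z => p.eval z := funext hf
    rw [this]; exact p.differentiable
  intro z hz
  change Bornology.IsBounded (Set.range fun n => f^[n] z)
  refine isBounded_iff_forall_norm_le.2 ⟨R, ?_⟩
  rintro _ ⟨n, rfl⟩
  exact Complex.norm_le_of_forall_mem_frontier_norm_le hWbdd (hdf.iterate n).diffContOnCl
    (fun w hw => hK w (hWfr hw) n) (subset_closure hz)
end

section
/- Let f : ℂ → ℂ be the evaluation map of a polynomial of degree d ≥ 2. For every z₀ ∈ J_f, the set of iterated preimages {z ∈ ℂ : there exists n ≥ 0 with f^[n](z) = z₀} is dense in the Julia set, i.e., J_f is contained in the closure of this set. -/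
open Function Set Topology

lemma aux_le {l : Filter ℕ} [l.NeBot] (hl : l ≤ Filter.atTop) {d : ℕ} (hd : 2 ≤ d)
    {a b : ℕ → ℝ} {A B C : ℝ} (ha0 : ∀ n, 0 ≤ a n) (hb0 : ∀ n, 0 ≤ b n)
    (ha : Filter.Tendsto a l (𝓝 A)) (hb : Filter.Tendsto b l (𝓝 B))
    (h : ∀ᶠ n in l, a n ^ (d ^ n) ≤ C * b n ^ (d ^ n)) : A ≤ B := by
  by_contra! hlt
  have hB0 : 0 ≤ B := ge_of_tendsto' hb hb0
  obtain ⟨s, hs1, hs2⟩ := exists_between hlt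
  obtain ⟨t, ht1, ht2⟩ := exists_between hs2
  have hs0 : 0 < s := lt_of_le_of_lt hB0 hs1
  have h1 : 1 < t / s := by rwa [one_lt_div hs0]
  have h2 : Filter.Tendsto (fun n : ℕ => (t / s) ^ (d ^ n)) l Filter.atTop :=
    ((tendsto_pow_atTop_atTop_of_one_lt h1).comp
      (tendsto_pow_atTop_atTop_of_one_lt (by omega : 1 < d))).mono_left hl
  have := h2.eventually_gt_atTop |C|
  obtain ⟨n, h3, h4, h5, h6⟩ := (this.and (h.and ((ha.eventually_const_lt ht2).and
    (hb.eventually_lt_const hs1)))).exists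
  rw [div_pow, lt_div_iff₀ (by positivity)] at h3
  have h7 : t ^ d ^ n ≤ a n ^ d ^ n := pow_le_pow_left₀ (by linarith) h5.le _
  have h8 : b n ^ d ^ n ≤ s ^ d ^ n := pow_le_pow_left₀ (hb0 n) h6.le _
  have h9 : C * b n ^ d ^ n ≤ |C| * s ^ d ^ n := by
    calc C * b n ^ d ^ n ≤ |C| * b n ^ d ^ n :=
          mul_le_mul_of_nonneg_right (le_abs_self C) (pow_nonneg (hb0 n) _)
      _ ≤ _ := mul_le_mul_of_nonneg_left h8 (abs_nonneg C)
  linarith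

/-- Montel's theorem along an ultrafilter. -/
lemma montel_ultra (l : Ultrafilter ℕ) (c : ℂ) (r M : ℝ) (e : ℕ → ℂ → ℂ)
    (hd : ∀ n, DifferentiableOn ℂ (e n) (Metric.ball c r))
    (hM : ∀ n, ∀ z ∈ Metric.ball c r, ‖e n z‖ ≤ M) :
    ∃ E : ℂ → ℂ, DifferentiableOn ℂ E (Metric.ball c r) ∧
      ∀ z ∈ Metric.ball c r, Filter.Tendsto (fun n => e n z) l (𝓝 (E z)) := by
  have hex : ∀ z, ∃ y, z ∈ Metric.ball c r → Filter.Tendsto (fun n => e n z) l (𝓝 y) := by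
    intro z
    by_cases hz : z ∈ Metric.ball c r
    · have hc : IsCompact (Metric.closedBall (0 : ℂ) M) := isCompact_closedBall _ _
      obtain ⟨y, -, hy⟩ := hc.ultrafilter_le_nhds (l.map (fun n => e n z)) (by
        rw [Filter.le_principal_iff]
        refine Ultrafilter.mem_map.2 ?_
        exact Filter.univ_mem' fun n => by simpa using hM n z hz)
      exact ⟨y, fun _ => hy⟩
    · exact ⟨0, fun h => absurd h hz⟩
  choose E hE using hex
  refine ⟨E, ?_, hE⟩
  have hloc : TendstoLocallyUniformlyOn e E (l : Filter ℕ) (Metric.ball c r) := by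
    rw [Metric.tendstoLocallyUniformlyOn_iff]
    intro ε hε x hx
    obtain ⟨ρ, hρ, hsub⟩ := Metric.isOpen_ball.mem_nhds hx |> Metric.mem_nhds_iff.1
    have hM0 : 0 ≤ M := (norm_nonneg _).trans (hM 0 x hx)
    have hlip : ∀ n, ∀ y ∈ Metric.ball x ρ, dist (e n y) (e n x) ≤ (2 * M) / ρ * dist y x := by
      intro n y hy
      refine Complex.dist_le_div_mul_dist_of_mapsTo_ball ((hd n).mono hsub) ?_ hy
      intro w hw
      rw [Metric.mem_closedBall, dist_eq_norm]
      have := norm_sub_le (e n w) (e n x)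
      have := hM n w (hsub hw)
      have := hM n x hx
      linarith
    have hlim : ∀ y ∈ Metric.ball x ρ, dist (E y) (E x) ≤ (2 * M) / ρ * dist y x := by
      intro y hy
      exact le_of_tendsto' ((hE y (hsub hy)).dist (hE x hx)) (fun n => hlip n y hy)
    have hδ : 0 < min ρ (ε / 3 / ((2 * M) / ρ + 1)) := by positivity
    refine ⟨Metric.ball x (min ρ (ε / 3 / ((2 * M) / ρ + 1))),
      mem_nhdsWithin_of_mem_nhds (Metric.ball_mem_nhds _ hδ), ?_⟩
    filter_upwards [(Metric.tendsto_nhds.1 (hE x hx)) (ε / 3) (by positivity)] with n hn y hy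
    rw [Metric.mem_ball, lt_min_iff] at hy
    have h1 := hlip n y hy.1
    have h2 := hlim y hy.1
    have h3 : (2 * M) / ρ * dist y x ≤ ε / 3 := by
      have h4 := hy.2
      rw [lt_div_iff₀ (by positivity)] at h4
      nlinarith [dist_nonneg (x := y) (y := x)]
    have h5 := dist_triangle4 (E y) (E x) (e n x) (e n y)
    rw [dist_comm (E x), dist_comm (e n x) (e n y)] at h5
    linarith
  exact hloc.differentiableOn (Filter.Eventually.of_forall hd) Metric.isOpen_ball

lemma exists_root (c : ℂ) (r : ℝ) (g : ℂ → ℂ) (hg : DifferentiableOn ℂ g (Metric.ball c r))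
    (h0 : ∀ z ∈ Metric.ball c r, g z ≠ 0) (k : ℕ) (hk : k ≠ 0) :
    ∃ e : ℂ → ℂ, DifferentiableOn ℂ e (Metric.ball c r) ∧
      ∀ z ∈ Metric.ball c r, e z ^ k = g z := by
  by_cases hr : 0 < r
  swap
  · refine ⟨0, by simp [Metric.ball_eq_empty.2 (not_lt.1 hr)], ?_⟩
    simp [Metric.ball_eq_empty.2 (not_lt.1 hr)]
  have hc : c ∈ Metric.ball c r := Metric.mem_ball_self hr
  have hq : DifferentiableOn ℂ (fun z => deriv g z / g z) (Metric.ball c r) :=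
    (hg.deriv Metric.isOpen_ball).div hg h0
  obtain ⟨h, hh⟩ : ∃ h : ℂ → ℂ, ∀ z ∈ Metric.ball c r, HasDerivAt h (deriv g z / g z) z :=
    hq.isExactOn_ball
  have hgd : ∀ z ∈ Metric.ball c r, HasDerivAt g (deriv g z) z := fun z hz =>
    (hg.differentiableAt (Metric.isOpen_ball.mem_nhds hz)).hasDerivAt
  have hder : ∀ z ∈ Metric.ball c r, HasDerivAt (fun z => g z * Complex.exp (-h z)) 0 z := by
    intro z hz
    have h1 := (hgd z hz).mul ((hh z hz).neg.cexp)
    have h2 : deriv g z * Complex.exp ((-h) z) +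
        g z * (Complex.exp ((-h) z) * -(deriv g z / g z)) = 0 := by
      have := h0 z hz
      field_simp
      ring
    rw [h2] at h1
    exact h1
  have hconst : ∀ z ∈ Metric.ball c r, g z * Complex.exp (-h z) = g c * Complex.exp (-h c) := by
    intro z hz
    refine Metric.isOpen_ball.is_const_of_deriv_eq_zero (convex_ball c r).isPreconnected
      (fun w hw => (hder w hw).differentiableAt.differentiableWithinAt)
      (fun w hw => (hder w hw).deriv) hz hc
  obtain ⟨a, ha⟩ := IsAlgClosed.exists_pow_nat_eq (g c * Complex.exp (-h c)) (Nat.pos_of_ne_zero hk)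
  refine ⟨fun z => a * Complex.exp (h z / k), ?_, ?_⟩
  · intro z hz
    have := (hh z hz).differentiableAt
    exact (DifferentiableAt.const_mul (this.div_const _).cexp a).differentiableWithinAt
  · intro z hz
    have hk' : (k : ℂ) ≠ 0 := by exact_mod_cast hk
    rw [mul_pow, ha, ← hconst z hz, ← Complex.exp_nat_mul, mul_div_cancel₀ _ hk', mul_assoc,
      ← Complex.exp_add]
    simp

lemma upper_bound (p : Polynomial ℂ) (d : ℕ) (hdeg : p.natDegree = d) :
    ∃ C : ℝ, 1 ≤ C ∧ ∀ z, ‖p.eval z‖ ≤ C * (max 1 ‖z‖) ^ d := by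
  refine ⟨1 + ∑ i ∈ Finset.range (d + 1), ‖p.coeff i‖, by
    have : 0 ≤ ∑ i ∈ Finset.range (d + 1), ‖p.coeff i‖ := by positivity
    linarith, fun z => ?_⟩
  have h1 : 1 ≤ max 1 ‖z‖ := le_max_left _ _
  rw [Polynomial.eval_eq_sum_range, hdeg, add_mul, Finset.sum_mul]
  have h2 : 0 ≤ 1 * (max 1 ‖z‖) ^ d := by positivity
  refine (norm_sum_le _ _).trans (le_trans (Finset.sum_le_sum fun i hi => ?_)
    (le_add_of_nonneg_left h2))
  rw [norm_mul, norm_pow]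
  refine mul_le_mul_of_nonneg_left ?_ (norm_nonneg _)
  calc ‖z‖ ^ i ≤ (max 1 ‖z‖) ^ i := pow_le_pow_left₀ (norm_nonneg _) (le_max_right _ _) _
    _ ≤ _ := pow_le_pow_right₀ h1 (by have := Finset.mem_range.1 hi; omega)

lemma lower_bound (p : Polynomial ℂ) (d : ℕ) (hd : 2 ≤ d) (hdeg : p.natDegree = d) :
    ∃ c R : ℝ, 0 < c ∧ c ≤ 1 ∧ 1 ≤ R ∧ 2 ≤ c * R ∧ ∀ z, R ≤ ‖z‖ → c * ‖z‖ ^ d ≤ ‖p.eval z‖ := by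
  obtain ⟨m, rfl⟩ : ∃ m, d = m + 1 := ⟨d - 1, by omega⟩
  set S := ∑ i ∈ Finset.range (m + 1), ‖p.coeff i‖ with hS
  have hS0 : 0 ≤ S := by positivity
  have ha : p.coeff (m + 1) ≠ 0 := by
    rw [← hdeg]
    intro h
    have : p = 0 := Polynomial.leadingCoeff_eq_zero.1 h
    rw [this] at hdeg
    simp at hdeg
  have ha' : 0 < ‖p.coeff (m + 1)‖ := norm_pos_iff.2 ha
  set a := ‖p.coeff (m + 1)‖
  have hc : 0 < min 1 (a / 2) := by positivity
  set c := min 1 (a / 2)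
  refine ⟨c, max 1 (max (2 / c) (2 * S / a)), hc, min_le_left _ _, le_max_left _ _, ?_, ?_⟩
  · have : 2 / c ≤ max 1 (max (2 / c) (2 * S / a)) := (le_max_left _ _).trans (le_max_right _ _)
    rw [div_le_iff₀ hc] at this
    linarith
  · intro z hz
    have h1 : 1 ≤ ‖z‖ := (le_max_left _ _).trans hz
    have h2 : 2 * S / a ≤ ‖z‖ := ((le_max_right _ _).trans (le_max_right _ _)).trans hz
    rw [div_le_iff₀ ha'] at h2
    have h3 : ‖∑ i ∈ Finset.range (m + 1), p.coeff i * z ^ i‖ ≤ S * ‖z‖ ^ m := by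
      rw [hS, Finset.sum_mul]
      refine (norm_sum_le _ _).trans (Finset.sum_le_sum fun i hi => ?_)
      rw [norm_mul, norm_pow]
      refine mul_le_mul_of_nonneg_left ?_ (norm_nonneg _)
      exact pow_le_pow_right₀ h1 (by have := Finset.mem_range.1 hi; omega)
    rw [Polynomial.eval_eq_sum_range, hdeg, Finset.sum_range_succ]
    have h4 : ‖p.coeff (m + 1) * z ^ (m + 1)‖ = a * ‖z‖ ^ (m + 1) := by rw [norm_mul, norm_pow]
    have h5 := norm_sub_norm_le (p.coeff (m + 1) * z ^ (m + 1))
      (-∑ i ∈ Finset.range (m + 1), p.coeff i * z ^ i)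
    rw [sub_neg_eq_add, norm_neg, add_comm (p.coeff _ * _), h4] at h5
    have h6 : c ≤ a / 2 := min_le_right _ _
    have h7 : 0 ≤ ‖z‖ ^ m := by positivity
    have h8 : c * ‖z‖ ^ (m + 1) ≤ a / 2 * ‖z‖ ^ (m + 1) :=
      mul_le_mul_of_nonneg_right h6 (by positivity)
    have h9 : S * ‖z‖ ^ m ≤ a / 2 * ‖z‖ ^ (m + 1) := by
      rw [pow_succ]
      nlinarith [mul_le_mul_of_nonneg_right h2 h7]
    linarith

lemma iter_upper {f : ℂ → ℂ} {C : ℝ} {d : ℕ} (hd : 2 ≤ d) (hC : 1 ≤ C)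
    (h : ∀ z, ‖f z‖ ≤ C * (max 1 ‖z‖) ^ d) (z : ℂ) (n : ℕ) :
    C * max 1 ‖f^[n] z‖ ≤ (C * max 1 ‖z‖) ^ (d ^ n) := by
  induction n with
  | zero => simp
  | succ n ih =>
    rw [iterate_succ_apply', pow_succ, pow_mul]
    set m := max 1 ‖f^[n] z‖
    have hm : 1 ≤ m := le_max_left _ _
    have h1 : max 1 ‖f (f^[n] z)‖ ≤ C * m ^ d := by
      refine max_le ?_ (h _)
      nlinarith [one_le_pow₀ hm (n := d)]
    calc C * max 1 ‖f (f^[n] z)‖ ≤ C * (C * m ^ d) :=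
          mul_le_mul_of_nonneg_left h1 (by linarith)
      _ = C ^ 2 * m ^ d := by ring
      _ ≤ C ^ d * m ^ d := mul_le_mul_of_nonneg_right (pow_le_pow_right₀ hC hd) (by positivity)
      _ = (C * m) ^ d := by ring
      _ ≤ _ := pow_le_pow_left₀ (by positivity) ih _

lemma iter_lower {f : ℂ → ℂ} {c R : ℝ} {d : ℕ} (hd : 2 ≤ d) (hc : 0 < c) (hc1 : c ≤ 1)
    (hR : 1 ≤ R) (hcR : 2 ≤ c * R)
    (h : ∀ z, R ≤ ‖z‖ → c * ‖z‖ ^ d ≤ ‖f z‖) (z : ℂ) (hz : R ≤ ‖z‖) (n : ℕ) :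
    (2 : ℝ) ^ (d ^ n) ≤ ‖f^[n] z‖ := by
  have key : R ≤ ‖f^[n] z‖ ∧ (2 : ℝ) ^ (d ^ n) ≤ c * ‖f^[n] z‖ := by
    induction n with
    | zero => exact ⟨hz, by simpa using hcR.trans (mul_le_mul_of_nonneg_left hz hc.le)⟩
    | succ n ih =>
      rw [iterate_succ_apply', pow_succ, pow_mul]
      obtain ⟨h1, h2⟩ := ih
      set w := f^[n] z
      have h3 := h w h1
      have hw : 1 ≤ ‖w‖ := hR.trans h1
      have h4 : ‖w‖ ^ 2 ≤ ‖w‖ ^ d := pow_le_pow_right₀ hw hd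
      have h5 : c ^ d ≤ c ^ 2 := pow_le_pow_of_le_one hc.le hc1 hd
      have h6 : 2 ≤ c * ‖w‖ := hcR.trans (mul_le_mul_of_nonneg_left h1 hc.le)
      constructor
      · have := mul_le_mul_of_nonneg_left h4 hc.le
        nlinarith
      · calc ((2 : ℝ) ^ d ^ n) ^ d ≤ (c * ‖w‖) ^ d := pow_le_pow_left₀ (by positivity) h2 _
          _ = c ^ d * ‖w‖ ^ d := by ring
          _ ≤ c ^ 2 * ‖w‖ ^ d := mul_le_mul_of_nonneg_right h5 (by positivity)
          _ = c * (c * ‖w‖ ^ d) := by ring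
          _ ≤ _ := mul_le_mul_of_nonneg_left h3 hc.le
  refine key.2.trans ?_
  nlinarith [norm_nonneg (f^[n] z), key.2]

lemma escape_tendsto {f : ℂ → ℂ} {R : ℝ} {d : ℕ} (hd : 2 ≤ d)
    (hesc : ∀ z, R ≤ ‖z‖ → ∀ n, (2 : ℝ) ^ (d ^ n) ≤ ‖f^[n] z‖) {z : ℂ} {N : ℕ}
    (hN : R ≤ ‖f^[N] z‖) : Filter.Tendsto (fun n => ‖f^[n] z‖) Filter.atTop Filter.atTop := by
  have h2 : Filter.Tendsto (fun n : ℕ => (2 : ℝ) ^ (d ^ n)) Filter.atTop Filter.atTop :=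
    (tendsto_pow_atTop_atTop_of_one_lt (by norm_num)).comp
      (tendsto_pow_atTop_atTop_of_one_lt (by omega : 1 < d))
  have h3 : Filter.Tendsto (fun n => ‖f^[n + N] z‖) Filter.atTop Filter.atTop := by
    refine Filter.tendsto_atTop_mono (fun n => ?_) h2
    rw [iterate_add_apply]
    exact hesc _ hN n
  exact (Filter.tendsto_add_atTop_iff_nat (f := fun n => ‖f^[n] z‖) N).1 h3

lemma mem_filled {f : ℂ → ℂ} {z : ℂ} :
    z ∈ filledJulia f ↔ Bornology.IsBounded (Set.range fun n => f^[n] z) := Iff.rfl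

lemma notMem_iff {f : ℂ → ℂ} {R : ℝ} {d : ℕ} (hd : 2 ≤ d)
    (hesc : ∀ z, R ≤ ‖z‖ → ∀ n, (2 : ℝ) ^ (d ^ n) ≤ ‖f^[n] z‖) (z : ℂ) :
    z ∉ filledJulia f ↔ ∃ N, R < ‖f^[N] z‖ := by
  constructor
  · intro h
    by_contra! hcon
    refine h (mem_filled.2 (isBounded_iff_forall_norm_le.2 ⟨R, ?_⟩))
    rintro _ ⟨n, rfl⟩
    exact hcon n
  · rintro ⟨N, hN⟩ hz
    obtain ⟨B, hB⟩ := isBounded_iff_forall_norm_le.1 (mem_filled.1 hz)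
    obtain ⟨n, hn⟩ := ((escape_tendsto hd hesc hN.le).eventually_gt_atTop B).exists
    exact absurd (hB _ ⟨n, rfl⟩) (not_le.2 hn)

/-- Growth in the basin of infinity. -/
lemma escape_growth {f : ℂ → ℂ} {R : ℝ} {d : ℕ} (hd : 2 ≤ d)
    (hesc : ∀ z, R ≤ ‖z‖ → ∀ n, (2 : ℝ) ^ (d ^ n) ≤ ‖f^[n] z‖) {z : ℂ} {N : ℕ}
    (hN : R ≤ ‖f^[N] z‖) : ∃ γ : ℝ, 1 < γ ∧ ∀ n, N ≤ n → γ ^ (d ^ n) ≤ ‖f^[n] z‖ := by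
  have hdN : d ^ N ≠ 0 := pow_ne_zero _ (by omega)
  refine ⟨(2 : ℝ) ^ ((d ^ N : ℕ) : ℝ)⁻¹, ?_, fun n hn => ?_⟩
  · exact Real.one_lt_rpow (by norm_num) (by positivity)
  · obtain ⟨k, rfl⟩ := Nat.exists_eq_add_of_le hn
    rw [pow_add d, pow_mul, Real.rpow_inv_natCast_pow (by norm_num) hdN, add_comm,
      iterate_add_apply]
    exact hesc _ hN k

lemma core {f : ℂ → ℂ} {C R : ℝ} {d : ℕ} (hd : 2 ≤ d) (hf : Differentiable ℂ f) (hC : 1 ≤ C)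
    (hup : ∀ z, ‖f z‖ ≤ C * (max 1 ‖z‖) ^ d)
    (hesc : ∀ z, R ≤ ‖z‖ → ∀ n, (2 : ℝ) ^ (d ^ n) ≤ ‖f^[n] z‖)
    (z₁ : ℂ) (r : ℝ) (hr : 0 < r) (hz₁ : z₁ ∈ filledJulia f) (b : ℂ)
    (hb : b ∈ Metric.ball z₁ r) (hbK : b ∉ filledJulia f) (w : Bool → ℂ)
    (hw : w true ≠ w false)
    (hom : ∀ i n, ∀ z ∈ Metric.ball z₁ r, f^[n] z ≠ w i) : False := by
  set U := Metric.ball z₁ r with hU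
  have hUo : IsOpen U := Metric.isOpen_ball
  have hUc : IsPreconnected U := (convex_ball z₁ r).isPreconnected
  have hz₁U : z₁ ∈ U := Metric.mem_ball_self hr
  have hfn : ∀ n, Differentiable ℂ (f^[n]) := fun n => hf.iterate n
  have hdn : ∀ n, d ^ n ≠ 0 := fun n => pow_ne_zero _ (by omega)
  have hex : ∀ i n, ∃ e : ℂ → ℂ, DifferentiableOn ℂ e U ∧
      ∀ z ∈ U, e z ^ (d ^ n) = f^[n] z - w i := fun i n =>
    exists_root z₁ r (fun z => f^[n] z - w i) ((hfn n).sub_const _).differentiableOn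
      (fun z hz => sub_ne_zero.2 (hom i n z hz)) _ (hdn n)
  choose e hed hep using hex
  have hnorm : ∀ i n, ∀ z ∈ U, ‖e i n z‖ ^ (d ^ n) = ‖f^[n] z - w i‖ := fun i n z hz => by
    rw [← norm_pow, hep i n z hz]
  -- uniform bound
  have hbd : ∀ i, ∃ M, ∀ n, ∀ z ∈ U, ‖e i n z‖ ≤ M := by
    intro i
    refine ⟨(1 + ‖w i‖) * (C * (1 + ‖z₁‖ + r)), fun n z hz => ?_⟩
    have h1 : 1 ≤ 1 + ‖w i‖ := by linarith [norm_nonneg (w i)]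
    have hz' : max 1 ‖z‖ ≤ 1 + ‖z₁‖ + r := by
      have h3 : ‖z - z₁‖ < r := by rw [← dist_eq_norm]; exact hz
      have h4 := norm_add_le (z - z₁) z₁
      rw [sub_add_cancel] at h4
      refine max_le ?_ ?_ <;> linarith [norm_nonneg z₁]
    have hq := iter_upper hd hC hup z n
    have hm : 1 ≤ max 1 ‖f^[n] z‖ := le_max_left _ _
    have hm' : ‖f^[n] z‖ ≤ max 1 ‖f^[n] z‖ := le_max_right _ _
    have hpos : 0 ≤ 1 + ‖z₁‖ + r := by positivity
    refine le_of_pow_le_pow_left₀ (hdn n) (by positivity) ?_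
    rw [hnorm i n z hz, mul_pow]
    calc ‖f^[n] z - w i‖ ≤ ‖f^[n] z‖ + ‖w i‖ := norm_sub_le _ _
      _ ≤ (1 + ‖w i‖) * (C * max 1 ‖f^[n] z‖) := by
          have h5 : max 1 ‖f^[n] z‖ ≤ C * max 1 ‖f^[n] z‖ := le_mul_of_one_le_left (by linarith) hC
          nlinarith [norm_nonneg (w i)]
      _ ≤ (1 + ‖w i‖) ^ (d ^ n) * (C * (1 + ‖z₁‖ + r)) ^ (d ^ n) := by
          refine mul_le_mul (le_self_pow₀ h1 (hdn n)) (hq.trans ?_) (by positivity) (by positivity)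
          exact pow_le_pow_left₀ (by positivity)
            (mul_le_mul_of_nonneg_left hz' (by linarith)) _
  choose M hM using hbd
  let l : Ultrafilter ℕ := Filter.hyperfilter ℕ
  have hl : (l : Filter ℕ) ≤ Filter.atTop := by
    rw [← Nat.cofinite_eq_atTop]; exact Filter.hyperfilter_le_cofinite
  choose E hEd hE using fun i => montel_ultra l z₁ r (M i) (e i) (hed i) (hM i)
  have hEn : ∀ i, ∀ z ∈ U, Filter.Tendsto (fun n => ‖e i n z‖) l (𝓝 ‖E i z‖) :=
    fun i z hz => (hE i z hz).norm
  have hone : Filter.Tendsto (fun _ : ℕ => (1 : ℝ)) l (𝓝 1) := tendsto_const_nhds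
  -- in the basin
  have hbas_le : ∀ i j, ∀ z ∈ U, z ∉ filledJulia f → ‖E i z‖ ≤ ‖E j z‖ := by
    intro i j z hz hzK
    obtain ⟨N, hN⟩ := (notMem_iff hd hesc z).1 hzK
    refine aux_le (C := 2) hl hd (fun n => norm_nonneg _) (fun n => norm_nonneg _)
      (hEn i z hz) (hEn j z hz) ?_
    have := (escape_tendsto hd hesc hN.le).eventually_ge_atTop (2 * ‖w j‖ + ‖w i‖)
    filter_upwards [this.filter_mono hl] with n hn
    rw [hnorm i n z hz, hnorm j n z hz]
    have h1 := norm_sub_le (f^[n] z) (w i)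
    have h2 := norm_sub_norm_le (f^[n] z) (w j)
    linarith
  have hbas_gt : ∀ i, ∀ z ∈ U, z ∉ filledJulia f → 1 < ‖E i z‖ := by
    intro i z hz hzK
    obtain ⟨N, hN⟩ := (notMem_iff hd hesc z).1 hzK
    obtain ⟨γ, hγ, hg⟩ := escape_growth hd hesc hN.le
    refine lt_of_lt_of_le hγ ?_
    have hc : Filter.Tendsto (fun _ : ℕ => γ) l (𝓝 γ) := tendsto_const_nhds
    refine aux_le (C := 2) hl hd (fun n => by linarith) (fun n => norm_nonneg _)
      hc (hEn i z hz) ?_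
    have := (escape_tendsto hd hesc hN.le).eventually_ge_atTop (2 * ‖w i‖)
    filter_upwards [this.filter_mono hl, (Filter.eventually_ge_atTop N).filter_mono hl] with n hn hn'
    rw [hnorm i n z hz]
    have h1 := hg n hn'
    have h2 := norm_sub_norm_le (f^[n] z) (w i)
    linarith
  -- openness of the basin
  have hop : IsOpen (filledJulia f)ᶜ := by
    have : (filledJulia f)ᶜ = ⋃ N, {z | R < ‖f^[N] z‖} := by
      ext z
      simp only [mem_iUnion, mem_ofPred_eq]
      exact notMem_iff hd hesc z
    rw [this]
    exact isOpen_iUnion fun N => isOpen_lt continuous_const (hfn N).continuous.norm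
  -- the quotient is locally constant near b
  obtain ⟨ρ, hρ, hsub⟩ := Metric.mem_nhds_iff.1 ((hUo.inter hop).mem_nhds ⟨hb, hbK⟩)
  have hnz : ∀ i, ∀ z ∈ Metric.ball b ρ, E i z ≠ 0 := fun i z hz h0 => by
    have := hbas_gt i z (hsub hz).1 (hsub hz).2
    rw [h0, norm_zero] at this
    linarith
  have hq1 : ∀ z ∈ Metric.ball b ρ, ‖E true z / E false z‖ = 1 := fun z hz => by
    rw [norm_div, le_antisymm (hbas_le true false z (hsub hz).1 (hsub hz).2)
      (hbas_le false true z (hsub hz).1 (hsub hz).2)]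
    exact div_self (norm_ne_zero_iff.2 (hnz false z hz))
  have hbb : b ∈ Metric.ball b ρ := Metric.mem_ball_self hρ
  have hsub' : Metric.ball b ρ ⊆ U := fun z hz => (hsub hz).1
  have hqc : EqOn (fun z => E true z / E false z)
      (Function.const ℂ (E true b / E false b)) (Metric.ball b ρ) := by
    refine Complex.eqOn_of_isPreconnected_of_isMaxOn_norm (convex_ball b ρ).isPreconnected
      Metric.isOpen_ball (((hEd true).mono hsub').div ((hEd false).mono hsub') (hnz false)) hbb ?_
    intro z hz
    simp only [Function.comp_apply, mem_ofPred_eq]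
    rw [hq1 z hz, hq1 b hbb]
  set q := E true b / E false b with hq
  have hqn : ‖q‖ = 1 := hq1 b hbb
  have hev : E true =ᶠ[𝓝 b] fun z => q * E false z := by
    filter_upwards [Metric.ball_mem_nhds b hρ] with z hz
    have := hqc hz
    simp only [Function.const_apply] at this
    rw [← this, div_mul_cancel₀ _ (hnz false z hz)]
  have heq : EqOn (E true) (fun z => q * E false z) U :=
    ((hEd true).analyticOnNhd hUo).eqOn_of_preconnected_of_eventuallyEq
      (((hEd false).const_mul q).analyticOnNhd hUo) hUc hb hev
  have heqn : ∀ z ∈ U, ‖E true z‖ = ‖E false z‖ := fun z hz => by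
    rw [heq hz, norm_mul, hqn, one_mul]
  -- lower bound everywhere
  have hge : ∀ z ∈ U, 1 ≤ ‖E true z‖ := by
    intro z hz
    by_cases hzK : z ∈ filledJulia f
    · have hw' : 0 < ‖w true - w false‖ := norm_pos_iff.2 (sub_ne_zero.2 hw)
      have hmax : Filter.Tendsto (fun n => max ‖e true n z‖ ‖e false n z‖) l
          (𝓝 (max ‖E true z‖ ‖E false z‖)) := (hEn true z hz).max (hEn false z hz)
      rw [← heqn z hz, max_self] at hmax
      refine aux_le (C := 2 / ‖w true - w false‖) hl hd (fun n => zero_le_one)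
        (fun n => le_max_of_le_left (norm_nonneg _)) hone hmax ?_
      refine Filter.Eventually.of_forall fun n => ?_
      have h1 : ‖f^[n] z - w true‖ ≤ (max ‖e true n z‖ ‖e false n z‖) ^ (d ^ n) := by
        rw [← hnorm true n z hz]
        exact pow_le_pow_left₀ (norm_nonneg _) (le_max_left _ _) _
      have h2 : ‖f^[n] z - w false‖ ≤ (max ‖e true n z‖ ‖e false n z‖) ^ (d ^ n) := by
        rw [← hnorm false n z hz]
        exact pow_le_pow_left₀ (norm_nonneg _) (le_max_right _ _) _
      have h3 : ‖w true - w false‖ ≤ ‖f^[n] z - w true‖ + ‖f^[n] z - w false‖ := by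
        have := norm_sub_le (f^[n] z - w false) (f^[n] z - w true)
        rw [sub_sub_sub_cancel_left] at this
        linarith
      rw [one_pow, div_mul_eq_mul_div, one_le_div hw']
      linarith
    · exact (hbas_gt true z hz hzK).le
  have hle : ‖E true z₁‖ ≤ 1 := by
    obtain ⟨B, hB⟩ := isBounded_iff_forall_norm_le.1 (mem_filled.1 hz₁)
    refine aux_le (C := B + ‖w true‖) hl hd (fun n => norm_nonneg _) (fun n => zero_le_one)
      (hEn true z₁ hz₁U) hone ?_
    refine Filter.Eventually.of_forall fun n => ?_
    rw [hnorm true n z₁ hz₁U, one_pow, mul_one]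
    have h1 := norm_sub_le (f^[n] z₁) (w true)
    have h2 := hB _ ⟨n, rfl⟩
    simp only at h2
    linarith
  have hnz' : ∀ z ∈ U, E true z ≠ 0 := fun z hz h0 => by
    have := hge z hz
    rw [h0, norm_zero] at this
    linarith
  have hfin := Complex.norm_eqOn_of_isPreconnected_of_isMaxOn (f := fun z => (E true z)⁻¹) hUc hUo
    ((hEd true).inv hnz') hz₁U (by
      intro z hz
      simp only [Function.comp_apply, mem_ofPred_eq, norm_inv]
      exact inv_anti₀ (norm_pos_iff.2 (hnz' z₁ hz₁U)) (hle.trans (hge z hz))) hb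
  simp only [Function.comp_apply, Function.const_apply, norm_inv, inv_inj] at hfin
  have := hbas_gt true b hb hbK
  linarith

lemma other_preimage (p : Polynomial ℂ) (hd : 2 ≤ p.natDegree) (f : ℂ → ℂ)
    (hf : ∀ z, f z = p.eval z) (z₀ : ℂ) (hz₀ : z₀ ∉ interior (filledJulia f)) :
    ∃ w, w ≠ z₀ ∧ f w = z₀ := by
  by_contra! hcon
  have hroot : ∀ u, p.eval u = z₀ → u = z₀ := fun u hu => by
    by_contra h
    exact hcon u h (by rw [hf, hu])
  set P := p - Polynomial.C z₀ with hP
  have hPd : P.natDegree = p.natDegree := Polynomial.natDegree_sub_C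
  have hPe : ∀ z, P.eval z = p.eval z - z₀ := fun z => by simp [hP]
  obtain ⟨u, hu⟩ := Complex.exists_root (f := P)
    (Polynomial.natDegree_pos_iff_degree_pos.1 (by omega))
  have hu' : u = z₀ := hroot u (by
    have h : P.eval u = 0 := hu
    rw [hPe] at h
    exact sub_eq_zero.1 h)
  rw [hu'] at hu
  obtain ⟨Q, hQ⟩ := Polynomial.dvd_iff_isRoot.2 hu
  have hQ0 : Q ≠ 0 := by
    rintro rfl
    rw [mul_zero] at hQ
    rw [hQ] at hPd
    simp at hPd
    omega
  have hQd : P.natDegree = 1 + Q.natDegree := by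
    rw [hQ, Polynomial.natDegree_mul (Polynomial.X_sub_C_ne_zero _) hQ0,
      Polynomial.natDegree_X_sub_C]
  obtain ⟨v, hv⟩ := Complex.exists_root (f := Q)
    (Polynomial.natDegree_pos_iff_degree_pos.1 (by omega))
  have hv' : v = z₀ := hroot v (by
    have h : P.eval v = 0 := by
      have hv0 : Q.eval v = 0 := hv
      rw [hQ, Polynomial.eval_mul, hv0, mul_zero]
    rw [hPe] at h
    exact sub_eq_zero.1 h)
  rw [hv'] at hv
  obtain ⟨S, hS⟩ := Polynomial.dvd_iff_isRoot.2 hv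
  have hfe : ∀ z, f z - z₀ = (z - z₀) * ((z - z₀) * S.eval z) := fun z => by
    rw [hf, ← hPe, hQ, hS]
    simp
  have hcont : Filter.Tendsto (fun z => ‖(z - z₀) * S.eval z‖) (𝓝 z₀) (𝓝 0) := by
    have : Continuous fun z => ‖(z - z₀) * S.eval z‖ := by fun_prop
    simpa using this.tendsto z₀
  obtain ⟨ρ, hρ, hball⟩ := Metric.eventually_nhds_iff_ball.1
    (hcont.eventually_lt_const (zero_lt_one))
  refine hz₀ (mem_interior.2 ⟨Metric.ball z₀ ρ, fun z hz => ?_, Metric.isOpen_ball,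
    Metric.mem_ball_self hρ⟩)
  have hmem : ∀ n, f^[n] z ∈ Metric.ball z₀ ρ := by
    intro n
    induction n with
    | zero => exact hz
    | succ n ih =>
      rw [iterate_succ_apply', Metric.mem_ball, dist_eq_norm, hfe, norm_mul]
      have h1 := hball _ ih
      rw [Metric.mem_ball, dist_eq_norm] at ih
      nlinarith [norm_nonneg (f^[n] z - z₀)]
  refine mem_filled.2 <| Metric.isBounded_ball.subset (s := range fun n => f^[n] z) (t := Metric.ball z₀ ρ) ?_
  rintro _ ⟨n, rfl⟩
  exact hmem n

/-- Iterated preimages of any point of the Julia set are dense in the Julia set. -/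
theorem preimages_dense_in_julia (p : Polynomial ℂ) (d : ℕ) (hd : 2 ≤ d)
    (hdeg : p.natDegree = d) (f : ℂ → ℂ) (hf : ∀ z, f z = p.eval z)
    (z₀ : ℂ) (hz₀ : z₀ ∈ frontier (filledJulia f)) :
    frontier (filledJulia f) ⊆ closure {z : ℂ | ∃ n : ℕ, f^[n] z = z₀} := by
  intro z₁ hz₁
  by_contra hcl
  obtain ⟨C, hC, hup⟩ := upper_bound p d hdeg
  obtain ⟨c, R, hc, hc1, hR, hcR, hlow⟩ := lower_bound p d hd hdeg
  have hfd : Differentiable ℂ f := by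
    have : f = fun z => p.eval z := funext hf
    rw [this]
    exact p.differentiable
  have hesc : ∀ z, R ≤ ‖z‖ → ∀ n, (2 : ℝ) ^ (d ^ n) ≤ ‖f^[n] z‖ :=
    iter_lower hd hc hc1 hR hcR (fun z hz => by rw [hf]; exact hlow z hz)
  obtain ⟨r, hr, hball⟩ := Metric.mem_nhds_iff.1 (isClosed_closure.isOpen_compl.mem_nhds hcl)
  have hdis : ∀ n, ∀ z ∈ Metric.ball z₁ r, f^[n] z ≠ z₀ := fun n z hz h =>
    hball hz (subset_closure ⟨n, h⟩)
  obtain ⟨w, hw, hfw⟩ := other_preimage p (by omega) f hf z₀ hz₀.2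
  have hdis' : ∀ n, ∀ z ∈ Metric.ball z₁ r, f^[n] z ≠ w := fun n z hz h =>
    hdis (n + 1) z hz (by rw [iterate_succ_apply', h, hfw])
  obtain ⟨b, hb, hbK⟩ : ∃ b ∈ Metric.ball z₁ r, b ∉ filledJulia f := by
    by_contra! hcon
    exact hz₁.2 (mem_interior.2 ⟨_, hcon, Metric.isOpen_ball, Metric.mem_ball_self hr⟩)
  have hz₁K : z₁ ∈ filledJulia f := by
    by_contra hnot
    obtain ⟨N, hN⟩ := (notMem_iff hd hesc z₁).1 hnot
    have hopen : IsOpen {z | R < ‖f^[N] z‖} :=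
      isOpen_lt continuous_const (hfd.iterate N).continuous.norm
    obtain ⟨y, hy1, hy2⟩ := mem_closure_iff.1 hz₁.1 _ hopen hN
    exact (notMem_iff hd hesc y).2 ⟨N, hy1⟩ hy2
  refine core hd hfd hC (fun z => by rw [hf]; exact hup z) hesc z₁ r hr hz₁K b hb hbK
    (fun i => if i then w else z₀) (by simpa using hw) ?_
  intro i n z hz
  cases i
  · simpa using hdis n z hz
  · simpa using hdis' n z hz
end

section
/- Let f : ℂ → ℂ be the evaluation map of a polynomial of degree d ≥ 2 whose Julia set J_f is connected and locally connected. Then for every ε > 0, only finitely many connected components of ℂ ∖ J_f have diameter ≥ ε; in particular, the diameters of the bounded Fatou components form a sequence tending to zero. -/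
open Function Set Topology

lemma log_unique {Y : Type*} [TopologicalSpace Y] {X : Set Y} (hX : IsPreconnected X)
    {g h : Y → ℂ} (hg : ContinuousOn g X) (hh : ContinuousOn h X)
    (heq : ∀ z ∈ X, Complex.exp (g z) = Complex.exp (h z)) :
    ∃ m : ℤ, ∀ z ∈ X, g z = h z + m * (2 * Real.pi * Complex.I) := by
  have hpi : (2 * Real.pi * Complex.I : ℂ) ≠ 0 := Complex.two_pi_I_ne_zero
  choose! m hm using fun z hz => Complex.exp_eq_exp_iff_exists_int.1 (heq z hz)
  rcases X.eq_empty_or_nonempty with rfl | ⟨x, hx⟩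
  · exact ⟨0, by simp⟩
  refine ⟨m x, fun z hz => ?_⟩
  have hc : ContinuousOn m X := by
    have h1 : ContinuousOn (fun z => ((m z : ℤ) : ℂ)) X := by
      have : ContinuousOn (fun z => (g z - h z) / (2 * Real.pi * Complex.I)) X :=
        (hg.sub hh).div_const _
      refine this.congr fun z hz => ?_
      simp only [hm z hz]
      field_simp
      ring
    have h2 : IsInducing (fun n : ℤ => (n : ℂ)) := Complex.isClosedEmbedding_intCast.isInducing
    exact h2.continuousOn_iff.2 h1
  have : m z = m x := by
    exact hX.constant hc hz hx
  rw [hm z hz, this]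

lemma log_near {Y : Type*} [TopologicalSpace Y] {X : Set Y} (v : Y → ℂ) (hv : Continuous v)
    {w w' : ℂ} {r : ℝ} (hw : ∀ y ∈ X, r ≤ ‖v y - w‖) (hr : ‖w - w'‖ < r)
    (h : ∃ g : Y → ℂ, ContinuousOn g X ∧ ∀ z ∈ X, Complex.exp (g z) = v z - w) :
    ∃ g : Y → ℂ, ContinuousOn g X ∧ ∀ z ∈ X, Complex.exp (g z) = v z - w' := by
  obtain ⟨g, hg, hge⟩ := h
  have hr0 : 0 < r := (norm_nonneg _).trans_lt hr
  have hne : ∀ z ∈ X, v z - w ≠ 0 := fun z hz h0 => by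
    have := hw z hz; rw [h0, norm_zero] at this; linarith
  have hsl : ∀ z ∈ X, 1 + (w - w') / (v z - w) ∈ Complex.slitPlane := fun z hz => by
    apply Complex.mem_slitPlane_of_norm_lt_one
    rw [norm_div, div_lt_one (norm_pos_iff.2 (hne z hz))]
    exact hr.trans_le (hw z hz)
  refine ⟨fun z => g z + Complex.log (1 + (w - w') / (v z - w)), ?_, fun z hz => ?_⟩
  · refine hg.add (ContinuousOn.clog ?_ hsl)
    exact continuousOn_const.add (continuousOn_const.div (hv.continuousOn.sub continuousOn_const) hne)
  · rw [Complex.exp_add, hge z hz, Complex.exp_log (Complex.slitPlane_ne_zero (hsl z hz))]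
    have := hne z hz
    field_simp
    ring

lemma log_comp {J : Set ℂ} (hJ : IsClosed J) {X : Set J} {C : Set ℂ} (hC : IsPreconnected C)
    (hCJ : C ⊆ Jᶜ) {c q w : ℂ} {r : ℝ} (hX : ∀ y ∈ X, ‖(y : ℂ) - c‖ < r) (hq : q ∈ C)
    (hqc : r ≤ ‖c - q‖) (hw : w ∈ C) :
    ∃ g : J → ℂ, ContinuousOn g X ∧ ∀ z ∈ X, Complex.exp (g z) = z - w := by
  set S : Set ℂ := {w ∈ Jᶜ | ∃ g : J → ℂ, ContinuousOn g X ∧ ∀ z ∈ X, Complex.exp (g z) = z - w}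
  have key : ∀ w r, Metric.ball w r ⊆ Jᶜ → ∀ y ∈ X, r ≤ ‖(y : ℂ) - w‖ := by
    intro w r h y _
    by_contra hlt
    push Not at hlt
    exact h (by rwa [Metric.mem_ball, dist_eq_norm]) y.2
  have hS : IsOpen S := by
    rw [Metric.isOpen_iff]
    rintro a ⟨ha, hl⟩
    obtain ⟨δ, hδ, hb⟩ := Metric.isOpen_iff.1 hJ.isOpen_compl a ha
    refine ⟨δ, hδ, fun b hbb => ⟨hb hbb, ?_⟩⟩
    refine log_near (fun y : J => (y : ℂ)) continuous_subtype_val (key a δ hb) ?_ hl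
    rwa [← dist_eq_norm, dist_comm]
  have hS' : IsOpen (Jᶜ \ S) := by
    rw [Metric.isOpen_iff]
    rintro a ⟨ha, hl⟩
    obtain ⟨δ, hδ, hb⟩ := Metric.isOpen_iff.1 hJ.isOpen_compl a ha
    refine ⟨δ / 2, by positivity, fun b hbb => ⟨hb (Metric.ball_subset_ball (by linarith) hbb),
      fun hbS => hl ⟨ha, ?_⟩⟩⟩
    rw [Metric.mem_ball] at hbb
    refine log_near (r := δ / 2) (fun y : J => (y : ℂ)) continuous_subtype_val
      (key b (δ / 2) ?_) ?_ hbS.2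
    · exact (Metric.ball_subset_ball' (by linarith)).trans hb
    · rwa [← dist_eq_norm]
  have hqS : q ∈ S := by
    refine ⟨hCJ hq, ?_⟩
    rcases X.eq_empty_or_nonempty with rfl | ⟨x, hx⟩
    · exact ⟨0, by simp⟩
    have hr0 : 0 < r := (norm_nonneg _).trans_lt (hX x hx)
    have hcq : c - q ≠ 0 := norm_pos_iff.1 (hr0.trans_le hqc)
    have hsl : ∀ z ∈ X, 1 + ((z : ℂ) - c) / (c - q) ∈ Complex.slitPlane := fun z hz => by
      apply Complex.mem_slitPlane_of_norm_lt_one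
      rw [norm_div, div_lt_one (norm_pos_iff.2 hcq)]
      exact (hX z hz).trans_le hqc
    refine ⟨fun z => Complex.log (c - q) + Complex.log (1 + ((z : ℂ) - c) / (c - q)), ?_,
      fun z hz => ?_⟩
    · refine continuousOn_const.add (ContinuousOn.clog ?_ hsl)
      fun_prop
    · rw [Complex.exp_add, Complex.exp_log hcq,
        Complex.exp_log (Complex.slitPlane_ne_zero (hsl z hz))]
      field_simp
      ring
  have : C ⊆ S := hC.subset_left_of_subset_union hS hS' disjoint_sdiff_right
    (fun z hz => by by_cases h : z ∈ S; exacts [Or.inl h, Or.inr ⟨hCJ hz, h⟩]) ⟨q, hq, hqS⟩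
  exact (this hw).2

lemma no_log_pow (F : ℂ → ℂ) (hF : Continuous F) (hF0 : ∀ z, F z ≠ 0) (p : ℂ) (k : ℤ) (hk : k ≠ 0)
    (R : ℝ) (hR : 0 < R) (h : ∀ z, ‖z - p‖ = R → F z = (z - p) ^ k) : False := by
  obtain ⟨e, he⟩ : ∃ e, Complex.exp e = F 0 := ⟨_, Complex.exp_log (hF0 0)⟩
  obtain ⟨G, ⟨-, hG⟩, -⟩ := Complex.isCoveringMapOn_exp.existsUnique_continuousMap_lifts
    (A := ℂ) ⟨F, hF⟩ (a₀ := 0) (e₀ := e) he (fun z => by simpa using hF0 z)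
  have hG' : ∀ z, Complex.exp (G z) = F z := fun z => congrFun hG z
  let c : ℝ → ℂ := fun t => R * Complex.exp (t * Complex.I)
  have hc : ∀ t, ‖c t‖ = R := fun t => by
    simp [c, Complex.norm_exp_ofReal_mul_I, abs_of_pos hR]
  have hcc : Continuous c := by fun_prop
  have hR' : (R : ℂ) ≠ 0 := by exact_mod_cast hR.ne'
  obtain ⟨m, hm⟩ := log_unique (X := (univ : Set ℝ)) isPreconnected_univ
    (g := fun t => G (p + c t)) (h := fun t => k * (Complex.log R + t * Complex.I))
    (by fun_prop) (by fun_prop) (fun t _ => by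
      rw [hG', h _ (by simpa using hc t), Complex.exp_int_mul, Complex.exp_add, Complex.exp_log hR']
      simp [c])
  have h0 := hm 0 trivial
  have h1 := hm (2 * Real.pi) trivial
  have hcp : c (2 * Real.pi) = c 0 := by simp [c, Complex.exp_two_pi_mul_I]
  simp only [hcp] at h1
  rw [h0] at h1
  have : (k : ℂ) * (2 * Real.pi * Complex.I) = 0 := by
    push_cast at h1
    linear_combination -h1
  simp [hk, Real.pi_ne_zero] at this

lemma no_log_prod {ι : Type*} [Fintype ι] {J : Set ℂ} (hJ : IsClosed J) (C : ι → Set ℂ)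
    (hCo : ∀ i, IsOpen (C i)) (hCb : ∀ i, Bornology.IsBounded (C i))
    (hd : ∀ i j, i ≠ j → Disjoint (C i) (C j)) (hfr : ∀ i, frontier (C i) ⊆ J)
    (hCJ : ∀ i, C i ⊆ Jᶜ)
    (p : ι → ℂ) (hp : ∀ i, p i ∈ C i) (k : ι → ℤ) (g : C(J, ℂ))
    (hg : ∀ z : J, Complex.exp (g z) = ∏ i, ((z : ℂ) - p i) ^ (k i)) (n : ι) : k n = 0 := by
  classical
  by_contra hk
  obtain ⟨G, hG⟩ := g.exists_restrict_eq hJ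
  have hGg : ∀ z : J, G z = g z := fun z => by rw [← hG]; rfl
  let A : ℂ → ℂ := fun z => Complex.exp (G z) * ∏ i ∈ Finset.univ.erase n, (z - p i) ^ (-(k i))
  let B : ℂ → ℂ := fun z => (z - p n) ^ (k n)
  have hA0 : ∀ z ∈ closure (C n), ∀ i ∈ Finset.univ.erase n, z - p i ≠ 0 := by
    intro z hz i hi h0
    have hi' : i ≠ n := (Finset.mem_erase.1 hi).1
    have := (hd n i hi'.symm).closure_left (hCo i)
    rw [sub_eq_zero] at h0
    exact this.le_bot ⟨hz, h0 ▸ hp i⟩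
  have hAB : ∀ z ∈ frontier (C n), A z = B z := by
    intro z hz
    have hzJ := hfr n hz
    have h1 : Complex.exp (G z) = ∏ i, ((z : ℂ) - p i) ^ (k i) := by
      have := hg ⟨z, hzJ⟩
      rwa [← hGg] at this
    simp only [A, B]
    rw [h1, ← Finset.mul_prod_erase _ _ (Finset.mem_univ n), mul_assoc, ← Finset.prod_mul_distrib,
      Finset.prod_eq_one, mul_one]
    intro i hi
    rw [← zpow_add₀ (hA0 z hz.1 i hi)]
    simp
  have hcont : Continuous ((C n).piecewise A B) := by
    apply continuous_piecewise hAB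
    · refine ContinuousOn.mul (by fun_prop) ?_
      refine continuousOn_finset_prod _ fun i hi => ?_
      exact ContinuousOn.zpow₀ (by fun_prop) _ fun z hz => Or.inl (hA0 z hz i hi)
    · rw [(hCo n).isClosed_compl.closure_eq]
      refine ContinuousOn.zpow₀ (by fun_prop) _ fun z hz => Or.inl ?_
      intro h0
      rw [sub_eq_zero] at h0
      exact hz (h0 ▸ hp n)
  obtain ⟨R, hR⟩ := (hCb n).subset_ball (p n)
  have hR0 : 0 < R := by simpa using hR (hp n)
  refine no_log_pow _ hcont (fun z => ?_) (p n) (k n) hk R hR0 (fun z hz => ?_)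
  · by_cases hz : z ∈ C n
    · rw [piecewise_eq_of_mem _ _ _ hz]
      refine mul_ne_zero (Complex.exp_ne_zero _) (Finset.prod_ne_zero_iff.2 fun i hi => ?_)
      exact zpow_ne_zero _ (hA0 z (subset_closure hz) i hi)
    · rw [piecewise_eq_of_notMem _ _ _ hz]
      refine zpow_ne_zero _ fun h0 => ?_
      rw [sub_eq_zero] at h0
      exact hz (h0 ▸ hp n)
  · rw [piecewise_eq_of_notMem]
    intro h
    have := hR h
    rw [Metric.mem_ball, dist_eq_norm] at this
    linarith

lemma card_bound {J : Set ℂ} (hJ : IsCompact J) (hJlc : LocallyConnectedSpace J)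
    (ε : ℝ) (hε : 0 < ε) : ∃ N : ℕ, ∀ (ι : Type) [Fintype ι] (C : ι → Set ℂ),
    (∀ i, IsOpen (C i)) → (∀ i, Bornology.IsBounded (C i)) →
    (∀ i j, i ≠ j → Disjoint (C i) (C j)) → (∀ i, frontier (C i) ⊆ J) → (∀ i, C i ⊆ Jᶜ) →
    (∀ i, IsPreconnected (C i)) → (∀ i, ENNReal.ofReal ε ≤ Metric.ediam (C i)) →
    Fintype.card ι ≤ N := by
  classical
  haveI : CompactSpace J := isCompact_iff_compactSpace.1 hJ
  choose V hVb hVo hxV hVc using fun x : J =>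
    locallyConnectedSpace_iff_subsets_isOpen_isConnected.1 hJlc x (Metric.ball x (ε / 8))
      (Metric.ball_mem_nhds x (by positivity))
  obtain ⟨t, ht⟩ := CompactSpace.elim_nhds_subcover V (fun x => (hVo x).mem_nhds (hxV x))
  refine ⟨Module.finrank ℤ (t × t → ℤ), fun ι _ C hCo hCb hd hfr hCJ hCc hdiam => ?_⟩
  have hne : ∀ n, (C n).Nonempty := fun n => by
    rw [nonempty_iff_ne_empty]
    intro h
    have := hdiam n
    rw [h, Metric.ediam_empty] at this
    simp at this
    linarith
  choose p hp using hne
  have hfar : ∀ n (c : ℂ), ∃ q ∈ C n, ε / 4 ≤ ‖c - q‖ := by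
    intro n c
    by_contra hcon
    push Not at hcon
    have h1 : C n ⊆ Metric.ball c (ε / 4) := fun q hq => by
      rw [Metric.mem_ball, dist_comm, dist_eq_norm]; exact hcon q hq
    have h2 : Metric.ediam (C n) ≤ ENNReal.ofReal (ε / 2) := by
      apply Metric.ediam_le
      intro x hx y hy
      rw [edist_dist]
      apply ENNReal.ofReal_le_ofReal
      have := dist_triangle_right x y c
      have := Metric.mem_ball.1 (h1 hx)
      have := Metric.mem_ball.1 (h1 hy)
      linarith
    have h3 := (hdiam n).trans h2
    rw [ENNReal.ofReal_le_ofReal_iff (by positivity)] at h3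
    linarith
  have hlog : ∀ n (i j : J), (V i ∩ V j).Nonempty → ∃ g : J → ℂ, ContinuousOn g (V i ∪ V j) ∧
      ∀ z ∈ V i ∪ V j, Complex.exp (g z) = z - p n := by
    rintro n i j ⟨x, hxi, hxj⟩
    obtain ⟨q, hq, hqx⟩ := hfar n x
    refine log_comp hJ.isClosed (hCc n) (hCJ n) (c := x) (r := ε / 4) ?_ hq hqx (hp n)
    intro y hy
    rw [← dist_eq_norm]
    change dist y x < _
    rcases hy with hy | hy
    · have := dist_triangle_right y x i
      have := Metric.mem_ball.1 (hVb i hy)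
      have := Metric.mem_ball.1 (hVb i hxi)
      linarith
    · have := dist_triangle_right y x j
      have := Metric.mem_ball.1 (hVb j hy)
      have := Metric.mem_ball.1 (hVb j hxj)
      linarith
  have hlog1 : ∀ n (i : J), ∃ g : J → ℂ, ContinuousOn g (V i) ∧
      ∀ z ∈ V i, Complex.exp (g z) = z - p n := by
    intro n i
    simpa using hlog n i i (by simpa using ⟨i, hxV i⟩)
  choose g hgc hge using hlog1
  have hm : ∀ n i j, ∃ m : ℤ, ∀ z ∈ V i ∩ V j,
      g n i z - g n j z = m * (2 * Real.pi * Complex.I) := by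
    intro n i j
    by_cases hij : (V i ∩ V j).Nonempty
    · obtain ⟨h, hhc, hhe⟩ := hlog n i j hij
      obtain ⟨m1, hm1⟩ := log_unique (hVc i).isPreconnected (hgc n i)
        (hhc.mono subset_union_left) (fun z hz => by rw [hge n i z hz, hhe z (Or.inl hz)])
      obtain ⟨m2, hm2⟩ := log_unique (hVc j).isPreconnected (hgc n j)
        (hhc.mono subset_union_right) (fun z hz => by rw [hge n j z hz, hhe z (Or.inr hz)])
      refine ⟨m1 - m2, fun z hz => ?_⟩
      rw [hm1 z hz.1, hm2 z hz.2]
      push_cast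
      ring
    · exact ⟨0, fun z hz => (hij ⟨z, hz⟩).elim⟩
  choose m hm using hm
  let v : ι → (t × t → ℤ) := fun n ij => m n ij.1 ij.2
  by_contra hlt
  have hli : ¬ LinearIndependent ℤ v := fun h => hlt h.fintype_card_le_finrank
  rw [Fintype.not_linearIndependent_iff] at hli
  obtain ⟨k, hk, n0, hn0⟩ := hli
  have hk' : ∀ i ∈ t, ∀ j ∈ t, ∑ n, k n * m n i j = 0 := by
    intro i hi j hj
    have := congrFun hk (⟨i, hi⟩, ⟨j, hj⟩)
    simpa [v, Finset.sum_apply] using this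
  have hcov : ∀ z : J, ∃ i ∈ t, z ∈ V i := fun z => by
    have : z ∈ ⋃ x ∈ t, V x := by rw [ht]; trivial
    simpa using this
  choose s hst hsV using hcov
  let H : J → J → ℂ := fun i z => ∑ n, k n * g n i z
  have hH : ∀ i ∈ t, ∀ j ∈ t, ∀ z ∈ V i ∩ V j, H i z = H j z := by
    intro i hi j hj z hz
    rw [← sub_eq_zero]
    simp only [H]
    rw [← Finset.sum_sub_distrib]
    have : ∀ n, (k n : ℂ) * g n i z - k n * g n j z
        = ((k n * m n i j : ℤ) : ℂ) * (2 * Real.pi * Complex.I) := by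
      intro n
      rw [← mul_sub, hm n i j z hz]
      push_cast
      ring
    simp_rw [this]
    rw [← Finset.sum_mul, ← Int.cast_sum, hk' i hi j hj]
    simp
  have hGc : Continuous (fun z => H (s z) z) := by
    rw [continuous_iff_continuousAt]
    intro z
    have h1 : ContinuousAt (H (s z)) z := by
      have : ContinuousOn (H (s z)) (V (s z)) :=
        continuousOn_finset_sum _ fun n _ => continuousOn_const.mul (hgc n (s z))
      exact this.continuousAt ((hVo _).mem_nhds (hsV z))
    refine h1.congr ?_
    filter_upwards [(hVo _).mem_nhds (hsV z)] with y hy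
    exact hH _ (hst z) _ (hst y) y ⟨hy, hsV y⟩
  refine hn0 (no_log_prod hJ.isClosed C hCo hCb hd hfr hCJ p hp k ⟨_, hGc⟩ (fun z => ?_) n0)
  simp only [ContinuousMap.coe_mk, H]
  rw [Complex.exp_sum]
  refine Finset.prod_congr rfl fun n _ => ?_
  rw [Complex.exp_int_mul, hge n _ z (hsV z)]

lemma filledJulia_bdd (p : Polynomial ℂ) (hd : 2 ≤ p.natDegree) (f : ℂ → ℂ)
    (hf : ∀ z, f z = p.eval z) : Bornology.IsBounded (filledJulia f) := by
  have hdeg : 0 < p.divX.degree := by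
    rw [← Polynomial.natDegree_pos_iff_degree_pos, Polynomial.natDegree_divX_eq_natDegree_tsub_one]
    omega
  have h1 := p.divX.tendsto_norm_atTop hdeg (tendsto_norm_cobounded_atTop (E := ℂ))
  have h2 := h1.eventually_ge_atTop 3
  obtain ⟨r, -, hr⟩ := (Metric.hasBasis_cobounded_compl_closedBall (0 : ℂ)).eventually_iff.1 h2
  set R : ℝ := max (max r ‖p.coeff 0‖) 1
  have hR : ∀ z, R < ‖z‖ → 2 * ‖z‖ ≤ ‖f z‖ := by
    intro z hz
    have h3 : 3 ≤ ‖p.divX.eval z‖ := by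
      apply hr
      simp only [mem_compl_iff, Metric.mem_closedBall, dist_zero_right, not_le]
      exact ((le_max_left _ _).trans (le_max_left _ _)).trans_lt hz
    have h4 : ‖p.coeff 0‖ ≤ ‖z‖ := ((le_max_right _ _).trans (le_max_left _ _)).trans hz.le
    have h5 : f z = p.divX.eval z * z + p.coeff 0 := by
      rw [hf]
      conv_lhs => rw [← p.divX_mul_X_add]
      simp
    have h6 : ‖p.divX.eval z * z‖ ≤ ‖f z‖ + ‖p.coeff 0‖ := by
      have : p.divX.eval z * z = f z - p.coeff 0 := by rw [h5]; ring
      rw [this]; exact norm_sub_le _ _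
    rw [norm_mul] at h6
    nlinarith [norm_nonneg z]
  rw [isBounded_iff_forall_norm_le]
  refine ⟨R, fun z hz => ?_⟩
  by_contra hlt
  push Not at hlt
  have hR1 : 1 ≤ R := le_max_right _ _
  have hn : ∀ n : ℕ, 2 ^ n * ‖z‖ ≤ ‖f^[n] z‖ := by
    intro n
    induction n with
    | zero => simp
    | succ n ih =>
      rw [Function.iterate_succ_apply']
      have h2n : (1 : ℝ) ≤ 2 ^ n := one_le_pow₀ (by norm_num)
      have : R < ‖f^[n] z‖ := by nlinarith
      have := hR _ this
      rw [pow_succ]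
      linarith
  have hz2 : Bornology.IsBounded (Set.range fun n => f^[n] z) := hz
  obtain ⟨M, hM⟩ := isBounded_iff_forall_norm_le.1 hz2
  obtain ⟨n, hnM⟩ := pow_unbounded_of_one_lt M (by norm_num : (1 : ℝ) < 2)
  have h7 := hM _ ⟨n, rfl⟩
  have h8 := hn n
  have : (0 : ℝ) < 2 ^ n := by positivity
  simp only at h7
  nlinarith

lemma outside_conn (R : ℝ) (hR : 0 < R) : IsPreconnected {z : ℂ | R < ‖z‖} := by
  have h1 : IsPreconnected {z : ℂ | Real.log R < z.re} :=
    (convex_halfSpace_re_gt _).isPreconnected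
  have h2 := h1.image Complex.exp Complex.continuous_exp.continuousOn
  convert h2 using 1
  ext z
  simp only [mem_setOf_eq, mem_image]
  constructor
  · intro h
    have hz : z ≠ 0 := norm_pos_iff.1 (hR.trans h)
    exact ⟨Complex.log z, by rw [Complex.log_re]; exact Real.log_lt_log hR h, Complex.exp_log hz⟩
  · rintro ⟨w, hw, rfl⟩
    rw [Complex.norm_exp]
    exact (Real.log_lt_iff_lt_exp hR).1 hw

/-- For a connected, locally connected Julia set, only finitely many Fatou components
have diameter at least `ε`. -/
theorem finitely_many_large_fatou_components (p : Polynomial ℂ) (d : ℕ) (hd : 2 ≤ d)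
    (hdeg : p.natDegree = d) (f : ℂ → ℂ) (hf : ∀ z, f z = p.eval z)
    (J : Set ℂ) (hJ : J = frontier (filledJulia f))
    (hJconn : IsConnected J) (hJlc : LocallyConnectedSpace J)
    (ε : ℝ) (hε : 0 < ε) :
    {C : Set ℂ | (∃ z ∈ Jᶜ, C = connectedComponentIn (Jᶜ) z) ∧
      ENNReal.ofReal ε ≤ EMetric.diam C}.Finite := by
  have hKb := filledJulia_bdd p (hdeg ▸ hd) f hf
  have hJc : IsCompact J := by
    rw [hJ]
    exact Metric.isCompact_of_isClosed_isBounded isClosed_frontier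
      (hKb.closure.subset frontier_subset_closure)
  obtain ⟨N, hN⟩ := card_bound hJc hJlc ε hε
  obtain ⟨R, hR0, hR⟩ := hJc.isBounded.subset_closedBall_lt 0 0
  set O : Set ℂ := {z : ℂ | R < ‖z‖}
  have hOJ : O ⊆ Jᶜ := fun z hz hzJ => by
    have := hR hzJ
    rw [mem_closedBall_zero_iff] at this
    exact absurd hz (not_lt.2 this)
  obtain ⟨w, hw⟩ : O.Nonempty := ⟨((R + 1 : ℝ) : ℂ), by
    simp only [O, mem_setOf_eq, Complex.norm_real, Real.norm_eq_abs]
    rw [abs_of_pos (by linarith)]; linarith⟩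
  have hunb : ∀ z ∈ Jᶜ, ¬ Bornology.IsBounded (connectedComponentIn (Jᶜ) z) →
      connectedComponentIn (Jᶜ) z = connectedComponentIn (Jᶜ) w := by
    intro z hz hub
    have : ∃ y ∈ connectedComponentIn (Jᶜ) z, R < ‖y‖ := by
      by_contra hcon
      push Not at hcon
      exact hub (isBounded_iff_forall_norm_le.2 ⟨R, hcon⟩)
    obtain ⟨y, hy, hyR⟩ := this
    rw [connectedComponentIn_eq hy]
    exact connectedComponentIn_eq ((outside_conn R hR0).subset_connectedComponentIn hyR hOJ hw)
  by_contra hinf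
  have hinf' := (Set.Infinite.diff hinf (Set.finite_singleton (connectedComponentIn (Jᶜ) w)))
  obtain ⟨T, hT, hTc⟩ := hinf'.exists_subset_card_eq (N + 1)
  have hcomp : ∀ C : T, ∃ z ∈ Jᶜ, (C : Set ℂ) = connectedComponentIn (Jᶜ) z :=
    fun C => (hT C.2).1.1
  have hopen : ∀ C : T, IsOpen (C : Set ℂ) := by
    intro C
    obtain ⟨z, hz, h⟩ := hcomp C
    rw [h]
    exact hJc.isClosed.isOpen_compl.connectedComponentIn
  have hsub : ∀ C : T, (C : Set ℂ) ⊆ Jᶜ := by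
    intro C
    obtain ⟨z, hz, h⟩ := hcomp C
    rw [h]
    exact connectedComponentIn_subset _ _
  have := hN T (fun C => (C : Set ℂ)) hopen ?_ ?_ ?_ hsub ?_ (fun C => (hT C.2).1.2)
  · rw [Fintype.card_coe] at this
    omega
  · intro C
    obtain ⟨z, hz, h⟩ := hcomp C
    by_contra hb
    refine (hT C.2).2 ?_
    change (C : Set ℂ) = _
    rw [h] at hb ⊢
    exact hunb z hz hb
  · intro C D hCD
    obtain ⟨z, hz, h⟩ := hcomp C
    obtain ⟨y, hy, h'⟩ := hcomp D
    rw [Set.disjoint_left]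
    intro x hx hx'
    apply hCD
    apply Subtype.ext
    simp only [h, h'] at hx hx' ⊢
    rw [connectedComponentIn_eq hx, connectedComponentIn_eq hx']
  · intro C x hx
    by_contra hxJ
    obtain ⟨z, hz, h⟩ := hcomp C
    have hxo : IsOpen (connectedComponentIn (Jᶜ) x) :=
      hJc.isClosed.isOpen_compl.connectedComponentIn
    obtain ⟨y, hy1, hy2⟩ := mem_closure_iff.1 hx.1 _ hxo (mem_connectedComponentIn hxJ)
    simp only [h] at hy2
    have : x ∈ (C : Set ℂ) := by
      rw [h, connectedComponentIn_eq hy2, ← connectedComponentIn_eq hy1]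
      exact mem_connectedComponentIn hxJ
    rw [(hopen C).frontier_eq] at hx
    exact hx.2 this
  · intro C
    obtain ⟨z, hz, h⟩ := hcomp C
    simp only [h]
    exact isPreconnected_connectedComponentIn
end
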